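/- arXiv:1103.6101 — 2 statements merged into one kernel-verified Lean document; each statement's English description precedes it below -/
import Mathlib

section
/- Let Ω ⊂ ℝ² be a bounded open set, let K ⊂ {(x,y) ∈ ℝ² : 0 < x ≤ y} be a compact set and let E := {ξ ∈ ℝ^{2×2} : (λ₁(ξ), λ₂(ξ)) ∈ K}. Let φ ∈ C¹_piec(cl(Ω), ℝ²) be such that Dφ(x) ∈ E ∪ int(E^{rc}) for a.e. x ∈ Ω. Then there exists a Lipschitz map u : Ω → ℝ² with u − φ ∈ W^{1,∞}₀(Ω, ℝ²) (in particular u = φ on ∂Ω) such that Du(x) ∈ E for a.e. x ∈ Ω. -/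
open scoped BigOperators

/-- Square of the Frobenius norm of a 2×2 real matrix. -/
noncomputable def frobSq (ξ : Matrix (Fin 2) (Fin 2) ℝ) : ℝ := ∑ i, ∑ j, (ξ i j) ^ 2

/-- The Frobenius norm of a 2×2 real matrix. -/
noncomputable def frobNorm (ξ : Matrix (Fin 2) (Fin 2) ℝ) : ℝ := Real.sqrt (frobSq ξ)

/-- The smallest singular value of a 2×2 real matrix. -/
noncomputable def lam1 (ξ : Matrix (Fin 2) (Fin 2) ℝ) : ℝ :=
  (Real.sqrt (frobSq ξ + 2 * |ξ.det|) - Real.sqrt (frobSq ξ - 2 * |ξ.det|)) / 2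

/-- The largest singular value of a 2×2 real matrix. -/
noncomputable def lam2 (ξ : Matrix (Fin 2) (Fin 2) ℝ) : ℝ :=
  (Real.sqrt (frobSq ξ + 2 * |ξ.det|) + Real.sqrt (frobSq ξ - 2 * |ξ.det|)) / 2

/-- A function on 2×2 matrices is rank one convex if it is convex along rank one segments. -/
def RankOneConvex (f : Matrix (Fin 2) (Fin 2) ℝ → ℝ) : Prop :=
  ∀ (ξ η : Matrix (Fin 2) (Fin 2) ℝ) (t : ℝ), t ∈ Set.Icc (0 : ℝ) 1 →
    (ξ - η).rank = 1 → f (t • ξ + (1 - t) • η) ≤ t * f ξ + (1 - t) * f η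

/-- The rank one convex hull `E^{rc}` of a set of 2×2 matrices. -/
def rcHull (E : Set (Matrix (Fin 2) (Fin 2) ℝ)) : Set (Matrix (Fin 2) (Fin 2) ℝ) :=
  {ξ | ∀ f : Matrix (Fin 2) (Fin 2) ℝ → ℝ,
    RankOneConvex f → (∀ η ∈ E, f η ≤ 0) → f ξ ≤ 0}

/-- The rank one convex hull `U^{rc}` of an open set of 2×2 matrices. -/
def rcHullOpen (U : Set (Matrix (Fin 2) (Fin 2) ℝ)) : Set (Matrix (Fin 2) (Fin 2) ℝ) :=
  {ξ | ∃ E : Set (Matrix (Fin 2) (Fin 2) ℝ), E ⊆ U ∧ IsCompact E ∧ ξ ∈ rcHull E}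

/-- A function on 2×2 matrices is polyconvex if it is a convex function of (ξ, det ξ). -/
def PolyconvexFun (f : Matrix (Fin 2) (Fin 2) ℝ → ℝ) : Prop :=
  ∃ g : Matrix (Fin 2) (Fin 2) ℝ × ℝ → ℝ,
    ConvexOn ℝ Set.univ g ∧ ∀ ξ, f ξ = g (ξ, ξ.det)

/-- The polyconvex hull `E^{pc}` of a set of 2×2 matrices. -/
def pcHull (E : Set (Matrix (Fin 2) (Fin 2) ℝ)) : Set (Matrix (Fin 2) (Fin 2) ℝ) :=
  {ξ | ∀ f : Matrix (Fin 2) (Fin 2) ℝ → ℝ,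
    PolyconvexFun f → (∀ η ∈ E, f η ≤ 0) → f ξ ≤ 0}

/-- The polyconvex hull `U^{pc}` of an open set of 2×2 matrices. -/
def pcHullOpen (U : Set (Matrix (Fin 2) (Fin 2) ℝ)) : Set (Matrix (Fin 2) (Fin 2) ℝ) :=
  {ξ | ∃ E : Set (Matrix (Fin 2) (Fin 2) ℝ), E ⊆ U ∧ IsCompact E ∧ ξ ∈ pcHull E}

/-- A set of 2×2 matrices is polyconvex. -/
def PolyconvexSet (A : Set (Matrix (Fin 2) (Fin 2) ℝ)) : Prop :=
  ∀ (ξ : Fin 5 → Matrix (Fin 2) (Fin 2) ℝ) (t : Fin 5 → ℝ),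
    (∀ i, ξ i ∈ A) → (∀ i, 0 ≤ t i) → (∑ i, t i) = 1 →
    (∑ i, t i * (ξ i).det) = (∑ i, t i • ξ i).det →
    (∑ i, t i • ξ i) ∈ A

/-- The polyconvex hull `Pco E`: the smallest polyconvex set containing `E`. -/
def Pco (E : Set (Matrix (Fin 2) (Fin 2) ℝ)) : Set (Matrix (Fin 2) (Fin 2) ℝ) :=
  ⋂₀ {A | PolyconvexSet A ∧ E ⊆ A}

/-- A set of 2×2 matrices is isotropic if it is invariant under orthogonal transformations. -/
def Isotropic (E : Set (Matrix (Fin 2) (Fin 2) ℝ)) : Prop :=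
  ∀ R S : Matrix (Fin 2) (Fin 2) ℝ, R * R.transpose = 1 → S * S.transpose = 1 → ∀ ξ ∈ E, R * ξ * S ∈ E

/-- The distance (w.r.t. the Frobenius norm) from a matrix to a set of matrices. -/
noncomputable def distE (ξ : Matrix (Fin 2) (Fin 2) ℝ) (E : Set (Matrix (Fin 2) (Fin 2) ℝ)) : ℝ :=
  sInf ((fun η => frobNorm (ξ - η)) '' E)

/-- The function `f_θ(x,y) = xy + θ(y-x)`. -/
def ftheta (θ : ℝ) (p : ℝ × ℝ) : ℝ := p.1 * p.2 + θ * (p.2 - p.1)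

/-- The gradient of a map `u : ℝ² → ℝ²` at `x`, as a 2×2 matrix. -/
noncomputable def gradMatrix (u : (Fin 2 → ℝ) → (Fin 2 → ℝ)) (x : Fin 2 → ℝ) :
    Matrix (Fin 2) (Fin 2) ℝ :=
  LinearMap.toMatrix' (fderiv ℝ u x).toLinearMap

/-!
The proof is by convex integration. A gradient which is a laminate of gradients in an open set `U`
can be replaced, without changing boundary values and at small cost in the sup norm, by gradients
in `U` close to the end points of the lamination: to split the gradient along a rank-one line one
adds a fine sawtooth, cut off near the boundary. If every gradient in `U` is a laminate of
gradients in `U` arbitrarily close to the closed set `E`, iterating such replacements gives a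
uniform limit with gradient in `E` almost everywhere. The gradients converge because every
correction is small compared to the scale on which the difference quotients of the previous map
are close to its gradient.

For isotropic `E` and `U = int E^rc` the laminates are found in conformal coordinates, a matrix
being the map `z ↦ a z + b z̄` and the rank-one directions being given by `|a| = |b|`. The functions
`f_θ` of the singular values bound `E^rc` from outside, because they are rank one convex up to a
truncation. Their level sets are hyperbolas, which up to rotations are rank-one lines; hence
everything below all the `f_θ` is reached by laminates. Applied to `ξ / s` with `s < 1` close to
`1`, this presents `ξ ∈ int E^rc` as a laminate of `s E`, and `s E ⊆ int E^rc` because `0 < λ₁`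
on `E`.
-/

namespace DifferentialInclusion

open Set Filter Topology MeasureTheory Metric Bornology
open scoped NNReal ENNReal

/-! ### Lamination hulls -/

section Lamination

variable {X Y : Type*} [AddCommGroup X] [Module ℝ X] [AddCommGroup Y] [Module ℝ Y]

/-- The finite-order lamination hull of `S`: the closure of `S` under passing to points of segments
whose end points differ by a vector of `D`. For gradients, `D` is the rank-one cone. -/
inductive LaminationHull (D S : Set X) : X → Prop
  | base {ξ : X} : ξ ∈ S → LaminationHull D S ξ
  | segment {B C ξ : X} : LaminationHull D S B → LaminationHull D S C → B - C ∈ D →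
      ξ ∈ segment ℝ B C → LaminationHull D S ξ

/-- A set is lamination convex if it contains every segment whose end points lie in it and differ
by a vector of `D`. -/
def LaminationConvex (D U : Set X) : Prop :=
  ∀ ⦃B⦄, B ∈ U → ∀ ⦃C⦄, C ∈ U → B - C ∈ D → segment ℝ B C ⊆ U

lemma LaminationHull.map {D S : Set X} {D' S' : Set Y} (f : X →ₗ[ℝ] Y) (hD : MapsTo f D D')
    (hS : MapsTo f S S') {ξ : X} (h : LaminationHull D S ξ) : LaminationHull D' S' (f ξ) := by
  induction h with
  | base h => exact .base (hS h)
  | @segment B C ξ _ _ hBC hξ ihB ihC =>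
    refine .segment ihB ihC (map_sub f B C ▸ hD hBC) ?_
    exact (image_segment ℝ f.toAffineMap B C).subset (mem_image_of_mem f hξ)

lemma LaminationHull.mem {D S U : Set X} (hU : LaminationConvex D U) (hS : S ⊆ U) {ξ : X}
    (h : LaminationHull D S ξ) : ξ ∈ U := by
  induction h with
  | base h => exact hS h
  | segment _ _ hBC hξ ihB ihC => exact hU ihB ihC hBC hξ

lemma LaminationConvex.preimage {D : Set X} {D' U : Set Y} (f : X →ₗ[ℝ] Y) (hD : MapsTo f D D')
    (hU : LaminationConvex D' U) : LaminationConvex D (f ⁻¹' U) := by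
  intro B hB C hC hBC
  rw [← image_subset_iff]
  exact (image_segment ℝ f.toAffineMap B C).subset.trans
    (hU hB hC (map_sub f B C ▸ hD hBC))

lemma LaminationConvex.interior [TopologicalSpace X] [IsTopologicalAddGroup X] {D U : Set X}
    (hU : LaminationConvex D U) : LaminationConvex D (interior U) := by
  intro B hB C hC hBC ξ hξ
  rw [mem_interior_iff_mem_nhds, ← map_add_right_nhds_zero, mem_map] at hB hC ⊢
  filter_upwards [hB, hC] with d hBd hCd
  exact hU hBd hCd (by simpa using hBC) ((mem_segment_translate ℝ d).2 hξ)

lemma LaminationHull.add_smul {D S : Set X} {p d : X}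
    (hd : ∀ r : ℝ, r • d ∈ D) {s₁ s₂ s : ℝ} (h₁ : LaminationHull D S (p + s₁ • d))
    (h₂ : LaminationHull D S (p + s₂ • d)) (hs₁ : s₁ ≤ s) (hs₂ : s ≤ s₂) :
    LaminationHull D S (p + s • d) := by
  have hs : s ∈ _root_.segment ℝ s₁ s₂ := by
    rw [segment_eq_Icc (hs₁.trans hs₂)]
    exact ⟨hs₁, hs₂⟩
  obtain ⟨α, β, hα, hβ, hαβ, rfl⟩ := hs
  refine .segment h₁ h₂ ?_ ⟨α, β, hα, hβ, hαβ, ?_⟩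
  · rw [add_sub_add_left_eq_sub, ← sub_smul]
    exact hd _
  · obtain rfl : β = 1 - α := by linarith
    module

end Lamination

/-! ### The sawtooth function -/

section Sawtooth

/-- The `1`-periodic sawtooth with slope `1 - t` on `[0, t]` and slope `-t` on `[t, 1]`, vanishing
at the integers. -/
noncomputable def sawtooth (t s : ℝ) : ℝ := min ((1 - t) * Int.fract s) (t * (1 - Int.fract s))

variable {t s : ℝ}

lemma sawtooth_of_fract_le (h : Int.fract s ≤ t) : sawtooth t s = (1 - t) * Int.fract s :=
  min_eq_left (by linarith)

lemma sawtooth_of_le_fract (h : t ≤ Int.fract s) : sawtooth t s = t * (1 - Int.fract s) :=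
  min_eq_right (by linarith)

lemma sawtooth_nonneg (h0 : 0 ≤ t) (h1 : t ≤ 1) (s : ℝ) : 0 ≤ sawtooth t s :=
  le_min (mul_nonneg (sub_nonneg.2 h1) (Int.fract_nonneg s))
    (mul_nonneg h0 (sub_nonneg.2 (Int.fract_lt_one s).le))

lemma sawtooth_le_one (h0 : 0 ≤ t) (s : ℝ) : sawtooth t s ≤ 1 :=
  (min_le_left _ _).trans <|
    mul_le_one₀ (by linarith) (Int.fract_nonneg s) (Int.fract_lt_one s).le

lemma abs_sawtooth_sub_le_of_le (h0 : 0 ≤ t) (h1 : t ≤ 1) {x y : ℝ} (hxy : x ≤ y) :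
    |sawtooth t x - sawtooth t y| ≤ y - x := by
  have hx := Int.floor_add_fract x
  have hy := Int.floor_add_fract y
  rcases (Int.floor_le_floor hxy).eq_or_lt with hfloor | hfloor
  · have hfract : Int.fract y - Int.fract x = y - x := by rw [hfloor] at hx; linarith
    refine (abs_min_sub_min_le_max _ _ _ _).trans (max_le ?_ ?_) <;>
      rw [abs_le] <;> constructor <;> nlinarith
  · have hfloor' : (⌊x⌋ : ℝ) + 1 ≤ ⌊y⌋ := by exact_mod_cast hfloor
    have hx0 := sawtooth_nonneg h0 h1 x
    have hy0 := sawtooth_nonneg h0 h1 y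
    have hx1 : sawtooth t x ≤ t * (1 - Int.fract x) := min_le_right _ _
    have hy1 : sawtooth t y ≤ (1 - t) * Int.fract y := min_le_left _ _
    have := Int.fract_nonneg y
    have := Int.fract_lt_one x
    rw [abs_le]
    constructor <;> nlinarith

lemma lipschitzWith_sawtooth (h0 : 0 ≤ t) (h1 : t ≤ 1) : LipschitzWith 1 (sawtooth t) := by
  refine .of_dist_le_mul fun x y => ?_
  rw [NNReal.coe_one, one_mul, Real.dist_eq, Real.dist_eq]
  rcases le_total x y with h | h
  · rw [abs_sub_comm x y, abs_of_nonneg (sub_nonneg.2 h)]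
    exact abs_sawtooth_sub_le_of_le h0 h1 h
  · rw [abs_sub_comm, abs_of_nonneg (sub_nonneg.2 h)]
    exact abs_sawtooth_sub_le_of_le h0 h1 h

lemma eventually_fract_eq (h : 0 < Int.fract s) :
    ∀ᶠ r in 𝓝 s, Int.fract r = Int.fract s + (r - s) := by
  have hs := Int.floor_add_fract s
  filter_upwards [Ioo_mem_nhds (show (⌊s⌋ : ℝ) < s by linarith) (Int.lt_floor_add_one s)]
    with r hr
  have : ⌊r⌋ = ⌊s⌋ := Int.floor_eq_iff.2 ⟨hr.1.le, hr.2⟩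
  rw [Int.fract, Int.fract, this]
  ring

lemma continuousAt_fract_of_pos (h : 0 < Int.fract s) : ContinuousAt Int.fract s :=
  continuousAt_fract fun hs => h.ne' (by rw [Int.fract, ← hs, sub_self])

lemma isOpen_setOf_fract_mem {I : Set ℝ} (hI : IsOpen I) (h0 : I ⊆ Ioi 0) :
    IsOpen {s : ℝ | Int.fract s ∈ I} :=
  isOpen_iff_mem_nhds.2 fun _ hs => (continuousAt_fract_of_pos (h0 hs)) (hI.mem_nhds hs)

lemma sawtooth_eventuallyEq_of_fract_lt (h : 0 < Int.fract s) (ht : Int.fract s < t) :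
    sawtooth t =ᶠ[𝓝 s] fun r => sawtooth t s + (1 - t) * (r - s) := by
  filter_upwards [eventually_fract_eq h,
    (continuousAt_fract_of_pos h).eventually_lt_const ht] with r hr hrt
  rw [sawtooth_of_fract_le hrt.le, sawtooth_of_fract_le ht.le, hr]
  ring

lemma sawtooth_eventuallyEq_of_lt_fract (h : 0 ≤ t) (ht : t < Int.fract s) :
    sawtooth t =ᶠ[𝓝 s] fun r => sawtooth t s + -t * (r - s) := by
  filter_upwards [eventually_fract_eq (h.trans_lt ht),
    (continuousAt_fract_of_pos (h.trans_lt ht)).eventually_const_lt ht] with r hr hrt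
  rw [sawtooth_of_le_fract hrt.le, sawtooth_of_le_fract ht.le, hr]
  ring

lemma exists_sawtooth_eventuallyEq (h0 : 0 ≤ t) (hs : 0 < Int.fract s) (hst : Int.fract s ≠ t) :
    ∃ σ ∈ Icc (-t) (1 - t), sawtooth t =ᶠ[𝓝 s] fun r => sawtooth t s + σ * (r - s) := by
  rcases hst.lt_or_gt with h | h
  · exact ⟨1 - t, ⟨by linarith, le_rfl⟩, sawtooth_eventuallyEq_of_fract_lt hs h⟩
  · exact ⟨-t, ⟨le_rfl, by linarith⟩, sawtooth_eventuallyEq_of_lt_fract h0 h⟩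

lemma countable_setOf_fract_mem {S : Set ℝ} (hS : S.Countable) :
    {s : ℝ | Int.fract s ∈ S}.Countable := by
  refine (hS.biUnion fun c _ => countable_range fun m : ℤ => (m : ℝ) + c).mono fun s hs => ?_
  exact mem_biUnion hs ⟨⌊s⌋, Int.floor_add_fract s⟩

end Sawtooth

/-! ### Lipschitz functions and their gradients -/

section Analysis

variable {V : Type*} [NormedAddCommGroup V] [NormedSpace ℝ V] [FiniteDimensional ℝ V]
  [MeasurableSpace V] [BorelSpace V] {μ : Measure V} [μ.IsAddHaarMeasure]

lemma ae_notMem_of_countable {n : V →L[ℝ] ℝ} (hn : n ≠ 0) {S : Set ℝ} (hS : S.Countable) :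
    ∀ᵐ x ∂μ, n x ∉ S := by
  obtain ⟨v, hv⟩ : ∃ v, n v ≠ 0 := by
    by_contra! h
    exact hn (ContinuousLinearMap.ext h)
  have hlevel (c : ℝ) : μ {x | n x = c} = 0 := by
    let H := (AffineSubspace.mk' c ⊥ : AffineSubspace ℝ ℝ).comap n.toLinearMap.toAffineMap
    have hH : (H : Set V) = {x | n x = c} := by
      ext x
      simp [H, AffineSubspace.mem_mk', sub_eq_zero]
    rw [← hH]
    refine Measure.addHaar_affineSubspace μ H fun htop => ?_
    have hall (x : V) : n x = c := by
      have : x ∈ (H : Set V) := htop ▸ AffineSubspace.mem_top ℝ V x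
      rwa [hH] at this
    exact hv ((hall v).trans ((hall 0).symm.trans n.map_zero))
  have hunion : {x | ¬ n x ∉ S} = ⋃ c ∈ S, {x | n x = c} := by
    ext
    simp
  rw [ae_iff, hunion, measure_biUnion_null_iff hS]
  exact fun c _ => hlevel c

variable {W : Type*} [NormedAddCommGroup W]

lemma integrable_translate {f : V → W} {C : ℝ≥0} (hf : LipschitzWith C f) {ν : Measure V}
    [IsProbabilityMeasure ν] {r : ℝ} (hνr : ∀ᵐ z ∂ν, ‖z‖ ≤ r) (x : V) :
    Integrable (fun z => f (x + z)) ν := by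
  have hcont : Continuous fun z => f (x + z) := hf.continuous.comp (by fun_prop)
  refine .of_bound hcont.aestronglyMeasurable (‖f x‖ + C * r) ?_
  filter_upwards [hνr] with z hz
  have h1 : ‖f (x + z) - f x‖ ≤ C * ‖z‖ := by simpa using hf.norm_sub_le (x + z) x
  have h2 : (C : ℝ) * ‖z‖ ≤ C * r := by gcongr
  linarith [norm_le_norm_add_norm_sub' (f (x + z)) (f x)]

variable [NormedSpace ℝ W]

lemma norm_integral_translate_sub_le [CompleteSpace W] {f : V → W} {C : ℝ≥0}
    (hf : LipschitzWith C f) {ν : Measure V} [IsProbabilityMeasure ν] {r : ℝ}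
    (hνr : ∀ᵐ z ∂ν, ‖z‖ ≤ r) (x : V) :
    ‖∫ z, f (x + z) ∂ν - f x‖ ≤ C * r := by
  have hint := integrable_translate hf hνr x
  calc ‖∫ z, f (x + z) ∂ν - f x‖ = ‖∫ z, (f (x + z) - f x) ∂ν‖ := by
        rw [integral_sub hint (integrable_const _), integral_const, probReal_univ, one_smul]
    _ ≤ C * r * ν.real univ := by
        refine norm_integral_le_of_norm_le_const (hνr.mono fun z hz => ?_)
        calc ‖f (x + z) - f x‖ ≤ C * ‖z‖ := by simpa using hf.norm_sub_le (x + z) x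
          _ ≤ C * r := by gcongr
    _ = C * r := by rw [probReal_univ, mul_one]

variable [FiniteDimensional ℝ W]

-- Averaging makes the gradient bound, which holds only almost everywhere, hold at every point.
lemma lipschitzWith_integral_translate {f : V → W} {C M : ℝ≥0} (hf : LipschitzWith C f)
    (hM : ∀ᵐ x ∂μ, ‖fderiv ℝ f x‖ ≤ M) {ν : Measure V} [IsProbabilityMeasure ν] (hν : ν ≪ μ)
    {r : ℝ} (hνr : ∀ᵐ z ∂ν, ‖z‖ ≤ r) : LipschitzWith M fun x => ∫ z, f (x + z) ∂ν := by
  have htranslate (x : V) : ∀ᵐ z ∂ν, DifferentiableAt ℝ f (x + z) ∧ ‖fderiv ℝ f (x + z)‖ ≤ M :=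
    hν.ae_le ((measurePreserving_add_left μ x).quasiMeasurePreserving.ae
      (hf.ae_differentiableAt.and hM))
  have hderiv (x : V) :
      HasFDerivAt (fun x => ∫ z, f (x + z) ∂ν) (∫ z, fderiv ℝ f (x + z) ∂ν) x := by
    refine (hasFDerivAt_integral_of_dominated_loc_of_lip (bound := fun _ => (C : ℝ)) univ_mem
      (.of_forall fun y => (integrable_translate hf hνr y).aestronglyMeasurable)
      (integrable_translate hf hνr x)
      ((measurable_fderiv ℝ f).comp (measurable_const_add x)).aestronglyMeasurable
      (.of_forall fun z => ?_) (integrable_const _) ?_).2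
    · rw [Real.nnabs_coe]
      refine (LipschitzWith.of_dist_le_mul fun y y' => ?_).lipschitzOnWith
      simpa using hf.dist_le_mul (y + z) (y' + z)
    · exact (htranslate x).mono fun z hz => (hasFDerivAt_comp_add_right z).2 hz.1.hasFDerivAt
  refine lipschitzWith_of_nnnorm_fderiv_le (fun x => (hderiv x).differentiableAt) fun x => ?_
  rw [(hderiv x).fderiv, ← NNReal.coe_le_coe, coe_nnnorm]
  simpa using norm_integral_le_of_norm_le_const ((htranslate x).mono fun z hz => hz.2)

theorem lipschitzWith_of_ae_norm_fderiv_le {f : V → W} {C M : ℝ≥0} (hf : LipschitzWith C f)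
    (hM : ∀ᵐ x ∂μ, ‖fderiv ℝ f x‖ ≤ M) : LipschitzWith M f := by
  have := FiniteDimensional.complete ℝ W
  refine .of_dist_le_mul fun x y => ?_
  rw [dist_eq_norm, dist_eq_norm]
  have hbound (r : ℝ) (hr : 0 < r) : ‖f x - f y‖ ≤ M * ‖x - y‖ + 2 * (C * r) := by
    let ν := ProbabilityTheory.cond μ (ball 0 r)
    have : IsProbabilityMeasure ν := ProbabilityTheory.cond_isProbabilityMeasure_of_finite
      (measure_ball_pos μ 0 hr).ne' measure_ball_lt_top.ne
    have hνr : ∀ᵐ z ∂ν, ‖z‖ ≤ r :=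
      (ProbabilityTheory.ae_cond_mem measurableSet_ball).mono fun z hz =>
        (mem_ball_zero_iff.1 hz).le
    have hlip := (lipschitzWith_integral_translate (ν := ν) hf hM
      ProbabilityTheory.cond_absolutelyContinuous hνr).norm_sub_le x y
    have hx := norm_integral_translate_sub_le hf hνr x
    have hy := norm_integral_translate_sub_le hf hνr y
    rw [← dist_eq_norm] at hlip hx hy ⊢
    linarith [dist_triangle4_left (∫ z, f (x + z) ∂ν) (∫ z, f (y + z) ∂ν) (f x) (f y)]
  have hlim : Tendsto (fun r : ℝ => M * ‖x - y‖ + 2 * (C * r)) (𝓝[>] 0) (𝓝 (M * ‖x - y‖)) := by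
    have : Continuous fun r : ℝ => M * ‖x - y‖ + 2 * (C * r) := by fun_prop
    simpa using (this.tendsto 0).mono_left nhdsWithin_le_nhds
  exact ge_of_tendsto hlim (eventually_mem_nhdsWithin.mono hbound)

end Analysis

/-! ### Perturbations -/

section Perturbation

lemma add_eventuallyEq_left {X Y : Type*} [TopologicalSpace X] [AddMonoid Y] {u w : X → Y} {x : X}
    (h : w =ᶠ[𝓝 x] 0) : u + w =ᶠ[𝓝 x] u :=
  h.mono fun y hy => by simp [hy]

variable {V W : Type*} [NormedAddCommGroup V] [NormedSpace ℝ V]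
  [NormedAddCommGroup W] [NormedSpace ℝ W]

/-- `u` is of class `C¹` near `x` and its gradient at `x` lies in `U`. -/
def HasGradientIn (U : Set (V →L[ℝ] W)) (u : V → W) (x : V) : Prop :=
  ContDiffAt ℝ 1 u x ∧ fderiv ℝ u x ∈ U

lemma HasGradientIn.mono {U U' : Set (V →L[ℝ] W)} {u : V → W} {x : V} (h : HasGradientIn U u x)
    (hU : U ⊆ U') : HasGradientIn U' u x :=
  ⟨h.1, hU h.2⟩

lemma HasGradientIn.congr {U : Set (V →L[ℝ] W)} {u v : V → W} {x : V} (h : HasGradientIn U u x)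
    (huv : v =ᶠ[𝓝 x] u) : HasGradientIn U v x :=
  ⟨h.1.congr_of_eventuallyEq huv, (huv.fderiv_eq (𝕜 := ℝ)).symm ▸ h.2⟩

lemma HasGradientIn.add {ξ L : V →L[ℝ] W} {u w : V → W} {x : V} {δ ε : ℝ}
    (hu : HasGradientIn (ball ξ δ) u x) (hw : ContDiffAt ℝ 1 w x) (hL : ‖fderiv ℝ w x - L‖ ≤ ε) :
    HasGradientIn (ball (ξ + L) (δ + ε)) (u + w) x := by
  refine ⟨hu.1.add hw, ?_⟩
  rw [fderiv_add (hu.1.differentiableAt one_ne_zero) (hw.differentiableAt one_ne_zero), mem_ball]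
  refine (dist_add_add_le _ _ _ _).trans_lt (add_lt_add_of_lt_of_le hu.2 ?_)
  rwa [dist_eq_norm]

lemma isOpen_setOf_hasGradientIn {U : Set (V →L[ℝ] W)} (hU : IsOpen U) (u : V → W) :
    IsOpen {x | HasGradientIn U u x} := by
  refine isOpen_iff_mem_nhds.2 fun x ⟨hx, hxU⟩ => ?_
  have hcont : ContinuousAt (fderiv ℝ u) x :=
    (hx.fderiv_right (m := 0) (by norm_num)).continuousAt
  filter_upwards [hx.eventually (by simp), hcont (hU.mem_nhds hxU)] with y hy hyU
  exact ⟨hy, hyU⟩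

variable [MeasurableSpace V]

/-- A Lipschitz map `w` of size `η`, vanishing near the points outside `G`, such that the gradient
of `u + w` on `G` stays in `U` and lies in the target `T` up to a set of measure `η`. -/
structure IsPerturbation (μ : Measure V) (U T : Set (V →L[ℝ] W)) (u : V → W) (G : Set V) (η : ℝ)
    (w : V → W) : Prop where
  lipschitz : ∃ C : ℝ≥0, LipschitzWith C w
  norm_le : ∀ x, ‖w x‖ ≤ η
  eventuallyEq_zero : ∀ x ∉ G, w =ᶠ[𝓝 x] 0
  ae_hasGradientIn : ∀ᵐ x ∂μ, x ∈ G → HasGradientIn U (u + w) x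
  measure_le : μ {x ∈ G | fderiv ℝ (u + w) x ∉ T} ≤ ENNReal.ofReal η

/-- `u` admits perturbations on `G` which are as small as desired. -/
def Improvable (μ : Measure V) (U T : Set (V →L[ℝ] W)) (u : V → W) (G : Set V) : Prop :=
  ∀ η > 0, ∃ w, IsPerturbation μ U T u G η w

variable {μ : Measure V} {U T : Set (V →L[ℝ] W)} {u w w₁ w₂ : V → W} {G G' G₁ G₂ : Set V}
  {η η₁ η₂ : ℝ}

lemma IsPerturbation.nonneg (h : IsPerturbation μ U T u G η w) : 0 ≤ η :=
  (norm_nonneg _).trans (h.norm_le 0)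

lemma isPerturbation_zero (hη : 0 ≤ η) (hU : ∀ᵐ x ∂μ, x ∈ G → HasGradientIn U u x)
    (hT : ∀ x ∈ G, fderiv ℝ u x ∈ T) : IsPerturbation μ U T u G η 0 where
  lipschitz := ⟨0, .const 0⟩
  norm_le _ := by simpa using hη
  eventuallyEq_zero _ _ := .rfl
  ae_hasGradientIn := by simpa using hU
  measure_le := by
    have : {x ∈ G | fderiv ℝ (u + 0) x ∉ T} = ∅ :=
      eq_empty_of_forall_notMem fun x hx => hx.2 ((add_zero u).symm ▸ hT x hx.1)
    rw [this, measure_empty]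
    exact zero_le

lemma IsPerturbation.trans (h₁ : IsPerturbation μ U univ u G η₁ w₁)
    (h₂ : IsPerturbation μ U T (u + w₁) G' η₂ w₂) (hG : G' ⊆ G)
    (hη₁ : μ (G \ G') ≤ ENNReal.ofReal η₁) :
    IsPerturbation μ U T u G (η₁ + η₂) (w₁ + w₂) where
  lipschitz := by
    obtain ⟨⟨C₁, hC₁⟩, C₂, hC₂⟩ := And.intro h₁.lipschitz h₂.lipschitz
    exact ⟨C₁ + C₂, hC₁.add hC₂⟩
  norm_le x := norm_add_le_of_le (h₁.norm_le x) (h₂.norm_le x)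
  eventuallyEq_zero x hx := by
    simpa using (h₁.eventuallyEq_zero x hx).add (h₂.eventuallyEq_zero x fun hx' => hx (hG hx'))
  ae_hasGradientIn := by
    filter_upwards [h₁.ae_hasGradientIn, h₂.ae_hasGradientIn] with x hx₁ hx₂ hx
    rw [← add_assoc]
    by_cases hx' : x ∈ G'
    · exact hx₂ hx'
    · exact (hx₁ hx).congr (add_eventuallyEq_left (h₂.eventuallyEq_zero x hx'))
  measure_le := by
    have hsub : {x ∈ G | fderiv ℝ (u + (w₁ + w₂)) x ∉ T} ⊆
        G \ G' ∪ {x ∈ G' | fderiv ℝ (u + w₁ + w₂) x ∉ T} := fun x ⟨hx, hxT⟩ =>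
      (em (x ∈ G')).elim (fun hx' => .inr ⟨hx', by rwa [add_assoc]⟩) fun hx' => .inl ⟨hx, hx'⟩
    rw [ENNReal.ofReal_add h₁.nonneg h₂.nonneg]
    exact (measure_mono hsub).trans <|
      (measure_union_le _ _).trans (add_le_add hη₁ h₂.measure_le)

lemma IsPerturbation.union (h₁ : IsPerturbation μ U T u G₁ η₁ w₁)
    (h₂ : IsPerturbation μ U T u G₂ η₂ w₂) (hd : Disjoint G₁ G₂) :
    IsPerturbation μ U T u (G₁ ∪ G₂) (η₁ + η₂) (w₁ + w₂) := by
  have heq₁ : ∀ x ∈ G₁, u + (w₁ + w₂) =ᶠ[𝓝 x] u + w₁ := fun x hx => by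
    rw [← add_assoc]
    exact add_eventuallyEq_left (h₂.eventuallyEq_zero x (disjoint_left.1 hd hx))
  have heq₂ : ∀ x ∈ G₂, u + (w₁ + w₂) =ᶠ[𝓝 x] u + w₂ := fun x hx => by
    rw [add_comm w₁, ← add_assoc]
    exact add_eventuallyEq_left (h₁.eventuallyEq_zero x (disjoint_right.1 hd hx))
  refine ⟨?_, fun x => norm_add_le_of_le (h₁.norm_le x) (h₂.norm_le x), fun x hx => ?_, ?_, ?_⟩
  · obtain ⟨⟨C₁, hC₁⟩, C₂, hC₂⟩ := And.intro h₁.lipschitz h₂.lipschitz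
    exact ⟨C₁ + C₂, hC₁.add hC₂⟩
  · rw [mem_union, not_or] at hx
    simpa using (h₁.eventuallyEq_zero x hx.1).add (h₂.eventuallyEq_zero x hx.2)
  · filter_upwards [h₁.ae_hasGradientIn, h₂.ae_hasGradientIn] with x hx₁ hx₂ hx
    exact hx.elim (fun hx => (hx₁ hx).congr (heq₁ x hx)) fun hx => (hx₂ hx).congr (heq₂ x hx)
  · have hsub : {x ∈ G₁ ∪ G₂ | fderiv ℝ (u + (w₁ + w₂)) x ∉ T} ⊆
        {x ∈ G₁ | fderiv ℝ (u + w₁) x ∉ T} ∪ {x ∈ G₂ | fderiv ℝ (u + w₂) x ∉ T} := by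
      rintro x ⟨hx | hx, hxT⟩
      · exact .inl ⟨hx, (heq₁ x hx).fderiv_eq (𝕜 := ℝ) ▸ hxT⟩
      · exact .inr ⟨hx, (heq₂ x hx).fderiv_eq (𝕜 := ℝ) ▸ hxT⟩
    rw [ENNReal.ofReal_add h₁.nonneg h₂.nonneg]
    exact (measure_mono hsub).trans <|
      (measure_union_le _ _).trans (add_le_add h₁.measure_le h₂.measure_le)

lemma Improvable.of_hasGradientIn (hTU : T ⊆ U) (h : ∀ x ∈ G, HasGradientIn T u x) :
    Improvable μ U T u G := fun _ hη =>
  ⟨0, isPerturbation_zero hη.le (.of_forall fun x hx => (h x hx).mono hTU) fun x hx => (h x hx).2⟩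

lemma improvable_empty : Improvable μ U T u ∅ := fun _ hη =>
  ⟨0, isPerturbation_zero hη.le (.of_forall fun _ hx => hx.elim) fun _ hx => hx.elim⟩

lemma Improvable.union (h₁ : Improvable μ U T u G₁) (h₂ : Improvable μ U T u G₂)
    (hd : Disjoint G₁ G₂) : Improvable μ U T u (G₁ ∪ G₂) := fun η hη => by
  obtain ⟨w₁, hw₁⟩ := h₁ (η / 2) (half_pos hη)
  obtain ⟨w₂, hw₂⟩ := h₂ (η / 2) (half_pos hη)
  exact ⟨w₁ + w₂, add_halves η ▸ hw₁.union hw₂ hd⟩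

lemma Improvable.of_exists_subset (hu : ∀ᵐ x ∂μ, x ∈ G → HasGradientIn U u x)
    (h : ∀ κ > 0, ∃ G' ⊆ G, Improvable μ U T u G' ∧ μ (G \ G') ≤ ENNReal.ofReal κ) :
    Improvable μ U T u G := fun η hη => by
  obtain ⟨G', hG', hG'u, hκ⟩ := h (η / 2) (half_pos hη)
  obtain ⟨w, hw⟩ := hG'u (η / 2) (half_pos hη)
  have h0 : IsPerturbation μ U univ u G (η / 2) 0 :=
    isPerturbation_zero (half_pos hη).le hu fun _ _ => mem_univ _
  exact ⟨0 + w, add_halves η ▸ h0.trans ((add_zero u).symm ▸ hw) hG' hκ⟩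

end Perturbation

/-! ### Laminates are reached by oscillations -/

section Oscillation

variable {V W : Type*} [NormedAddCommGroup V] [NormedSpace ℝ V]
  [NormedAddCommGroup W] [NormedSpace ℝ W]

/-- The oscillation of frequency `N` in the direction `n ⊗ a`, localized by the cutoff `χ`. -/
noncomputable def oscillation (χ : V → ℝ) (n : V →L[ℝ] ℝ) (a : W) (t N : ℝ) (x : V) : W :=
  (χ x * (sawtooth t (N * n x) / N)) • a

variable {χ : V → ℝ} {K : ℝ≥0} {n : V →L[ℝ] ℝ} {a : W} {t N σ : ℝ} {x : V}

lemma norm_oscillation_le (hχ : ∀ x, χ x ∈ Icc 0 1) (hN : 0 < N) (h0 : 0 ≤ t) (h1 : t ≤ 1)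
    (x : V) : ‖oscillation χ n a t N x‖ ≤ ‖a‖ / N := by
  have hsaw := sawtooth_nonneg h0 h1 (N * n x)
  rw [oscillation, norm_smul, Real.norm_of_nonneg
    (mul_nonneg (hχ x).1 (div_nonneg hsaw hN.le))]
  calc χ x * (sawtooth t (N * n x) / N) * ‖a‖ ≤ 1 * (1 / N) * ‖a‖ := by
        gcongr
        exacts [(hχ x).2, sawtooth_le_one h0 _]
    _ = ‖a‖ / N := by ring

lemma lipschitzWith_mul {X : Type*} [PseudoMetricSpace X] {f g : X → ℝ} {A B C D : ℝ≥0}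
    (hf : LipschitzWith A f) (hg : LipschitzWith B g) (hfC : ∀ x, ‖f x‖ ≤ C)
    (hgD : ∀ x, ‖g x‖ ≤ D) : LipschitzWith (C * B + A * D) fun x => f x * g x := by
  refine .of_dist_le_mul fun x y => ?_
  calc dist (f x * g x) (f y * g y)
      ≤ ‖f x‖ * dist (g x) (g y) + dist (f x) (f y) * ‖g y‖ := by
        rw [Real.dist_eq, Real.dist_eq, Real.dist_eq, Real.norm_eq_abs, Real.norm_eq_abs,
          ← abs_mul, ← abs_mul]
        refine le_of_eq_of_le ?_ (abs_add_le _ _)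
        congr 1
        ring
    _ ≤ C * (B * dist x y) + A * dist x y * D := by
        gcongr
        exacts [hfC x, hg.dist_le_mul x y, hf.dist_le_mul x y, hgD y]
    _ = (C * B + A * D : ℝ≥0) * dist x y := by push_cast; ring

lemma exists_lipschitzWith_oscillation (hK : LipschitzWith K χ) (hχ : ∀ x, χ x ∈ Icc 0 1)
    (n : V →L[ℝ] ℝ) (a : W) (h0 : 0 ≤ t) (h1 : t ≤ 1) :
    ∃ C : ℝ≥0, LipschitzWith C (oscillation χ n a t N) := by
  have hprofile := (lipschitzWith_smul N⁻¹).comp <|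
    (lipschitzWith_sawtooth h0 h1).comp <| (lipschitzWith_smul N).comp n.lipschitz
  have hbound (s : ℝ) : ‖N⁻¹ • sawtooth t s‖ ≤ ‖N⁻¹‖₊ := by
    rw [norm_smul, coe_nnnorm, Real.norm_of_nonneg (sawtooth_nonneg h0 h1 s)]
    exact mul_le_of_le_one_right (norm_nonneg _) (sawtooth_le_one h0 s)
  have hmul := lipschitzWith_mul (C := 1) hK hprofile
    (fun x => by simpa [abs_of_nonneg (hχ x).1] using (hχ x).2) fun x => hbound (N * n x)
  have hcomp : oscillation χ n a t N = (ContinuousLinearMap.id ℝ ℝ).smulRight a ∘ fun x =>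
      χ x * ((fun r => N⁻¹ • r) ∘ sawtooth t ∘ (fun r => N • r) ∘ n) x := by
    ext x
    simp [oscillation, div_eq_inv_mul]
  exact ⟨_, hcomp ▸ ((ContinuousLinearMap.id ℝ ℝ).smulRight a).lipschitz.comp hmul⟩

lemma oscillation_eventuallyEq (hN : N ≠ 0)
    (h : sawtooth t =ᶠ[𝓝 (N * n x)] fun r => sawtooth t (N * n x) + σ * (r - N * n x)) :
    oscillation χ n a t N =ᶠ[𝓝 x]
      fun z => (χ z * (sawtooth t (N * n x) / N + σ * (n z - n x))) • a := by
  have hcont : Tendsto (fun z => N * n z) (𝓝 x) (𝓝 (N * n x)) :=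
    (continuous_const.mul n.continuous).tendsto x
  filter_upwards [hcont.eventually h] with z hz
  rw [oscillation, hz]
  congr 2
  field_simp

lemma contDiffAt_oscillation (hχ : ContDiff ℝ 1 χ) (hN : N ≠ 0)
    (h : sawtooth t =ᶠ[𝓝 (N * n x)] fun r => sawtooth t (N * n x) + σ * (r - N * n x)) :
    ContDiffAt ℝ 1 (oscillation χ n a t N) x := by
  refine ContDiffAt.congr_of_eventuallyEq ?_ (oscillation_eventuallyEq hN h)
  fun_prop

lemma norm_fderiv_oscillation_sub_le (hχ : ContDiff ℝ 1 χ) (hN : 0 < N) (h0 : 0 ≤ t) (h1 : t ≤ 1)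
    (h : sawtooth t =ᶠ[𝓝 (N * n x)] fun r => sawtooth t (N * n x) + σ * (r - N * n x)) :
    ‖fderiv ℝ (oscillation χ n a t N) x - (χ x * σ) • n.smulRight a‖ ≤
      ‖fderiv ℝ χ x‖ * ‖a‖ / N := by
  have hphase : HasFDerivAt (fun z => sawtooth t (N * n x) / N + σ * (n z - n x)) (σ • n) x :=
    ((n.hasFDerivAt.sub_const _).const_mul σ).const_add _
  have hderiv := ((hχ.differentiable one_ne_zero x).hasFDerivAt.mul hphase).smul_const a
  have hsub : fderiv ℝ (oscillation χ n a t N) x - (χ x * σ) • n.smulRight a =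
      (sawtooth t (N * n x) / N) • (fderiv ℝ χ x).smulRight a := by
    rw [(oscillation_eventuallyEq hN.ne' h).fderiv_eq.trans hderiv.fderiv]
    ext v
    simp
    module
  have hsaw := sawtooth_nonneg h0 h1 (N * n x)
  rw [hsub, norm_smul, ContinuousLinearMap.norm_smulRight_apply,
    Real.norm_of_nonneg (div_nonneg hsaw hN.le)]
  calc sawtooth t (N * n x) / N * (‖fderiv ℝ χ x‖ * ‖a‖) ≤ 1 / N * (‖fderiv ℝ χ x‖ * ‖a‖) := by
        gcongr
        exact sawtooth_le_one h0 _
    _ = ‖fderiv ℝ χ x‖ * ‖a‖ / N := by ring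

lemma hasGradientIn_add_oscillation {ξ : V →L[ℝ] W} {δ : ℝ} {u : V → W}
    (hu : HasGradientIn (ball ξ δ) u x) (hχ : ContDiff ℝ 1 χ) (hN : 0 < N) (h0 : 0 ≤ t)
    (h1 : t ≤ 1) (hχx : χ =ᶠ[𝓝 x] 1)
    (h : sawtooth t =ᶠ[𝓝 (N * n x)] fun r => sawtooth t (N * n x) + σ * (r - N * n x)) :
    HasGradientIn (ball (ξ + σ • n.smulRight a) δ) (u + oscillation χ n a t N) x := by
  have hL := norm_fderiv_oscillation_sub_le (a := a) hχ hN h0 h1 h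
  rw [hχx.eq_of_nhds, hχx.fderiv_eq (𝕜 := ℝ)] at hL
  simpa using hu.add (contDiffAt_oscillation hχ hN.ne' h) (L := σ • n.smulRight a) (ε := 0)
    (by simpa using hL)

variable [MeasurableSpace V] {μ : Measure V} {U T : Set (V →L[ℝ] W)} {ξ : V →L[ℝ] W} {δ ρ η : ℝ}
  {u : V → W} {G : Set V}

/-- Every map whose gradient is close to `ξ` on a bounded open set can be perturbed there so that
its gradient falls into `T` up to a small set, without leaving `U`. -/
def ImprovableNear (μ : Measure V) (U T : Set (V →L[ℝ] W)) (ξ : V →L[ℝ] W) (δ : ℝ) : Prop :=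
  ∀ ⦃G : Set V⦄, IsOpen G → IsBounded G → ∀ ⦃u : V → W⦄,
    (∀ x ∈ G, HasGradientIn (ball ξ δ) u x) → Improvable μ U T u G

lemma ImprovableNear.mono {δ' : ℝ} (h : ImprovableNear μ U T ξ δ) (hδ : δ' ≤ δ) :
    ImprovableNear μ U T ξ δ' :=
  fun _ hG hGb _ hu => h hG hGb fun x hx => (hu x hx).mono (ball_subset_ball hδ)

lemma improvable_add_oscillation
    (hB : ImprovableNear μ U T (ξ + (1 - t) • n.smulRight a) δ)
    (hC : ImprovableNear μ U T (ξ + -t • n.smulRight a) δ) (hG : IsOpen G) (hGb : IsBounded G)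
    (hu : ∀ x ∈ G, HasGradientIn (ball ξ δ) u x) (hχ : ContDiff ℝ 1 χ) (hN : 0 < N)
    (h0 : 0 ≤ t) (h1 : t ≤ 1) :
    Improvable μ U T (u + oscillation χ n a t N)
      {x ∈ G | χ =ᶠ[𝓝 x] 1 ∧ Int.fract (N * n x) ∈ Ioo 0 t ∪ Ioi t} := by
  have hopen (I : Set ℝ) (hI : IsOpen I) (hI0 : I ⊆ Ioi 0) :
      IsOpen {x ∈ G | χ =ᶠ[𝓝 x] 1 ∧ Int.fract (N * n x) ∈ I} :=
    hG.inter <| isOpen_setOfPred_eventually_nhds.inter <|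
      (isOpen_setOf_fract_mem hI hI0).preimage (by fun_prop)
  have hsplit : {x ∈ G | χ =ᶠ[𝓝 x] 1 ∧ Int.fract (N * n x) ∈ Ioo 0 t ∪ Ioi t} =
      {x ∈ G | χ =ᶠ[𝓝 x] 1 ∧ Int.fract (N * n x) ∈ Ioo 0 t} ∪
        {x ∈ G | χ =ᶠ[𝓝 x] 1 ∧ Int.fract (N * n x) ∈ Ioi t} := by
    ext x
    simp only [mem_union, mem_ofPred_eq]
    tauto
  rw [hsplit]
  refine Improvable.union ?_ ?_ (disjoint_left.2 fun x hx hx' => hx.2.2.2.not_gt hx'.2.2)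
  · exact hB (hopen _ isOpen_Ioo fun s hs => hs.1) (hGb.subset fun x hx => hx.1) fun x hx =>
      hasGradientIn_add_oscillation (hu x hx.1) hχ hN h0 h1 hx.2.1
        (sawtooth_eventuallyEq_of_fract_lt hx.2.2.1 hx.2.2.2)
  · exact hC (hopen _ isOpen_Ioi (Ioi_subset_Ioi h0)) (hGb.subset fun x hx => hx.1) fun x hx =>
      hasGradientIn_add_oscillation (hu x hx.1) hχ hN h0 h1 hx.2.1
        (sawtooth_eventuallyEq_of_lt_fract h0 hx.2.2)

variable [FiniteDimensional ℝ V]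

omit [MeasurableSpace V] in
lemma exists_contDiff_cutoff {C : Set V} (hG : IsOpen G) (hGb : IsBounded G)
    (hC : IsClosed C) (hCG : C ⊆ G) :
    ∃ χ : V → ℝ, ContDiff ℝ 1 χ ∧ (∃ K, LipschitzWith K χ) ∧ (∀ x, χ x ∈ Icc 0 1) ∧
      (∀ x ∉ G, χ =ᶠ[𝓝 x] 0) ∧ ∀ x ∈ C, χ =ᶠ[𝓝 x] 1 := by
  obtain ⟨χ, h0, h1, hχ⟩ := exists_contMDiffMap_zero_one_nhds_of_isClosed
    (n := 1) (modelWithCornersSelf ℝ V) hG.isClosed_compl hC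
    (by rwa [← subset_compl_iff_disjoint_left, compl_compl])
  rw [eventually_nhdsSet_iff_forall] at h0 h1
  have hsupp : HasCompactSupport χ :=
    .intro' hGb.isCompact_closure isClosed_closure fun x hx =>
      (h0 x fun h => hx (subset_closure h)).self_of_nhds
  exact ⟨χ, χ.contMDiff.contDiff, χ.contMDiff.contDiff.lipschitzWith_of_hasCompactSupport hsupp
    one_ne_zero, hχ, h0, h1⟩

variable [BorelSpace V] [μ.IsAddHaarMeasure]

lemma ae_fract_notMem (hn : n ≠ 0) (hN : N ≠ 0) {S : Set ℝ} (hS : S.Countable) :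
    ∀ᵐ x ∂μ, Int.fract (N * n x) ∉ S := by
  simpa using ae_notMem_of_countable (μ := μ) (smul_ne_zero hN hn) (countable_setOf_fract_mem hS)

lemma isPerturbation_oscillation (hχ : ContDiff ℝ 1 χ) (hK : LipschitzWith K χ)
    (hχI : ∀ x, χ x ∈ Icc 0 1) (hχG : ∀ x ∉ G, χ =ᶠ[𝓝 x] 0) (hn : n ≠ 0) (hN : 0 < N)
    (h0 : 0 ≤ t) (h1 : t ≤ 1) (hu : ∀ x ∈ G, HasGradientIn (ball ξ ρ) u x)
    (hU : ∀ σ ∈ Icc (-t) (1 - t), ball (ξ + σ • n.smulRight a) (ρ + K * ‖a‖ / N) ⊆ U)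
    (hη : ‖a‖ / N ≤ η) : IsPerturbation μ U univ u G η (oscillation χ n a t N) where
  lipschitz := exists_lipschitzWith_oscillation hK hχI n a h0 h1
  norm_le x := (norm_oscillation_le hχI hN h0 h1 x).trans hη
  eventuallyEq_zero x hx := (hχG x hx).mono fun y hy => by simp [oscillation, hy]
  ae_hasGradientIn := by
    filter_upwards [ae_fract_notMem hn hN.ne' (toFinite {0, t}).countable] with x hx hxG
    rw [mem_insert_iff, mem_singleton_iff, not_or] at hx
    obtain ⟨σ, ⟨hσ0, hσ1⟩, hσ⟩ :=
      exists_sawtooth_eventuallyEq h0 ((Int.fract_nonneg _).lt_of_ne' hx.1) hx.2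
    have hχσ : χ x * σ ∈ Icc (-t) (1 - t) := by
      have hχx := hχI x
      constructor <;> nlinarith [hχx.1, hχx.2]
    refine ((hu x hxG).add (contDiffAt_oscillation hχ hN.ne' hσ)
      ((norm_fderiv_oscillation_sub_le hχ hN h0 h1 hσ).trans ?_)).mono (hU _ hχσ)
    gcongr
    exact norm_fderiv_le_of_lipschitz ℝ hK
  measure_le := by simp

lemma ImprovableNear.of_oscillation (hn : n ≠ 0) (hδ : 0 < δ) (h0 : 0 ≤ t) (h1 : t ≤ 1)
    (hB : ImprovableNear μ U T (ξ + (1 - t) • n.smulRight a) δ)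
    (hC : ImprovableNear μ U T (ξ + -t • n.smulRight a) δ)
    (hU : ∀ σ ∈ Icc (-t) (1 - t), ball (ξ + σ • n.smulRight a) (δ + δ) ⊆ U) :
    ImprovableNear μ U T ξ δ := fun G hG hGb u hu η hη => by
  obtain ⟨C, hCG, hC', hGC⟩ := hG.measurableSet.exists_isCompact_sdiff_lt (μ := μ)
    hGb.measure_lt_top.ne (ε := ENNReal.ofReal (η / 2)) (by simpa using hη)
  obtain ⟨χ, hχ, ⟨K, hK⟩, hχI, hχG, hχC⟩ := exists_contDiff_cutoff hG hGb hC'.isClosed hCG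
  obtain ⟨N, hNη, hNδ, hN⟩ : ∃ N : ℝ, ‖a‖ / N ≤ η / 2 ∧ K * ‖a‖ / N ≤ δ ∧ 0 < N :=
    (((tendsto_const_nhds.div_atTop tendsto_id).eventually_le_const (half_pos hη)).and
      (((tendsto_const_nhds.div_atTop tendsto_id).eventually_le_const hδ).and
        (eventually_gt_atTop 0))).exists
  have hw₁ : IsPerturbation μ U univ u G (η / 2) (oscillation χ n a t N) :=
    isPerturbation_oscillation hχ hK hχI hχG hn hN h0 h1 hu
      (fun σ hσ => (ball_subset_ball (by gcongr)).trans (hU σ hσ)) hNη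
  obtain ⟨w₂, hw₂⟩ := improvable_add_oscillation hB hC hG hGb hu hχ hN h0 h1 (η / 2) (half_pos hη)
  refine ⟨_, add_halves η ▸ hw₁.trans hw₂ (fun x hx => hx.1) (le_trans ?_ hGC.le)⟩
  refine measure_mono_ae ?_
  filter_upwards [ae_fract_notMem hn hN.ne' (toFinite {0, t}).countable] with x hx hxG
  refine ⟨hxG.1, fun hxC => hxG.2 ⟨hxG.1, hχC x hxC, ?_⟩⟩
  rw [mem_insert_iff, mem_singleton_iff, not_or] at hx
  exact (lt_or_gt_of_ne hx.2).imp (⟨(Int.fract_nonneg _).lt_of_ne' hx.1, ·⟩) id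

end Oscillation

/-- The continuous linear maps `n ⊗ a` of rank at most one. -/
def rankOneDirections (V W : Type*) [NormedAddCommGroup V] [NormedSpace ℝ V]
    [NormedAddCommGroup W] [NormedSpace ℝ W] : Set (V →L[ℝ] W) :=
  {L | ∃ (n : V →L[ℝ] ℝ) (a : W), L = n.smulRight a}

section LocalToGlobal

variable {V W : Type*} [NormedAddCommGroup V] [NormedSpace ℝ V] [FiniteDimensional ℝ V]
  [NormedAddCommGroup W] [NormedSpace ℝ W] [MeasurableSpace V] [BorelSpace V]
  {μ : Measure V} [μ.IsAddHaarMeasure] {U T : Set (V →L[ℝ] W)} {ξ : V →L[ℝ] W} {u : V → W}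
  {O : Set V}

lemma exists_improvableNear (hU : IsOpen U) (hT : IsOpen T) (hTU : T ⊆ U)
    (hUl : LaminationConvex (rankOneDirections V W) U)
    (hξ : LaminationHull (rankOneDirections V W) T ξ) :
    ∃ δ > 0, ImprovableNear μ U T ξ δ := by
  induction hξ with
  | base h =>
    obtain ⟨δ, hδ, hball⟩ := Metric.isOpen_iff.1 hT _ h
    exact ⟨δ, hδ, fun G _ _ u hu => .of_hasGradientIn hTU fun x hx => (hu x hx).mono hball⟩
  | @segment B C ξ hB hC hBC hξ ihB ihC =>
    obtain ⟨δB, hδB, ihB⟩ := ihB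
    obtain ⟨δC, hδC, ihC⟩ := ihC
    have hseg : segment ℝ B C ⊆ U := hUl (hB.mem hUl hTU) (hC.mem hUl hTU) hBC
    have hcompact : IsCompact (segment ℝ B C) :=
      segment_eq_image_lineMap ℝ B C ▸ isCompact_Icc.image AffineMap.lineMap_continuous
    obtain ⟨ρ, hρ, hthick⟩ := hcompact.exists_thickening_subset_open hU hseg
    obtain ⟨n, a, hna⟩ := hBC
    obtain ⟨t, s, ht, hs, hts, rfl⟩ := hξ
    obtain rfl : s = 1 - t := by linarith
    have hline (σ : ℝ) : t • B + (1 - t) • C + σ • n.smulRight a =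
        (t + σ) • B + (1 - t - σ) • C := by rw [← hna]; module
    rcases eq_or_ne n 0 with rfl | hn
    · obtain rfl : B = C := sub_eq_zero.1 (hna.trans (by ext; simp))
      exact ⟨δB, hδB, by rwa [← add_smul, add_sub_cancel, one_smul]⟩
    refine ⟨min (min δB δC) (ρ / 2), by positivity,
      .of_oscillation (n := n) (a := a) (t := t) hn (by positivity) ht (by linarith) ?_ ?_
        fun σ hσ => ?_⟩
    · rw [hline, add_sub_cancel, sub_self, one_smul, zero_smul, add_zero]
      exact ihB.mono ((min_le_left _ _).trans (min_le_left _ _))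
    · rw [hline, add_neg_cancel, sub_neg_eq_add, sub_add_cancel, zero_smul, one_smul, zero_add]
      exact ihC.mono ((min_le_left _ _).trans (min_le_right _ _))
    · have hmem : t • B + (1 - t) • C + σ • n.smulRight a ∈ segment ℝ B C :=
        ⟨t + σ, 1 - t - σ, by linarith [hσ.1], by linarith [hσ.2], by ring, (hline σ).symm⟩
      refine (ball_subset_ball ?_).trans ((ball_subset_thickening hmem ρ).trans hthick)
      linarith [min_le_right (min δB δC) (ρ / 2)]

omit [FiniteDimensional ℝ V] [BorelSpace V] [μ.IsAddHaarMeasure] in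
lemma Improvable.biUnion {ι : Type*} {G : ι → Set V} (F : Finset ι)
    (h : ∀ i ∈ F, Improvable μ U T u (G i)) (hd : (F : Set ι).PairwiseDisjoint G) :
    Improvable μ U T u (⋃ i ∈ F, G i) := by
  classical
  induction F using Finset.induction_on with
  | empty => simpa using improvable_empty
  | insert i F hi ih =>
    rw [Finset.set_biUnion_insert]
    rw [Finset.coe_insert] at hd
    refine (h i (F.mem_insert_self i)).union
      (ih (fun j hj => h j (Finset.mem_insert_of_mem hj)) (hd.subset (subset_insert _ _))) ?_
    exact disjoint_iUnion₂_right.2 fun j hj => hd (mem_insert _ _)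
      (mem_insert_of_mem _ hj) fun hij => hi (hij ▸ hj)

lemma exists_finset_measure_diff_biUnion_ball_le (hO : μ O ≠ ∞) {R : V → ℝ}
    (hR : ∀ x ∈ O, 0 < R x) (hRO : ∀ x ∈ O, ball x (R x) ⊆ O) {ε : ℝ≥0∞} (hε : ε ≠ 0) :
    ∃ (F : Finset V) (r : V → ℝ), (∀ x ∈ F, x ∈ O ∧ r x < R x) ∧
      (F : Set V).PairwiseDisjoint (fun x => ball x (r x)) ∧
      μ (O \ ⋃ x ∈ F, ball x (r x)) ≤ ε := by
  obtain ⟨S, r, hS, hSO, hr, hcover, hd⟩ :=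
    Besicovitch.exists_disjoint_closedBall_covering_ae μ (fun _ => univ) O
      (fun x _ δ hδ => ⟨δ / 2, mem_univ _, half_pos hδ, half_lt_self hδ⟩) R hR
  have hSub : ⋃ x ∈ S, ball x (r x) ⊆ O := iUnion₂_subset fun x hx =>
    (ball_subset_ball (hr x hx).2.2.le).trans (hRO x (hSO hx))
  obtain ⟨C, hC, hCcomp, hCε⟩ :=
    (isOpen_biUnion fun x (_ : x ∈ S) => isOpen_ball (x := x) (ε := r x)).measurableSet
      |>.exists_isCompact_sdiff_lt (μ := μ) (measure_ne_top_of_subset hSub hO) hε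
  obtain ⟨F, hFS, hF, hCF⟩ := hCcomp.elim_finite_subcover_image (fun x _ => isOpen_ball) hC
  lift F to Finset V using hF
  refine ⟨F, r, fun x hx => ⟨hSO (hFS hx), (hr x (hFS hx)).2.2⟩,
    (hd.subset hFS).mono fun x => ball_subset_closedBall, ?_⟩
  have hspheres : μ (⋃ x ∈ S, sphere x (r x)) = 0 := (measure_biUnion_null_iff hS).2 fun x hx =>
    Measure.addHaar_sphere_of_ne_zero μ x (hr x hx).2.1.ne'
  refine (measure_mono_ae ?_).trans hCε.le
  filter_upwards [measure_eq_zero_iff_ae_notMem.1 hcover, measure_eq_zero_iff_ae_notMem.1 hspheres]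
    with x hx hx' hxO
  refine ⟨?_, fun hxC => hxO.2 (hCF hxC)⟩
  obtain ⟨y, hy, hxy⟩ := mem_iUnion₂.1 (not_not.1 fun h => hx ⟨hxO.1, h⟩)
  refine mem_iUnion₂.2 ⟨y, hy, hxy.lt_of_ne fun h => hx' (mem_iUnion₂.2 ⟨y, hy, h⟩)⟩

theorem improvable_of_laminationHull (hU : IsOpen U) (hT : IsOpen T) (hTU : T ⊆ U)
    (hUl : LaminationConvex (rankOneDirections V W) U)
    (hUT : ∀ ξ ∈ U, LaminationHull (rankOneDirections V W) T ξ) (hO : IsOpen O)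
    (hOb : IsBounded O) (hu : ∀ᵐ x ∂μ, x ∈ O → HasGradientIn U u x) : Improvable μ U T u O := by
  set O' := O ∩ {x | HasGradientIn U u x}
  have hO' : IsOpen O' := hO.inter (isOpen_setOf_hasGradientIn hU u)
  have hlocal (x : V) : ∃ r > 0, x ∈ O' →
      ball x r ⊆ O' ∧ ∀ s < r, Improvable μ U T u (ball x s) := by
    by_cases hx : x ∈ O'
    swap
    · exact ⟨1, one_pos, fun h => (hx h).elim⟩
    obtain ⟨δ, hδ, himp⟩ := exists_improvableNear (μ := μ) hU hT hTU hUl (hUT _ hx.2.2)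
    have hnear : ∀ᶠ y in 𝓝 x, HasGradientIn (ball (fderiv ℝ u x) δ) u y :=
      (isOpen_setOf_hasGradientIn isOpen_ball u).mem_nhds ⟨hx.2.1, mem_ball_self hδ⟩
    obtain ⟨r, hr, hball⟩ := eventually_nhds_iff_ball.1 ((hO'.eventually_mem hx).and hnear)
    exact ⟨r, hr, fun _ => ⟨fun y hy => (hball y hy).1, fun s hs =>
      himp isOpen_ball isBounded_ball fun y hy => (hball y (ball_subset_ball hs.le hy)).2⟩⟩
  choose R hR hlocal using hlocal
  refine .of_exists_subset hu fun κ hκ => ?_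
  obtain ⟨F, r, hF, hd, hκ⟩ := exists_finset_measure_diff_biUnion_ball_le (μ := μ)
    (hOb.subset inter_subset_left).measure_lt_top.ne (fun x _ => hR x)
    (fun x hx => (hlocal x hx).1) (ENNReal.ofReal_pos.2 hκ).ne'
  refine ⟨_, iUnion₂_subset fun x hx => ?_,
    .biUnion F (fun x hx => (hlocal x (hF x hx).1).2 _ (hF x hx).2) hd, le_trans ?_ hκ⟩
  · exact (ball_subset_ball (hF x hx).2.le).trans
      ((hlocal x (hF x hx).1).1.trans inter_subset_left)
  · refine measure_mono_ae ?_
    filter_upwards [hu] with x hx hxO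
    exact ⟨⟨hxO.1, hx hxO.1⟩, hxO.2⟩

end LocalToGlobal

/-! ### Iteration -/

section Iteration

lemma exists_tendsto_of_dist_le_half {X : Type*} [PseudoMetricSpace X] [CompleteSpace X]
    {f : ℕ → X} {δ : ℕ → ℝ} (hδ : ∀ k, δ (k + 1) ≤ δ k / 2)
    (hf : ∀ k, dist (f k) (f (k + 1)) ≤ δ k / 2) :
    ∃ a, Tendsto f atTop (𝓝 a) ∧ ∀ k, dist (f k) a ≤ δ k := by
  have hpow : ∀ k m, δ (k + m) ≤ δ k / 2 ^ m := fun k m => by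
    induction m with
    | zero => simp
    | succ m ih => calc
        δ (k + m + 1) ≤ δ k / 2 ^ m / 2 := (hδ _).trans (by gcongr)
        _ = δ k / 2 ^ (m + 1) := by rw [pow_succ, div_div]
  have hdist : ∀ k m, dist (f (k + m)) (f (k + (m + 1))) ≤ δ k / 2 / 2 ^ m := fun k m =>
    (hf (k + m)).trans (by rw [div_right_comm]; gcongr; exact hpow k m)
  obtain ⟨a, ha⟩ := cauchySeq_tendsto_of_complete
    (cauchySeq_of_le_geometric_two fun m => by simpa using hdist 0 m)
  refine ⟨a, ha, fun k => ?_⟩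
  refine dist_le_of_le_geometric_two_of_tendsto₀ (f := fun m => f (k + m)) (hdist k) ?_
  simpa only [add_comm k] using (tendsto_add_atTop_iff_nat k).2 ha

lemma mem_of_tendsto_of_eventually_mem_thickening {X ι : Type*} [PseudoMetricSpace X]
    {l : Filter ι} [l.NeBot] {S : Set X} (hS : IsClosed S) {f : ι → X} {a : X} {κ : ι → ℝ}
    (hf : Tendsto f l (𝓝 a)) (hκ : Tendsto κ l (𝓝 0)) (h : ∀ᶠ k in l, f k ∈ thickening (κ k) S) :
    a ∈ S := by
  obtain ⟨k₀, hk₀⟩ := h.exists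
  obtain ⟨s, hs, -⟩ := mem_thickening_iff.1 hk₀
  rw [hS.mem_iff_infDist_zero ⟨s, hs⟩]
  refine tendsto_nhds_unique ((continuous_infDist_pt S).continuousAt.tendsto.comp hf)
    (squeeze_zero' (.of_forall fun _ => infDist_nonneg) (h.mono fun k hk => ?_) hκ)
  exact ((mem_thickening_iff_infDist_lt ⟨s, hs⟩).1 hk).le

variable {V W : Type*} [NormedAddCommGroup V] [NormedSpace ℝ V] [FiniteDimensional ℝ V]
  [NormedAddCommGroup W] [NormedSpace ℝ W] {u v w φ : V → W} {x : V}

/-- The matrix of the difference quotients of `u` at scale `1 / n` along a basis of `V`. -/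
noncomputable def diffQuot (u : V → W) (n : ℕ) (x : V) : V →L[ℝ] W :=
  ∑ i, ((Module.finBasis ℝ V).coord i).toContinuousLinearMap.smulRight
    ((n : ℝ) • (u (x + (n : ℝ)⁻¹ • Module.finBasis ℝ V i) - u x))

lemma tendsto_diffQuot (h : DifferentiableAt ℝ u x) :
    Tendsto (fun n => diffQuot u n x) atTop (𝓝 (fderiv ℝ u x)) := by
  have hsum : fderiv ℝ u x = ∑ i, ((Module.finBasis ℝ V).coord i).toContinuousLinearMap.smulRight
      (fderiv ℝ u x (Module.finBasis ℝ V i)) := by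
    ext z
    conv_lhs => rw [← (Module.finBasis ℝ V).sum_repr z, map_sum]
    simp only [map_smul, sum_apply, ContinuousLinearMap.smulRight_apply,
      LinearMap.coe_toContinuousLinearMap', Module.Basis.coord_apply]
  rw [hsum]
  refine tendsto_finsetSum _ fun i _ => ?_
  exact ((ContinuousLinearMap.smulRightL ℝ V W _).continuous.tendsto _).comp <|
    (h.hasFDerivAt.lim_real (Module.finBasis ℝ V i)).comp tendsto_natCast_atTop_atTop

lemma exists_norm_diffQuot_sub_le (n : ℕ) {ε : ℝ} (hε : 0 < ε) :
    ∃ δ > 0, ∀ u v : V → W, (∀ x, ‖v x - u x‖ ≤ δ) →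
      ∀ x, ‖diffQuot v n x - diffQuot u n x‖ ≤ ε := by
  let A := ∑ i, ‖((Module.finBasis ℝ V).coord i).toContinuousLinearMap‖ * n * 2
  obtain ⟨δ, hδ, hδA⟩ := exists_pos_mul_lt hε A
  refine ⟨δ, hδ, fun u v huv x => le_trans ?_ hδA.le⟩
  rw [diffQuot, diffQuot, ← Finset.sum_sub_distrib, Finset.sum_mul]
  refine norm_sum_le_of_le _ fun i _ => ?_
  set y := x + (n : ℝ)⁻¹ • Module.finBasis ℝ V i
  set c := ((Module.finBasis ℝ V).coord i).toContinuousLinearMap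
  have hsub : c.smulRight ((n : ℝ) • (v y - v x)) - c.smulRight ((n : ℝ) • (u y - u x)) =
      c.smulRight ((n : ℝ) • ((v y - u y) - (v x - u x))) := by
    ext z
    simp only [sub_apply, ContinuousLinearMap.smulRight_apply]
    module
  rw [hsub, ContinuousLinearMap.norm_smulRight_apply, norm_smul, Real.norm_natCast]
  calc ‖c‖ * (n * ‖(v y - u y) - (v x - u x)‖) ≤ ‖c‖ * (n * (δ + δ)) := by
        gcongr
        exact norm_sub_le_of_le (huv y) (huv x)
    _ = ‖c‖ * n * 2 * δ := by ring

lemma continuous_diffQuot (hu : Continuous u) (n : ℕ) : Continuous (diffQuot u n) :=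
  continuous_finsetSum _ fun _ _ => (ContinuousLinearMap.smulRightL ℝ V W _).continuous.comp
    (by fun_prop)

/-- The gradients of the maps of the iteration converge, since both they and the gradient of the
limit are close to the difference quotients of the limit. -/
lemma fderiv_mem_of_tendsto_diffQuot {E : Set (V →L[ℝ] W)} (hE : IsClosed E)
    (hv : DifferentiableAt ℝ v x) {κ : ℕ → ℝ} (hκ : Tendsto κ atTop (𝓝 0)) {n : ℕ → ℕ}
    (hn : Tendsto n atTop atTop) {L : ℕ → V →L[ℝ] W}
    (hL : ∀ᶠ k in atTop, L k ∈ thickening (κ k) E)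
    (hdiff : ∀ᶠ k in atTop, ‖diffQuot v (n k) x - L k‖ < 2 * κ k) : fderiv ℝ v x ∈ E := by
  have hzero : Tendsto (fun k => diffQuot v (n k) x - L k) atTop (𝓝 0) :=
    squeeze_zero_norm' (hdiff.mono fun k hk => hk.le) (by simpa using hκ.const_mul 2)
  refine mem_of_tendsto_of_eventually_mem_thickening hE ?_ hκ hL
  simpa using ((tendsto_diffQuot hv).comp hn).sub hzero

variable [MeasurableSpace V] [BorelSpace V] {μ : Measure V} {O : Set V}

/-- Sets of measure `κ` suffice to exclude the points where difference quotients fail to control the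
gradient, even after a small perturbation. -/
lemma exists_measure_diffQuot_sub_fderiv_le [FiniteDimensional ℝ W] [μ.IsAddHaarMeasure]
    (hO : IsBounded O) {C : ℝ≥0} (hu : LipschitzWith C u) {κ : ℝ} (hκ : 0 < κ) :
    ∃ (n : ℕ) (δ : ℝ), κ⁻¹ ≤ n ∧ 0 < δ ∧ ∀ v, (∀ x, ‖v x - u x‖ ≤ δ) →
      μ {x ∈ O | 2 * κ ≤ ‖diffQuot v n x - fderiv ℝ u x‖} ≤ ENNReal.ofReal κ := by
  obtain ⟨R, hR⟩ := hO.subset_closedBall 0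
  have : IsFiniteMeasure (μ.restrict (closedBall 0 R)) :=
    ⟨by simpa using (isBounded_closedBall (x := (0 : V)) (r := R)).measure_lt_top⟩
  have htendsto := tendstoInMeasure_iff_norm.1 (tendstoInMeasure_of_tendsto_ae
    (fun n => (continuous_diffQuot hu.continuous n).aestronglyMeasurable)
    (ae_restrict_of_ae (s := closedBall 0 R)
      ((hu.ae_differentiableAt (μ := μ)).mono fun x hx => tendsto_diffQuot hx))) κ hκ
  obtain ⟨n, hn, hκn⟩ := ((htendsto.eventually_le_const (ENNReal.ofReal_pos.2 hκ)).and
    (tendsto_natCast_atTop_atTop.eventually_ge_atTop κ⁻¹)).exists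
  obtain ⟨δ, hδ, hclose⟩ := exists_norm_diffQuot_sub_le (V := V) (W := W) n hκ
  refine ⟨n, δ, hκn, hδ, fun v hv => le_trans ?_ hn⟩
  rw [Measure.restrict_apply' measurableSet_closedBall]
  refine measure_mono fun x ⟨hx, hxκ⟩ => ⟨?_, hR hx⟩
  have := norm_sub_le_norm_sub_add_norm_sub (diffQuot v n x) (diffQuot u n x) (fderiv ℝ u x)
  exact (by linarith [hclose u v hv x] : κ ≤ ‖diffQuot u n x - fderiv ℝ u x‖)

/-- The data of the Dacorogna–Marcellini existence theorem: gradients in the open set `U` are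
laminates of gradients in `U` arbitrarily close to the target `E`. -/
structure HasApproximationProperty (U E : Set (V →L[ℝ] W)) : Prop where
  isOpen : IsOpen U
  isBounded : IsBounded U
  laminationConvex : LaminationConvex (rankOneDirections V W) U
  laminationHull : ∀ ε > 0, ∀ ξ ∈ U,
    LaminationHull (rankOneDirections V W) (U ∩ thickening ε E) ξ

/-- Lipschitz maps with gradient in `U` on `O` which agree with `φ` near every point outside `O`. -/
structure IsAdmissible (μ : Measure V) (O : Set V) (U : Set (V →L[ℝ] W)) (φ u : V → W) : Prop where
  lipschitz : ∃ C : ℝ≥0, LipschitzWith C u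
  eventuallyEq : ∀ x ∉ O, u =ᶠ[𝓝 x] φ
  ae_hasGradientIn : ∀ᵐ x ∂μ, x ∈ O → HasGradientIn U u x

variable {U E T : Set (V →L[ℝ] W)} {G : Set V} {κ η : ℝ}

omit [FiniteDimensional ℝ V] [BorelSpace V] in
lemma IsAdmissible.add (hu : IsAdmissible μ O U φ u) (hw : IsPerturbation μ U T u G η w)
    (hG : G ⊆ O) : IsAdmissible μ O U φ (u + w) where
  lipschitz := by
    obtain ⟨⟨C, hC⟩, C', hC'⟩ := And.intro hu.lipschitz hw.lipschitz
    exact ⟨C + C', hC.add hC'⟩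
  eventuallyEq x hx :=
    (add_eventuallyEq_left (hw.eventuallyEq_zero x fun h => hx (hG h))).trans (hu.eventuallyEq x hx)
  ae_hasGradientIn := by
    filter_upwards [hu.ae_hasGradientIn, hw.ae_hasGradientIn] with x hx hx' hxO
    by_cases hxG : x ∈ G
    · exact hx' hxG
    · exact (hx hxO).congr (add_eventuallyEq_left (hw.eventuallyEq_zero x hxG))

lemma IsAdmissible.lipschitzWith [FiniteDimensional ℝ W] [μ.IsAddHaarMeasure]
    (hu : IsAdmissible μ O U φ u) {M : ℝ≥0} (hU : ∀ L ∈ U, ‖L‖ ≤ M) (hφ : LipschitzWith M φ) :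
    LipschitzWith M u := by
  obtain ⟨C, hC⟩ := hu.lipschitz
  refine lipschitzWith_of_ae_norm_fderiv_le (μ := μ) hC ?_
  filter_upwards [hu.ae_hasGradientIn] with x hx
  by_cases hxO : x ∈ O
  · exact hU _ (hx hxO).2
  · exact (hu.eventuallyEq x hxO).fderiv_eq (𝕜 := ℝ) ▸ norm_fderiv_le_of_lipschitz ℝ hφ

lemma exists_measure_infDist_compl_le (hO : IsOpen O) (hOμ : μ O ≠ ∞)
    (hne : Oᶜ.Nonempty) {ε : ℝ≥0∞} (hε : ε ≠ 0) : ∃ τ > 0, μ {x ∈ O | infDist x Oᶜ ≤ τ} ≤ ε := by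
  obtain ⟨C, hCO, hC, hCε⟩ := hO.measurableSet.exists_isCompact_sdiff_lt hOμ hε
  obtain ⟨τ, hτ, hτC⟩ := hC.exists_forall_le' (continuous_infDist_pt Oᶜ).continuousOn
    fun x hx => (hO.isClosed_compl.notMem_iff_infDist_pos hne).1 (not_not.2 (hCO hx))
  refine ⟨τ / 2, half_pos hτ,
    (measure_mono (t := O \ C) fun x hx => ⟨hx.1, fun hxC => ?_⟩).trans hCε.le⟩
  linarith [hx.2, hτC x hxC]

lemma IsAdmissible.exists_near [μ.IsAddHaarMeasure] [Nontrivial V]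
    (hUE : HasApproximationProperty U E) (hO : IsOpen O) (hOb : IsBounded O)
    (hu : IsAdmissible μ O U φ u) (hκ : 0 < κ) (hη : 0 < η) :
    ∃ u', IsAdmissible μ O U φ u' ∧ (∀ x, ‖u' x - u x‖ ≤ η) ∧
      (∀ x, ‖u' x - u x‖ ≤ κ * infDist x Oᶜ ^ 2) ∧
      μ {x ∈ O | fderiv ℝ u' x ∉ thickening κ E} ≤ ENNReal.ofReal κ := by
  have hne : Oᶜ.Nonempty := nonempty_compl.2 fun h => NormedSpace.unbounded_univ ℝ V (h ▸ hOb)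
  obtain ⟨τ, hτ, hτκ⟩ := exists_measure_infDist_compl_le (μ := μ) hO hOb.measure_lt_top.ne hne
    (ENNReal.ofReal_pos.2 (half_pos hκ)).ne'
  set G := {x | τ < infDist x Oᶜ}
  have hGO : G ⊆ O := fun x hx => not_not.1 fun hxO =>
    (hτ.trans hx).ne' (infDist_zero_of_mem hxO)
  obtain ⟨w, hw⟩ := improvable_of_laminationHull (μ := μ) (O := G) hUE.isOpen
    (hUE.isOpen.inter isOpen_thickening) inter_subset_left hUE.laminationConvex
    (hUE.laminationHull κ hκ) (isOpen_lt continuous_const (continuous_infDist_pt _))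
    (hOb.subset hGO) (hu.ae_hasGradientIn.mono fun x hx hxG => hx (hGO hxG))
    (min η (min (κ / 2) (κ * τ ^ 2))) (by positivity)
  refine ⟨u + w, hu.add hw hGO, fun x => ?_, fun x => ?_, ?_⟩
  · simpa using (hw.norm_le x).trans (min_le_left _ _)
  · rw [Pi.add_apply, add_sub_cancel_left]
    by_cases hxG : x ∈ G
    · calc ‖w x‖ ≤ κ * τ ^ 2 :=
            (hw.norm_le x).trans ((min_le_right _ _).trans (min_le_right _ _))
        _ ≤ κ * infDist x Oᶜ ^ 2 := by
            gcongr
            exact hxG.le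
    · rw [(hw.eventuallyEq_zero x hxG).eq_of_nhds, Pi.zero_apply, norm_zero]
      positivity
  · have hsub : {x ∈ O | fderiv ℝ (u + w) x ∉ thickening κ E} ⊆ {x ∈ O | infDist x Oᶜ ≤ τ} ∪
        {x ∈ G | fderiv ℝ (u + w) x ∉ U ∩ thickening κ E} := by
      rintro x ⟨hxO, hx⟩
      rcases le_or_gt (infDist x Oᶜ) τ with h | h
      · exact .inl ⟨hxO, h⟩
      · exact .inr ⟨h, fun h' => hx h'.2⟩
    calc μ {x ∈ O | fderiv ℝ (u + w) x ∉ thickening κ E}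
        ≤ ENNReal.ofReal (κ / 2) + ENNReal.ofReal (κ / 2) :=
          (measure_mono hsub).trans <| (measure_union_le _ _).trans <| add_le_add hτκ <|
            hw.measure_le.trans
              (ENNReal.ofReal_le_ofReal ((min_le_right _ _).trans (min_le_left _ _)))
      _ = ENNReal.ofReal κ := by
          rw [← ENNReal.ofReal_add (half_pos hκ).le (half_pos hκ).le, add_halves]

/-- One step of the iteration, leading from `u` to `u'`: the gradient gets within `κ` of `E`, and
the maps within `δ'` of `u'`, which include the limit of the iteration, have difference quotients
close to the gradient of `u'`. -/
structure IsRefinement (μ : Measure V) (O : Set V) (E : Set (V →L[ℝ] W)) (κ : ℝ) (u : V → W) (δ : ℝ)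
    (u' : V → W) (δ' : ℝ) : Prop where
  radius_le : δ' ≤ δ / 2
  norm_sub_le : ∀ x, ‖u' x - u x‖ ≤ δ / 2
  norm_sub_le_infDist : ∀ x, ‖u' x - u x‖ ≤ κ * infDist x Oᶜ ^ 2
  measure_notMem_le : μ {x ∈ O | fderiv ℝ u' x ∉ thickening κ E} ≤ ENNReal.ofReal κ
  exists_diffQuot : ∃ n : ℕ, κ⁻¹ ≤ n ∧ ∀ v, (∀ x, ‖v x - u' x‖ ≤ δ') →
    μ {x ∈ O | 2 * κ ≤ ‖diffQuot v n x - fderiv ℝ u' x‖} ≤ ENNReal.ofReal κ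

variable [FiniteDimensional ℝ W] [μ.IsAddHaarMeasure]

lemma IsAdmissible.exists_isRefinement [Nontrivial V]
    (hUE : HasApproximationProperty U E) (hO : IsOpen O) (hOb : IsBounded O)
    (hu : IsAdmissible μ O U φ u) (hκ : 0 < κ) {δ : ℝ} (hδ : 0 < δ) :
    ∃ u' δ', (IsAdmissible μ O U φ u' ∧ 0 < δ') ∧ IsRefinement μ O E κ u δ u' δ' := by
  obtain ⟨u', hu', hδu, hdist, hE⟩ := hu.exists_near hUE hO hOb hκ (half_pos hδ)
  obtain ⟨C, hC⟩ := hu'.lipschitz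
  obtain ⟨n, δ', hn, hδ', hdiff⟩ := exists_measure_diffQuot_sub_fderiv_le (μ := μ) hOb hC hκ
  exact ⟨u', min (δ / 2) δ', ⟨hu', by positivity⟩, min_le_left _ _, hδu, hdist, hE, n, hn,
    fun v hv => hdiff v fun x => (hv x).trans (min_le_right _ _)⟩

lemma IsAdmissible.exists_seq_isRefinement [Nontrivial V]
    (hUE : HasApproximationProperty U E) (hO : IsOpen O) (hOb : IsBounded O)
    (hφ : IsAdmissible μ O U φ φ) {κ : ℕ → ℝ} (hκ : ∀ k, 0 < κ k) :
    ∃ (u : ℕ → V → W) (δ : ℕ → ℝ), u 0 = φ ∧ (∀ k, IsAdmissible μ O U φ (u k)) ∧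
      ∀ k, IsRefinement μ O E (κ k) (u k) (δ k) (u (k + 1)) (δ (k + 1)) := by
  choose! f g hfg hf using fun k u δ (h : IsAdmissible μ O U φ u ∧ 0 < δ) =>
    h.1.exists_isRefinement hUE hO hOb (hκ k) h.2
  let s : ℕ → (V → W) × ℝ := fun k => Nat.rec (φ, 1) (fun k p => (f k p.1 p.2, g k p.1 p.2)) k
  have hs : ∀ k, IsAdmissible μ O U φ (s k).1 ∧ 0 < (s k).2 := fun k => by
    induction k with
    | zero => exact ⟨hφ, one_pos⟩
    | succ k ih => exact hfg k _ _ ih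
  exact ⟨fun k => (s k).1, fun k => (s k).2, rfl, fun k => (hs k).1, fun k => hf k _ _ (hs k)⟩

/-- Weighting the closeness of `u` to `φ` by the square of the distance to `Oᶜ` makes `u - φ`
negligible to first order at the points outside `O`. -/
theorem exists_lipschitzWith_fderiv_mem [Nontrivial V] (hUE : HasApproximationProperty U E)
    (hE : IsClosed E) (hO : IsOpen O) (hOb : IsBounded O) {C : ℝ≥0} (hφ : LipschitzWith C φ)
    (hφU : ∀ᵐ x ∂μ, x ∈ O → HasGradientIn U φ x) :
    ∃ (u : V → W) (M : ℝ≥0), LipschitzWith M u ∧ (∀ x, ‖u x - φ x‖ ≤ infDist x Oᶜ ^ 2) ∧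
      ∀ᵐ x ∂μ, x ∈ O → fderiv ℝ u x ∈ E := by
  let κ : ℕ → ℝ := fun k => 1 / 2 / 2 ^ k
  have hκ : ∀ k, 0 < κ k := fun k => by positivity
  have hκsum : ∑' k, ENNReal.ofReal (κ k) ≠ ∞ := (summable_geometric_two' 1).tsum_ofReal_ne_top
  have hκ0 : Tendsto κ atTop (𝓝 0) := (summable_geometric_two' 1).tendsto_atTop_zero
  obtain ⟨u, δ, rfl, hu, href⟩ := IsAdmissible.exists_seq_isRefinement (μ := μ) hUE hO hOb
    ⟨⟨C, hφ⟩, fun _ _ => .rfl, hφU⟩ hκ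
  have hW : CompleteSpace W := FiniteDimensional.complete ℝ W
  choose v hv hvδ using fun x => exists_tendsto_of_dist_le_half (f := fun k => u k x)
    (fun k => (href k).radius_le) fun k => by
      simpa only [dist_comm (u k x), dist_eq_norm] using (href k).norm_sub_le x
  obtain ⟨R, hR⟩ := hUE.isBounded.exists_norm_le
  have hlip : LipschitzWith (max R.toNNReal C) v := .of_dist_le_mul fun x y =>
    le_of_tendsto' ((hv x).dist (hv y)) fun k => LipschitzWith.dist_le_mul
      ((hu k).lipschitzWith (fun L hL => (hR L hL).trans (R.le_coe_toNNReal.trans (by simp)))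
        (hφ.weaken (le_max_right _ _))) x y
  refine ⟨v, _, hlip, fun x => ?_, ?_⟩
  · rw [← dist_eq_norm, dist_comm]
    refine dist_le_of_le_geometric_two_of_tendsto₀ (f := fun k => u k x) (fun k => ?_) (hv x)
    rw [dist_comm, dist_eq_norm]
    exact ((href k).norm_sub_le_infDist x).trans_eq (by ring)
  · choose n hκn hn using fun k => (href k).exists_diffQuot
    have hntop : Tendsto n atTop atTop := tendsto_natCast_atTop_iff.1 <| tendsto_atTop_mono hκn <|
      tendsto_inv_nhdsGT_zero.comp (tendsto_nhdsWithin_iff.2 ⟨hκ0, .of_forall hκ⟩)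
    have hvu : ∀ k x, ‖v x - u (k + 1) x‖ ≤ δ (k + 1) := fun k x => by
      simpa only [dist_comm (u (k + 1) x), dist_eq_norm] using hvδ x (k + 1)
    filter_upwards [hlip.ae_differentiableAt,
      ae_eventually_notMem (ne_top_of_le_ne_top hκsum
        (ENNReal.tsum_le_tsum fun k => (href k).measure_notMem_le)),
      ae_eventually_notMem (ne_top_of_le_ne_top hκsum
        (ENNReal.tsum_le_tsum fun k => hn k v (hvu k)))] with x hx hxE hxn hxO
    exact fderiv_mem_of_tendsto_diffQuot hE hx hκ0 hntop
      (hxE.mono fun k hk => not_not.1 fun h => hk ⟨hxO, h⟩)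
      (hxn.mono fun k hk => not_le.1 fun h => hk ⟨hxO, h⟩)

end Iteration

/-! ### Boundary values -/

section BoundaryValues

lemma eq_of_norm_sub_le_infDist_sq {V W : Type*} [PseudoMetricSpace V] [NormedAddCommGroup W]
    {u g : V → W} {C : Set V} {x : V} (hx : x ∈ C) (hug : ∀ y, ‖u y - g y‖ ≤ infDist y C ^ 2) :
    u x = g x := by
  have := hug x
  rwa [infDist_zero_of_mem hx, zero_pow two_ne_zero, norm_le_zero_iff, sub_eq_zero] at this

lemma hasFDerivAt_of_norm_sub_le_infDist_sq {V W : Type*} [NormedAddCommGroup V]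
    [NormedSpace ℝ V] [NormedAddCommGroup W] [NormedSpace ℝ W] {u g : V → W} {g' : V →L[ℝ] W}
    {C : Set V} {x : V} (hx : x ∈ C) (hug : ∀ y, ‖u y - g y‖ ≤ infDist y C ^ 2)
    (hg : HasFDerivAt g g' x) : HasFDerivAt u g' x := by
  have hO : (fun y => u y - g y) =O[𝓝 x] fun y => ‖y - x‖ ^ 2 := by
    refine .of_bound 1 (.of_forall fun y => ?_)
    calc ‖u y - g y‖ ≤ infDist y C ^ 2 := hug y
      _ ≤ dist y x ^ 2 := by
        gcongr
        exacts [infDist_nonneg, infDist_le_dist_of_mem hx]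
      _ = 1 * ‖‖y - x‖ ^ 2‖ := by rw [dist_eq_norm, one_mul, norm_pow, norm_norm]
  have hdiff : HasFDerivAt (fun y => u y - g y) (0 : V →L[ℝ] W) x := by
    refine .of_isLittleO ?_
    simpa [eq_of_norm_sub_le_infDist_sq hx hug] using
      hO.trans_isLittleO (Asymptotics.isLittleO_pow_sub_sub x one_lt_two)
  exact (hdiff.add hg).congr_fderiv (zero_add g') |>.congr_of_eventuallyEq
    (.of_forall fun y => (sub_add_cancel (u y) (g y)).symm)

lemma ae_contDiffAt_of_contDiffOn_closure {V W ι : Type*} [NormedAddCommGroup V]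
    [NormedSpace ℝ V] [NormedAddCommGroup W] [NormedSpace ℝ W] [MeasurableSpace V] {μ : Measure V}
    {n : WithTop ℕ∞} {φ : V → W} {Ω : Set V} {ω : ι → Set V} (hω : ∀ i, IsOpen (ω i))
    (hφ : ∀ i, ContDiffOn ℝ n φ (closure (ω i))) (hΩ : μ (Ω \ ⋃ i, ω i) = 0) :
    ∀ᵐ x ∂μ, x ∈ Ω → ContDiffAt ℝ n φ x := by
  filter_upwards [measure_eq_zero_iff_ae_notMem.1 hΩ] with x hx hxΩ
  obtain ⟨i, hi⟩ : ∃ i, x ∈ ω i := mem_iUnion.1 (by_contra fun hxω => hx ⟨hxΩ, hxω⟩)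
  exact (hφ i).contDiffAt (mem_of_superset ((hω i).mem_nhds hi) subset_closure)

variable {V W : Type*} [NormedAddCommGroup V] [NormedSpace ℝ V] [FiniteDimensional ℝ V]
  [Nontrivial V] [MeasurableSpace V] [BorelSpace V] [NormedAddCommGroup W] [NormedSpace ℝ W]
  [FiniteDimensional ℝ W] {μ : Measure V} [μ.IsAddHaarMeasure] {U E : Set (V →L[ℝ] W)} {Ω : Set V}

theorem exists_lipschitzWith_eqOn_frontier_fderiv_mem (hUE : HasApproximationProperty U E)
    (hE : IsClosed E) (hΩ : IsOpen Ω) (hΩb : IsBounded Ω) {C : ℝ≥0} {φ : V → W}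
    (hφ : LipschitzOnWith C φ (closure Ω))
    (hφ₁ : ∀ᵐ x ∂μ, x ∈ Ω → fderiv ℝ φ x ∉ E → ContDiffAt ℝ 1 φ x)
    (hφUE : ∀ᵐ x ∂μ, x ∈ Ω → DifferentiableAt ℝ φ x ∧ fderiv ℝ φ x ∈ E ∪ U) :
    ∃ (u : V → W) (M : ℝ≥0), LipschitzWith M u ∧ EqOn u φ (frontier Ω) ∧
      ∀ᵐ x ∂μ, x ∈ Ω → DifferentiableAt ℝ u x ∧ fderiv ℝ u x ∈ E := by
  obtain ⟨g, hg, hgφ⟩ := hφ.extend_finite_dimension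
  have hgφΩ : ∀ x ∈ Ω, φ =ᶠ[𝓝 x] g := fun x hx =>
    (hgφ.mono subset_closure).eventuallyEq_of_mem (hΩ.mem_nhds hx)
  let O := Ω ∩ {x | HasGradientIn U g x}
  have hOΩ : O ⊆ Ω := inter_subset_left
  obtain ⟨u, M, hu, hug, huE⟩ := exists_lipschitzWith_fderiv_mem (μ := μ) hUE hE
    (hΩ.inter (isOpen_setOf_hasGradientIn hUE.isOpen g)) (hΩb.subset hOΩ) hg
    (.of_forall fun x hx => hx.2)
  refine ⟨u, M, hu, fun x hx => ?_, ?_⟩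
  · rw [hΩ.frontier_eq] at hx
    have hxO : x ∈ Oᶜ := fun h => hx.2 (hOΩ h)
    exact (eq_of_norm_sub_le_infDist_sq hxO hug).trans (hgφ hx.1).symm
  filter_upwards [huE, hφ₁, hφUE, hu.ae_differentiableAt] with x hxE hx₁ hxUE hdiff hxΩ
  refine ⟨hdiff, ?_⟩
  by_cases hxO : x ∈ O
  · exact hxE hxO
  obtain ⟨hφx, hφxUE⟩ := hxUE hxΩ
  have hφxE : fderiv ℝ φ x ∈ E := by_contra fun hφxE =>
    hxO ⟨hxΩ, HasGradientIn.congr ⟨hx₁ hxΩ hφxE, hφxUE.resolve_left hφxE⟩ (hgφΩ x hxΩ).symm⟩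
  have hgx := hφx.hasFDerivAt.congr_of_eventuallyEq (hgφΩ x hxΩ).symm
  rwa [(hasFDerivAt_of_norm_sub_le_infDist_sq hxO hug hgx).fderiv]

end BoundaryValues

/-! ### Laminates in conformal coordinates -/

section Conformal

/-- The singular values of the real linear map `z ↦ a z + b z̄` on `ℂ`, where `p = (a, b)`. -/
noncomputable def singularValues (p : ℂ × ℂ) : ℝ × ℝ := (|‖p.1‖ - ‖p.2‖|, ‖p.1‖ + ‖p.2‖)

/-- The pairs `(a, b)` for which `z ↦ a z + b z̄` has rank at most one. -/
def rankOneCone : Set (ℂ × ℂ) := {p | ‖p.1‖ = ‖p.2‖}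

/-- Finite-order laminates of pairs whose singular values lie in `K`. -/
abbrev IsLaminate (K : Set (ℝ × ℝ)) : ℂ × ℂ → Prop :=
  LaminationHull rankOneCone (singularValues ⁻¹' K)

/-- The diagonal matrix with entries `x` and `y`, up to a reflection, in the coordinates
`z ↦ a z + b z̄`. -/
noncomputable def diagonal (x y : ℝ) : ℂ × ℂ := (((x + y) / 2 : ℝ), ((y - x) / 2 : ℝ))

variable {K : Set (ℝ × ℝ)} {p q : ℂ × ℂ} {x y x₀ y₀ : ℝ}

lemma singularValues_smul (r : ℝ) (p : ℂ × ℂ) :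
    singularValues (r • p) = |r| • singularValues p := by
  simp only [singularValues, Prod.smul_fst, Prod.smul_snd, norm_smul, Real.norm_eq_abs, ← mul_sub,
    ← mul_add, abs_mul, abs_abs, Prod.smul_mk, smul_eq_mul]

lemma singularValues_fst_nonneg (p : ℂ × ℂ) : 0 ≤ (singularValues p).1 := abs_nonneg _

lemma singularValues_fst_le_snd (p : ℂ × ℂ) : (singularValues p).1 ≤ (singularValues p).2 :=
  (abs_sub _ _).trans_eq (by rw [abs_norm, abs_norm, singularValues])

lemma singularValues_diagonal (hx : 0 ≤ x) (hxy : x ≤ y) :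
    singularValues (diagonal x y) = (x, y) := by
  simp only [singularValues, diagonal, Complex.norm_real]
  rw [Real.norm_of_nonneg (by linarith), Real.norm_of_nonneg (by linarith)]
  exact Prod.ext ((congrArg abs (by ring)).trans (abs_of_nonneg hx)) (by ring)

lemma continuous_singularValues : Continuous singularValues := by
  unfold singularValues
  fun_prop

lemma IsLaminate.of_norm_eq (h : IsLaminate K p) (h₁ : ‖q.1‖ = ‖p.1‖) (h₂ : ‖q.2‖ = ‖p.2‖) :
    IsLaminate K q := by
  have hrot : ∀ a b : ℂ, ‖b‖ = ‖a‖ → ∃ ζ : ℂ, ‖ζ‖ = 1 ∧ ζ * a = b := fun a b hab => by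
    rcases eq_or_ne a 0 with rfl | ha
    · exact ⟨1, norm_one, by simpa [eq_comm] using hab⟩
    · exact ⟨b / a, by rw [norm_div, hab, div_self (norm_ne_zero_iff.2 ha)], div_mul_cancel₀ b ha⟩
  obtain ⟨ζ, hζ, hζq⟩ := hrot _ _ h₁
  obtain ⟨ω, hω, hωq⟩ := hrot _ _ h₂
  have hq : (LinearMap.mulLeft ℝ ζ).prodMap (LinearMap.mulLeft ℝ ω) p = q := Prod.ext hζq hωq
  refine hq ▸ h.map _ (fun r hr => ?_) fun r hr => ?_
  · simpa [rankOneCone, hζ, hω] using hr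
  · simpa [singularValues, hζ, hω] using hr

lemma IsLaminate.swap (h : IsLaminate K p) : IsLaminate K p.swap := by
  refine h.map (LinearEquiv.prodComm ℝ ℂ ℂ).toLinearMap (fun r hr => ?_) fun r hr => ?_
  · simpa [rankOneCone, eq_comm] using hr
  · simpa [singularValues, abs_sub_comm, add_comm] using hr

lemma IsLaminate.of_singularValues_eq (h : IsLaminate K p)
    (hpq : singularValues q = singularValues p) : IsLaminate K q := by
  obtain ⟨hdiff, hsum⟩ := Prod.ext_iff.1 hpq
  simp only [singularValues] at hdiff hsum
  rcases abs_eq_abs.1 hdiff with hdiff | hdiff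
  · exact h.of_norm_eq (by linarith) (by linarith)
  · exact h.swap.of_norm_eq (by simp only [Prod.fst_swap]; linarith)
      (by simp only [Prod.snd_swap]; linarith)

lemma isLaminate_diagonal_of_mem (h : (x, y) ∈ K) (hx : 0 ≤ x) (hxy : x ≤ y) :
    IsLaminate K (diagonal x y) :=
  .base (by rwa [mem_preimage, singularValues_diagonal hx hxy])

lemma IsLaminate.of_diagonal_singularValues
    (h : IsLaminate K (diagonal (singularValues p).1 (singularValues p).2)) : IsLaminate K p :=
  h.of_singularValues_eq (singularValues_diagonal (singularValues_fst_nonneg p)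
    (singularValues_fst_le_snd p)).symm

lemma IsLaminate.diagonal_neg (h : IsLaminate K (diagonal x y)) :
    IsLaminate K (diagonal (-x) y) := by
  convert h.swap using 1
  ext <;> simp [diagonal] <;> ring

lemma IsLaminate.diagonal_comm (h : IsLaminate K (diagonal x y)) :
    IsLaminate K (diagonal y x) := by
  refine h.of_norm_eq ?_ ?_
  · simp only [diagonal, add_comm]
  · simp only [diagonal, Complex.norm_real, ← neg_sub y x, neg_div, norm_neg]

lemma IsLaminate.diagonal_of_abs_le_left (h : IsLaminate K (diagonal x₀ y)) (hx : |x| ≤ x₀) :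
    IsLaminate K (diagonal x y) := by
  have hline : ∀ s, diagonal s y = diagonal 0 y + s • ((1 / 2 : ℂ), (-(1 / 2) : ℂ)) := fun s => by
    ext <;> simp [diagonal] <;> ring
  have hneg := h.diagonal_neg
  rw [hline] at h hneg ⊢
  refine LaminationHull.add_smul (fun r => ?_) hneg h (neg_le_of_abs_le hx) (le_of_abs_le hx)
  simp [rankOneCone]

lemma IsLaminate.diagonal_of_abs_le (h : IsLaminate K (diagonal x₀ y₀)) (hx : |x| ≤ x₀)
    (hy : |y| ≤ y₀) : IsLaminate K (diagonal x y) :=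
  ((h.diagonal_of_abs_le_left hx).diagonal_comm.diagonal_of_abs_le_left hy).diagonal_comm

/-- Up to rotations, the hyperbola `(x + θ) (y - θ) = κ` is the rank-one line
`b ↦ (b - θ + i √κ, b)`. -/
lemma IsLaminate.diagonal_of_hyperbola {x₁ y₁ x₂ y₂ θ κ : ℝ} (h₁ : IsLaminate K (diagonal x₁ y₁))
    (h₂ : IsLaminate K (diagonal x₂ y₂)) (hκ : 0 ≤ κ) (hκ₁ : (x₁ + θ) * (y₁ - θ) = κ)
    (hκ₂ : (x₂ + θ) * (y₂ - θ) = κ) (hκxy : (x + θ) * (y - θ) = κ) (hy₁ : y₁ - x₁ ≤ y - x)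
    (hy₂ : y - x ≤ y₂ - x₂) : IsLaminate K (diagonal x y) := by
  let line (b : ℝ) : ℂ × ℂ := (⟨-θ, √κ⟩, 0) + b • (1, 1)
  have hfst : ∀ x y : ℝ, (x + θ) * (y - θ) = κ →
      ‖(line ((y - x) / 2)).1‖ = ‖(diagonal x y).1‖ := fun x y hxy => by
    rw [← sq_eq_sq₀ (norm_nonneg _) (norm_nonneg _), Complex.sq_norm, Complex.sq_norm]
    simp only [line, diagonal, Complex.normSq_apply, Prod.fst_add, Prod.smul_fst, Complex.add_re,
      Complex.add_im, Complex.smul_re, Complex.smul_im, Complex.one_re, Complex.one_im,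
      Complex.ofReal_re, Complex.ofReal_im, smul_eq_mul]
    linear_combination Real.mul_self_sqrt hκ - hxy
  have hsnd : ∀ x y : ℝ, (line ((y - x) / 2)).2 = (diagonal x y).2 := fun x y => by
    simp [line, diagonal]
  refine IsLaminate.of_norm_eq (p := line ((y - x) / 2)) ?_ (hfst x y hκxy).symm
    (congrArg norm (hsnd x y)).symm
  exact LaminationHull.add_smul (fun r => by simp [rankOneCone])
    (h₁.of_norm_eq (hfst x₁ y₁ hκ₁) (congrArg norm (hsnd x₁ y₁)))
    (h₂.of_norm_eq (hfst x₂ y₂ hκ₂) (congrArg norm (hsnd x₂ y₂))) (by linarith) (by linarith)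

lemma IsLaminate.diagonal_of_mul_le (h : IsLaminate K (diagonal x₀ y₀)) (hx₀ : 0 ≤ x₀)
    (hx : 0 ≤ x) (hxy : x ≤ y) (hy : y ≤ y₀) (hmul : x * y ≤ x₀ * y₀) :
    IsLaminate K (diagonal x y) := by
  rcases le_or_gt x x₀ with hxx₀ | hx₀x
  · exact h.diagonal_of_abs_le (by rwa [abs_of_nonneg hx]) (by rwa [abs_of_nonneg (hx.trans hxy)])
  have hxpos : 0 < x := hx₀.trans_lt hx₀x
  have hyz : y ≤ x₀ * y₀ / x := by rwa [le_div_iff₀ hxpos, mul_comm]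
  have hzy : x₀ * y₀ / x ≤ y₀ := by
    rw [div_le_iff₀ hxpos, mul_comm]
    gcongr
    exact hx.trans (hxy.trans hy)
  have hz : IsLaminate K (diagonal x (x₀ * y₀ / x)) := by
    refine h.diagonal_comm.diagonal_of_hyperbola (θ := 0) (κ := x₀ * y₀) h
      (mul_nonneg hx₀ (hx.trans (hxy.trans hy))) (by ring) (by ring) ?_ (by linarith) (by linarith)
    rw [add_zero, sub_zero, mul_div_cancel₀ _ hxpos.ne']
  exact hz.diagonal_of_abs_le (abs_of_nonneg hx).le (by rwa [abs_of_nonneg (hx.trans hxy)])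

lemma IsLaminate.smul_mem_interior (hp : singularValues p ∈ K) (hpos : 0 < (singularValues p).1)
    {s : ℝ} (hs₀ : 0 ≤ s) (hs₁ : s < 1) : s • p ∈ interior {q | IsLaminate K q} := by
  set x₀ := (singularValues p).1 with hx₀
  set y₀ := (singularValues p).2 with hy₀
  have hy₀pos : 0 < y₀ := hpos.trans_le (singularValues_fst_le_snd p)
  refine mem_interior.2 ⟨singularValues ⁻¹' {r | r.2 < y₀ ∧ r.1 * r.2 < x₀ * y₀}, fun q hq => ?_,
    IsOpen.preimage continuous_singularValues ?_, ?_⟩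
  · have hdiag := isLaminate_diagonal_of_mem (x := x₀) (y := y₀) hp hpos.le
      (singularValues_fst_le_snd p)
    exact (hdiag.diagonal_of_mul_le hpos.le (singularValues_fst_nonneg q)
      (singularValues_fst_le_snd q) hq.1.le hq.2.le).of_diagonal_singularValues
  · exact (isOpen_lt continuous_snd continuous_const).inter
      (isOpen_lt (continuous_fst.mul continuous_snd) continuous_const)
  · rw [mem_preimage, singularValues_smul, abs_of_nonneg hs₀, mem_ofPred_eq, Prod.smul_fst,
      Prod.smul_snd, ← hx₀, ← hy₀, smul_eq_mul, smul_eq_mul]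
    constructor
    · nlinarith
    · calc s * x₀ * (s * y₀) = (s * s) * (x₀ * y₀) := by ring
        _ < 1 * (x₀ * y₀) := by gcongr; nlinarith
        _ = x₀ * y₀ := one_mul _

end Conformal

/-! ### Separation by the functions `f_θ` -/

section Separation

section Maximizers

variable {Θ X : Type*} [TopologicalSpace Θ] [TopologicalSpace X] {f : Θ → X → ℝ} {K : Set X}

lemma isClosed_setOf_exists_isMaxOn (hf : Continuous (Function.uncurry f)) (hK : IsCompact K)
    {C : Set X} (hC : IsClosed C) : IsClosed {θ | ∃ p ∈ K, p ∈ C ∧ IsMaxOn (f θ) K p} := by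
  have : CompactSpace K := isCompact_iff_compactSpace.1 hK
  have hclosed : IsClosed {z : Θ × K | z.2.1 ∈ C ∧ ∀ q ∈ K, f z.1 q ≤ f z.1 z.2} := by
    simp only [ofPred_and, ofPred_forall]
    refine (hC.preimage (by fun_prop)).inter (isClosed_biInter fun q _ => isClosed_le ?_ ?_)
    · exact hf.comp (by fun_prop : Continuous fun z : Θ × K => (z.1, q))
    · exact hf.comp (by fun_prop : Continuous fun z : Θ × K => (z.1, (z.2 : X)))
  convert isClosedMap_fst_of_compactSpace _ hclosed
  ext θ
  exact ⟨fun ⟨p, hp, hpC, hmax⟩ => ⟨(θ, ⟨p, hp⟩), ⟨hpC, hmax⟩, rfl⟩,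
    fun ⟨⟨_, p⟩, ⟨hpC, hmax⟩, h⟩ => h ▸ ⟨p, p.2, hpC, hmax⟩⟩

lemma exists_isMaxOn_le_and_ge (hf : Continuous (Function.uncurry f)) (hK : IsCompact K)
    {S : Set Θ} (hS : IsPreconnected S) {g : X → ℝ} (hg : Continuous g) {c : ℝ} {θ₀ θ₁ : Θ}
    (hθ₀ : θ₀ ∈ S) (hθ₁ : θ₁ ∈ S) (h₀ : ∃ p ∈ K, g p ≤ c ∧ IsMaxOn (f θ₀) K p)
    (h₁ : ∃ q ∈ K, c ≤ g q ∧ IsMaxOn (f θ₁) K q) :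
    ∃ θ ∈ S, (∃ p ∈ K, g p ≤ c ∧ IsMaxOn (f θ) K p) ∧ ∃ q ∈ K, c ≤ g q ∧ IsMaxOn (f θ) K q := by
  have hne : K.Nonempty := h₀.imp fun _ h => h.1
  refine isPreconnected_closed_iff.1 hS _ _
    (isClosed_setOf_exists_isMaxOn hf hK (isClosed_le hg continuous_const))
    (isClosed_setOf_exists_isMaxOn hf hK (isClosed_le continuous_const hg)) (fun θ _ => ?_)
    ⟨θ₀, hθ₀, h₀⟩ ⟨θ₁, hθ₁, h₁⟩
  obtain ⟨p, hp, hmax⟩ := hK.exists_isMaxOn hne (hf.uncurry_left θ).continuousOn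
  exact (le_total (g p) c).imp (fun h => ⟨p, hp, h, hmax⟩) fun h => ⟨p, hp, h, hmax⟩

end Maximizers

lemma ftheta_eq (θ : ℝ) (p : ℝ × ℝ) : ftheta θ p = (p.1 + θ) * (p.2 - θ) + θ ^ 2 := by
  unfold ftheta
  ring

lemma continuous_uncurry_ftheta : Continuous (Function.uncurry ftheta) := by
  unfold Function.uncurry ftheta
  fun_prop

variable {K : Set (ℝ × ℝ)} {x y θ : ℝ} {p q P : ℝ × ℝ}

/-- The point `(x, y)` lies below the arc of a level set of `f_θ` joining two points of `K`. -/
lemma isLaminate_diagonal_of_ftheta_le (hK : K ⊆ {p | 0 < p.1 ∧ p.1 ≤ p.2}) (hp : p ∈ K)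
    (hq : q ∈ K) (hθ : 0 ≤ θ) (hθp : θ < p.2) (hpy : p.2 ≤ y) (hyq : y ≤ q.2)
    (hpq : ftheta θ p = ftheta θ q) (hx : 0 ≤ x) (hxp : ftheta θ (x, y) ≤ ftheta θ p) :
    IsLaminate K (diagonal x y) := by
  obtain ⟨hp₁, hp₁₂⟩ := hK hp
  obtain ⟨hq₁, hq₁₂⟩ := hK hq
  simp only [ftheta_eq, add_left_inj, add_le_add_iff_right] at hpq hxp
  have hyθ : 0 < y - θ := by linarith
  set κ := (p.1 + θ) * (p.2 - θ)
  have hκ : 0 ≤ κ := mul_nonneg (by linarith) (by linarith)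
  set z := κ / (y - θ) - θ
  have hz : (z + θ) * (y - θ) = κ := by rw [sub_add_cancel, div_mul_cancel₀ _ hyθ.ne']
  have hxz : x ≤ z := by rwa [le_sub_iff_add_le, le_div_iff₀ hyθ]
  have hzp : z ≤ p.1 := by
    rw [sub_le_iff_le_add, div_le_iff₀ hyθ]
    exact mul_le_mul_of_nonneg_left (by linarith) (by linarith)
  have hqz : q.1 ≤ z := by
    rw [le_sub_iff_add_le, le_div_iff₀ hyθ]
    calc (q.1 + θ) * (y - θ) ≤ (q.1 + θ) * (q.2 - θ) := by
          gcongr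
      _ = κ := hpq.symm
  exact ((isLaminate_diagonal_of_mem hp hp₁.le hp₁₂).diagonal_of_hyperbola
    (isLaminate_diagonal_of_mem hq hq₁.le hq₁₂) hκ rfl hpq.symm hz (by linarith)
    (by linarith)).diagonal_of_abs_le (by rwa [abs_of_nonneg hx]) (abs_of_nonneg (by linarith)).le

lemma lt_snd_of_isMaxOn_ftheta (hK : K ⊆ {p | 0 < p.1 ∧ p.1 ≤ p.2}) (hP : P ∈ K) (hp : p ∈ K)
    (hpP : p.2 < P.2) (hθ : θ ∈ Icc 0 P.2) (hmax : IsMaxOn (ftheta θ) K p) : θ < p.2 := by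
  have hPp : ftheta θ P ≤ ftheta θ p := hmax hP
  simp only [ftheta_eq, add_le_add_iff_right] at hPp
  have hp₁ : 0 < p.1 + θ := add_pos_of_pos_of_nonneg (hK hp).1 hθ.1
  have hP₁ : 0 < P.1 + θ := add_pos_of_pos_of_nonneg (hK hP).1 hθ.1
  rcases hθ.2.eq_or_lt with rfl | hθP
  · nlinarith
  · nlinarith

lemma isMaxOn_ftheta_snd (hK : K ⊆ {p | 0 < p.1 ∧ p.1 ≤ p.2}) (hPmax : IsMaxOn Prod.snd K P) :
    IsMaxOn (ftheta P.2) K P := fun q hq => by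
  have hq₂ : q.2 ≤ P.2 := hPmax hq
  obtain ⟨hq₁, hq₁₂⟩ := hK hq
  simp only [mem_ofPred_eq, ftheta_eq]
  nlinarith

/-- As `θ` increases from `0` to `P.2`, the maximizers of `f_θ` move up to `P`, so that for some `θ`
there are maximizers both below and above height `y`, unless all those of `f_0` lie above. -/
theorem isLaminate_diagonal_of_forall_ftheta_le (hKc : IsCompact K)
    (hK : K ⊆ {p | 0 < p.1 ∧ p.1 ≤ p.2}) (hP : P ∈ K) (hPmax : IsMaxOn Prod.snd K P)
    (hx : 0 ≤ x) (hxy : x ≤ y) (hy : y < P.2)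
    (hsep : ∀ θ ∈ Icc 0 P.2, ∀ p ∈ K, IsMaxOn (ftheta θ) K p → ftheta θ (x, y) ≤ ftheta θ p) :
    IsLaminate K (diagonal x y) := by
  have h₀ : (0 : ℝ) ∈ Icc 0 P.2 := left_mem_Icc.2 ((hx.trans hxy).trans hy.le)
  obtain ⟨r, hr, hrmax⟩ := hKc.exists_isMaxOn ⟨P, hP⟩
    (continuous_uncurry_ftheta.uncurry_left 0).continuousOn
  rcases le_total r.2 y with hry | hyr
  · obtain ⟨θ, hθ, ⟨p, hp, hpy, hpmax⟩, q, hq, hyq, hqmax⟩ := exists_isMaxOn_le_and_ge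
      continuous_uncurry_ftheta hKc isPreconnected_Icc continuous_snd h₀
      (right_mem_Icc.2 (h₀.1.trans h₀.2)) ⟨r, hr, hry, hrmax⟩
      ⟨P, hP, hy.le, isMaxOn_ftheta_snd hK hPmax⟩
    exact isLaminate_diagonal_of_ftheta_le hK hp hq hθ.1
      (lt_snd_of_isMaxOn_ftheta hK hP hp (hpy.trans_lt hy) hθ hpmax) hpy hyq
      (le_antisymm (hqmax hp) (hpmax hq)) hx (hsep θ hθ p hp hpmax)
  · refine (isLaminate_diagonal_of_mem hr (hK hr).1.le (hK hr).2).diagonal_of_mul_le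
      (hK hr).1.le hx hxy hyr ?_
    simpa [ftheta] using hsep 0 h₀ r hr hrmax

end Separation

/-! ### The rank one convex hull of an isotropic set -/

section RankOneConvexHull

/-- The `2 × 2` matrices of rank at most one. -/
def rankOneMatrices : Set (Matrix (Fin 2) (Fin 2) ℝ) := {ξ | ξ.det = 0}

/-- The matrices whose singular values lie in `K`. -/
def isotropicSet (K : Set (ℝ × ℝ)) : Set (Matrix (Fin 2) (Fin 2) ℝ) := {ξ | (lam1 ξ, lam2 ξ) ∈ K}

/-- Conformal coordinates: the matrix of the real linear map `z ↦ a z + b z̄` corresponds to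
`(a, b)`. -/
noncomputable def conformal : Matrix (Fin 2) (Fin 2) ℝ ≃ₗ[ℝ] ℂ × ℂ where
  toFun ξ :=
    (⟨(ξ 0 0 + ξ 1 1) / 2, (ξ 1 0 - ξ 0 1) / 2⟩, ⟨(ξ 0 0 - ξ 1 1) / 2, (ξ 0 1 + ξ 1 0) / 2⟩)
  invFun p := !![p.1.re + p.2.re, p.2.im - p.1.im; p.1.im + p.2.im, p.1.re - p.2.re]
  map_add' ξ η := by
    refine Prod.ext (Complex.ext ?_ ?_) (Complex.ext ?_ ?_) <;> simp <;> ring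
  map_smul' c ξ := by
    refine Prod.ext (Complex.ext ?_ ?_) (Complex.ext ?_ ?_) <;> simp <;> ring
  left_inv ξ := by
    ext i j
    fin_cases i <;> fin_cases j <;> simp <;> ring
  right_inv p := by
    refine Prod.ext (Complex.ext ?_ ?_) (Complex.ext ?_ ?_) <;> simp <;> ring

variable {K : Set (ℝ × ℝ)} {E : Set (Matrix (Fin 2) (Fin 2) ℝ)} {ξ : Matrix (Fin 2) (Fin 2) ℝ}
  {P : ℝ × ℝ}

lemma continuous_conformal : Continuous conformal :=
  LinearMap.continuous_of_finiteDimensional conformal.toLinearMap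

lemma det_eq_conformal (ξ : Matrix (Fin 2) (Fin 2) ℝ) :
    ξ.det = ‖(conformal ξ).1‖ ^ 2 - ‖(conformal ξ).2‖ ^ 2 := by
  simp only [Complex.sq_norm, Complex.normSq_apply, conformal, LinearEquiv.coe_mk,
    LinearMap.coe_mk, AddHom.coe_mk, Matrix.det_fin_two]
  ring

lemma frobSq_eq_conformal (ξ : Matrix (Fin 2) (Fin 2) ℝ) :
    frobSq ξ = 2 * (‖(conformal ξ).1‖ ^ 2 + ‖(conformal ξ).2‖ ^ 2) := by
  simp only [Complex.sq_norm, Complex.normSq_apply, conformal, LinearEquiv.coe_mk,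
    LinearMap.coe_mk, AddHom.coe_mk, frobSq, Fin.sum_univ_two]
  ring

lemma abs_det_eq_singularValues (ξ : Matrix (Fin 2) (Fin 2) ℝ) :
    |ξ.det| = (singularValues (conformal ξ)).1 * (singularValues (conformal ξ)).2 := by
  rw [det_eq_conformal, sq_sub_sq, abs_mul, abs_of_nonneg (by positivity), mul_comm,
    singularValues]

lemma frobSq_eq_singularValues (ξ : Matrix (Fin 2) (Fin 2) ℝ) :
    frobSq ξ = (singularValues (conformal ξ)).1 ^ 2 + (singularValues (conformal ξ)).2 ^ 2 := by
  rw [frobSq_eq_conformal, singularValues, sq_abs]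
  ring

lemma singularValues_conformal (ξ : Matrix (Fin 2) (Fin 2) ℝ) :
    singularValues (conformal ξ) = (lam1 ξ, lam2 ξ) := by
  have hnonneg := singularValues_fst_nonneg (conformal ξ)
  have hle := singularValues_fst_le_snd (conformal ξ)
  unfold lam1 lam2
  rw [frobSq_eq_singularValues, abs_det_eq_singularValues]
  set σ := singularValues (conformal ξ)
  rw [show σ.1 ^ 2 + σ.2 ^ 2 + 2 * (σ.1 * σ.2) = (σ.2 + σ.1) ^ 2 by ring,
    show σ.1 ^ 2 + σ.2 ^ 2 - 2 * (σ.1 * σ.2) = (σ.2 - σ.1) ^ 2 by ring,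
    Real.sqrt_sq (by linarith), Real.sqrt_sq (by linarith)]
  exact Prod.ext (by ring) (by ring)

lemma mem_isotropicSet : ξ ∈ isotropicSet K ↔ singularValues (conformal ξ) ∈ K := by
  rw [singularValues_conformal]
  rfl

lemma isClosed_isotropicSet (hK : IsClosed K) : IsClosed (isotropicSet K) := by
  simp only [isotropicSet, ← singularValues_conformal]
  exact hK.preimage (continuous_singularValues.comp continuous_conformal)

lemma conformal_mem_rankOneCone : conformal ξ ∈ rankOneCone ↔ ξ ∈ rankOneMatrices := by
  rw [rankOneMatrices, mem_ofPred_eq, det_eq_conformal, sub_eq_zero,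
    sq_eq_sq₀ (norm_nonneg _) (norm_nonneg _)]
  rfl

lemma exists_eq_vecMulVec_of_det_eq_zero (h : ξ.det = 0) :
    ∃ w v : Fin 2 → ℝ, ξ = Matrix.vecMulVec w v := by
  obtain ⟨v, hv, hξv⟩ := Matrix.exists_mulVec_eq_zero_iff.2 h
  have hker : ∀ i, ξ i 0 * v 0 + ξ i 1 * v 1 = 0 := fun i => by
    simpa [Matrix.mulVec, dotProduct] using congrFun hξv i
  have hnorm : v 0 ^ 2 + v 1 ^ 2 ≠ 0 := fun h0 => hv <| by
    obtain ⟨h₀, h₁⟩ := (add_eq_zero_iff_of_nonneg (sq_nonneg _) (sq_nonneg _)).1 h0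
    ext i
    fin_cases i
    exacts [pow_eq_zero_iff two_ne_zero |>.1 h₀, pow_eq_zero_iff two_ne_zero |>.1 h₁]
  refine ⟨fun i => (v 0 * ξ i 1 - v 1 * ξ i 0) / (v 0 ^ 2 + v 1 ^ 2), ![-v 1, v 0], ?_⟩
  ext i j
  rw [Matrix.vecMulVec_apply, div_mul_eq_mul_div, eq_div_iff hnorm]
  fin_cases j
  · simp only [Fin.zero_eta, Matrix.cons_val_zero]
    linear_combination v 0 * hker i
  · simp only [Fin.mk_one, Matrix.cons_val_one, Matrix.cons_val_fin_one]
    linear_combination v 1 * hker i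

lemma rank_eq_one_of_det_eq_zero (h : ξ.det = 0) (hne : ξ ≠ 0) : ξ.rank = 1 := by
  obtain ⟨w, v, rfl⟩ := exists_eq_vecMulVec_of_det_eq_zero h
  refine le_antisymm (Matrix.rank_vecMulVec_le w v) (Nat.one_le_iff_ne_zero.2 fun h0 => hne ?_)
  rw [Matrix.rank, Submodule.finrank_eq_zero, LinearMap.range_eq_bot] at h0
  exact Matrix.toLin'.map_eq_zero_iff.1 h0

lemma det_eq_zero_of_rank_eq_one (h : ξ.rank = 1) : ξ.det = 0 := by
  by_contra hne
  have := Matrix.rank_of_det_ne_zero hne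
  simp [h] at this

lemma laminationConvex_rcHull : LaminationConvex rankOneMatrices (rcHull E) := by
  rintro B hB C hC hBC _ ⟨α, β, hα, hβ, hαβ, rfl⟩
  obtain rfl : β = 1 - α := by linarith
  rcases eq_or_ne B C with rfl | hne
  · rwa [← add_smul, hαβ, one_smul]
  intro f hf hfE
  calc f (α • B + (1 - α) • C) ≤ α * f B + (1 - α) * f C :=
        hf B C α ⟨hα, by linarith⟩ (rank_eq_one_of_det_eq_zero hBC (sub_ne_zero.2 hne))
    _ ≤ 0 := add_nonpos (mul_nonpos_of_nonneg_of_nonpos hα (hB f hf hfE))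
        (mul_nonpos_of_nonneg_of_nonpos hβ (hC f hf hfE))

lemma subset_rcHull : E ⊆ rcHull E := fun ξ hξ _ _ hfE => hfE ξ hξ

lemma rcHull_empty : rcHull ∅ = ∅ := by
  refine eq_empty_of_forall_notMem fun ξ hξ => ?_
  have := hξ (fun _ => 1) (fun _ _ t _ _ => by simp) (by simp)
  norm_num at this

lemma rankOneConvex_det_add {g : ℂ × ℂ → ℝ} (hg : ConvexOn ℝ univ g) (r c : ℝ) :
    RankOneConvex fun ξ => r * ξ.det + g (conformal ξ) - c := by
  intro ξ η t ht hrank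
  have hdet : (t • ξ + (1 - t) • η).det
      = t * ξ.det + (1 - t) * η.det - t * (1 - t) * (ξ - η).det := by
    simp only [Matrix.det_fin_two, Matrix.add_apply, Matrix.smul_apply, Matrix.sub_apply,
      smul_eq_mul]
    ring
  have hconv := hg.2 (mem_univ (conformal ξ)) (mem_univ (conformal η)) ht.1
    (sub_nonneg.2 ht.2) (by ring)
  rw [smul_eq_mul, smul_eq_mul] at hconv
  simp only [hdet, det_eq_zero_of_rank_eq_one hrank, map_add, map_smul]
  linarith

lemma det_add_le_of_mem_rcHull {g : ℂ × ℂ → ℝ} (hg : ConvexOn ℝ univ g) {r c : ℝ}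
    (hE : ∀ η ∈ E, r * η.det + g (conformal η) ≤ c) (hξ : ξ ∈ rcHull E) :
    r * ξ.det + g (conformal ξ) ≤ c :=
  sub_nonpos.1 <| hξ _ (rankOneConvex_det_add hg r c) fun η hη => sub_nonpos.2 (hE η hη)

lemma singularValues_snd_le_of_mem_rcHull {b : ℝ} (hb : ∀ q ∈ K, q.2 ≤ b)
    (hξ : ξ ∈ rcHull (isotropicSet K)) : (singularValues (conformal ξ)).2 ≤ b := by
  have hg : ConvexOn ℝ univ fun p => (singularValues p).2 :=
    (convexOn_univ_norm.comp_linearMap (LinearMap.fst ℝ ℂ ℂ)).add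
      (convexOn_univ_norm.comp_linearMap (LinearMap.snd ℝ ℂ ℂ))
  simpa using det_add_le_of_mem_rcHull (r := 0) (c := b) hg
    (fun η hη => by simpa using hb _ (mem_isotropicSet.1 hη)) hξ

/-- On singular values, `f_θ` is the maximum of two functions which are rank one convex as
functions of the matrix, up to the constant `θ ^ 2`. -/
lemma ftheta_singularValues_le_iff {θ c : ℝ} (hc : θ ^ 2 ≤ c) (p : ℂ × ℂ) :
    ftheta θ (singularValues p) ≤ c ↔ ‖p.1‖ ^ 2 - ‖p.2‖ ^ 2 + 2 * θ * ‖p.2‖ ≤ c ∧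
      ‖p.2‖ ^ 2 - ‖p.1‖ ^ 2 + 2 * θ * ‖p.1‖ ≤ c := by
  have hle : ∀ {α β : ℝ}, 0 ≤ α → α ≤ β → β ^ 2 - α ^ 2 + 2 * θ * α ≤ c →
      α ^ 2 - β ^ 2 + 2 * θ * β ≤ c := fun {α β} hα hαβ h => by
    rcases le_total θ (α + β) with hθ | hθ
    · nlinarith
    · nlinarith [mul_nonneg (show 0 ≤ α - β + θ by linarith) (sub_nonneg.2 hθ)]
  have h₁ := norm_nonneg p.1
  have h₂ := norm_nonneg p.2
  simp only [ftheta, singularValues]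
  rcases le_total ‖p.2‖ ‖p.1‖ with h | h
  · rw [abs_of_nonneg (sub_nonneg.2 h)]
    refine ⟨fun h' => ⟨by linarith, hle h₂ h (by linarith)⟩, fun h' => by linarith [h'.1]⟩
  · rw [abs_of_nonpos (sub_nonpos.2 h)]
    refine ⟨fun h' => ⟨hle h₁ h (by linarith), by linarith⟩, fun h' => by linarith [h'.2]⟩

lemma ftheta_singularValues_le_of_mem_rcHull {θ c : ℝ} (hθ : 0 ≤ θ) (hc : θ ^ 2 ≤ c)
    (hE : ∀ η ∈ E, ftheta θ (singularValues (conformal η)) ≤ c) (hξ : ξ ∈ rcHull E) :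
    ftheta θ (singularValues (conformal ξ)) ≤ c := by
  simp only [ftheta_singularValues_le_iff hc] at hE ⊢
  have hfst : ConvexOn ℝ univ fun p : ℂ × ℂ => 2 * θ * ‖p.1‖ :=
    (convexOn_univ_norm.comp_linearMap (LinearMap.fst ℝ ℂ ℂ)).smul (by positivity)
  have hsnd : ConvexOn ℝ univ fun p : ℂ × ℂ => 2 * θ * ‖p.2‖ :=
    (convexOn_univ_norm.comp_linearMap (LinearMap.snd ℝ ℂ ℂ)).smul (by positivity)
  have h₁ := det_add_le_of_mem_rcHull (r := 1) (c := c) hsnd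
    (fun η hη => by linarith [(hE η hη).1, det_eq_conformal η]) hξ
  have h₂ := det_add_le_of_mem_rcHull (r := -1) (c := c) hfst
    (fun η hη => by linarith [(hE η hη).2, det_eq_conformal η]) hξ
  rw [det_eq_conformal] at h₁ h₂
  exact ⟨by linarith, by linarith⟩

lemma isLaminate_of_mem_rcHull (hKc : IsCompact K) (hK : K ⊆ {p | 0 < p.1 ∧ p.1 ≤ p.2})
    (hP : P ∈ K) (hPmax : IsMaxOn Prod.snd K P) (hξ : ξ ∈ rcHull (isotropicSet K))
    (hlt : (singularValues (conformal ξ)).2 < P.2) : IsLaminate K (conformal ξ) := by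
  refine (isLaminate_diagonal_of_forall_ftheta_le hKc hK hP hPmax (singularValues_fst_nonneg _)
    (singularValues_fst_le_snd _) hlt fun θ hθ p _ hmax => ?_).of_diagonal_singularValues
  have hθp : θ ^ 2 ≤ ftheta θ p :=
    calc θ ^ 2 ≤ (P.1 + θ) * (P.2 - θ) + θ ^ 2 := le_add_of_nonneg_left
          (mul_nonneg (add_nonneg (hK hP).1.le hθ.1) (sub_nonneg.2 hθ.2))
      _ = ftheta θ P := (ftheta_eq θ P).symm
      _ ≤ ftheta θ p := hmax hP
  exact ftheta_singularValues_le_of_mem_rcHull hθ.1 hθp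
    (fun η hη => hmax (mem_isotropicSet.1 hη)) hξ

lemma laminationHull_of_isLaminate {s : ℝ} (h : IsLaminate K (conformal ξ)) :
    LaminationHull rankOneMatrices ((s • ·) '' isotropicSet K) (s • ξ) := by
  have := h.map (s • conformal.symm.toLinearMap) (D' := rankOneMatrices)
    (S' := (s • ·) '' isotropicSet K) (fun d hd => ?_) fun d hd => ?_
  · simpa using this
  · rw [← conformal_mem_rankOneCone]
    simp only [rankOneCone, mem_ofPred_eq] at hd ⊢
    simp [hd]
  · exact ⟨conformal.symm d, mem_isotropicSet.2 (by simpa using hd), rfl⟩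

lemma singularValues_snd_lt_of_mem_interior_rcHull {b : ℝ} (hb₀ : 0 < b) (hb : ∀ q ∈ K, q.2 ≤ b)
    (hξ : ξ ∈ interior (rcHull (isotropicSet K))) : (singularValues (conformal ξ)).2 < b := by
  have hnhds : ∀ᶠ η in 𝓝 ξ, η ∈ rcHull (isotropicSet K) := mem_interior_iff_mem_nhds.1 hξ
  have htendsto : Tendsto (fun s : ℝ => s • ξ) (𝓝[>] 1) (𝓝 ξ) :=
    Tendsto.mono_left (by simpa using (tendsto_id (x := 𝓝 (1 : ℝ))).smul_const ξ) nhdsWithin_le_nhds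
  obtain ⟨s, hsξ, hs : 1 < s⟩ :=
    ((htendsto.eventually hnhds).and self_mem_nhdsWithin).exists
  have hle := singularValues_snd_le_of_mem_rcHull hb hsξ
  rw [map_smul, singularValues_smul, Prod.smul_snd, smul_eq_mul, abs_of_pos (by linarith)] at hle
  nlinarith

theorem eventually_laminationHull_image_smul (hKc : IsCompact K)
    (hK : K ⊆ {p | 0 < p.1 ∧ p.1 ≤ p.2}) (hξ : ξ ∈ interior (rcHull (isotropicSet K))) :
    ∀ᶠ s in 𝓝 (1 : ℝ), LaminationHull rankOneMatrices ((s • ·) '' isotropicSet K) ξ := by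
  have hKne : K.Nonempty := by
    by_contra! hK0
    subst hK0
    simpa [isotropicSet, rcHull_empty] using interior_subset hξ
  obtain ⟨P, hP, hPmax⟩ := hKc.exists_isMaxOn hKne continuous_snd.continuousOn
  have hlt := singularValues_snd_lt_of_mem_interior_rcHull
    ((hK hP).1.trans_le (hK hP).2) hPmax hξ
  have hnhds : ∀ᶠ η in 𝓝 ξ, η ∈ rcHull (isotropicSet K) := mem_interior_iff_mem_nhds.1 hξ
  have htendsto : Tendsto (fun s : ℝ => s⁻¹ • ξ) (𝓝 1) (𝓝 ξ) := by
    simpa using (tendsto_inv₀ (one_ne_zero' ℝ)).smul_const ξ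
  have hU : ∀ᶠ s in 𝓝 (1 : ℝ), s⁻¹ • ξ ∈ rcHull (isotropicSet K) ∧
      (singularValues (conformal (s⁻¹ • ξ))).2 < P.2 := by
    have hσ : Continuous fun η => (singularValues (conformal η)).2 :=
      continuous_snd.comp (continuous_singularValues.comp continuous_conformal)
    exact htendsto.eventually (hnhds.and (hσ.continuousAt.eventually (gt_mem_nhds hlt)))
  filter_upwards [hU, lt_mem_nhds one_pos] with s ⟨hsξ, hslt⟩ hs
  simpa [smul_inv_smul₀ (ne_of_gt hs)] using
    laminationHull_of_isLaminate (s := s) (isLaminate_of_mem_rcHull hKc hK hP hPmax hsξ hslt)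

lemma smul_mem_interior_rcHull (hK : K ⊆ {p | 0 < p.1 ∧ p.1 ≤ p.2}) (hξ : ξ ∈ isotropicSet K)
    {s : ℝ} (hs₀ : 0 ≤ s) (hs₁ : s < 1) : s • ξ ∈ interior (rcHull (isotropicSet K)) := by
  rw [mem_isotropicSet] at hξ
  refine interior_maximal (s := rcHull (isotropicSet K))
    (t := conformal ⁻¹' interior {q | IsLaminate K q}) (fun η hη => ?_)
    (isOpen_interior.preimage continuous_conformal) ?_
  · have := laminationHull_of_isLaminate (s := 1) (interior_subset hη)
    rw [one_smul] at this
    exact this.mem laminationConvex_rcHull (by simpa using subset_rcHull)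
  · rw [mem_preimage, map_smul]
    exact IsLaminate.smul_mem_interior hξ (hK hξ).1 hs₀ hs₁

end RankOneConvexHull

/-! ### Gradients of planar maps -/

section Gradients

/-- A `2 × 2` matrix as a continuous linear endomorphism of the plane; its inverse turns Fréchet
derivatives into gradient matrices. -/
noncomputable def matrixCLE :
    Matrix (Fin 2) (Fin 2) ℝ ≃L[ℝ] ((Fin 2 → ℝ) →L[ℝ] (Fin 2 → ℝ)) :=
  (Matrix.toLin'.trans LinearMap.toContinuousLinearMap).toContinuousLinearEquiv

lemma matrixCLE_apply (ξ : Matrix (Fin 2) (Fin 2) ℝ) (x : Fin 2 → ℝ) :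
    matrixCLE ξ x = ξ.mulVec x :=
  rfl

lemma matrixCLE_symm_apply (L : (Fin 2 → ℝ) →L[ℝ] (Fin 2 → ℝ)) (i j : Fin 2) :
    matrixCLE.symm L i j = L (Pi.single j 1) i := by
  obtain ⟨ξ, rfl⟩ := matrixCLE.surjective L
  rw [matrixCLE.symm_apply_apply, matrixCLE_apply, Matrix.mulVec_single_one, Matrix.col_apply]

variable {K : Set (ℝ × ℝ)} {ξ : Matrix (Fin 2) (Fin 2) ℝ}
  {L : (Fin 2 → ℝ) →L[ℝ] (Fin 2 → ℝ)}

lemma matrixCLE_mem_rankOneDirections (h : ξ ∈ rankOneMatrices) :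
    matrixCLE ξ ∈ rankOneDirections (Fin 2 → ℝ) (Fin 2 → ℝ) := by
  obtain ⟨w, v, rfl⟩ := exists_eq_vecMulVec_of_det_eq_zero h
  refine ⟨(dotProductBilin ℝ ℝ v).toContinuousLinearMap, w, ?_⟩
  ext x i
  simp [matrixCLE_apply, Matrix.vecMulVec_mulVec, mul_comm]

lemma matrixCLE_symm_mem_rankOneMatrices
    (h : L ∈ rankOneDirections (Fin 2 → ℝ) (Fin 2 → ℝ)) :
    matrixCLE.symm L ∈ rankOneMatrices := by
  obtain ⟨n, a, rfl⟩ := h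
  simp only [rankOneMatrices, mem_ofPred_eq, Matrix.det_fin_two, matrixCLE_symm_apply,
    ContinuousLinearMap.smulRight_apply, Pi.smul_apply, smul_eq_mul]
  ring

lemma isBounded_preimage_rcHull (hKc : IsCompact K) :
    IsBounded (matrixCLE.symm ⁻¹' rcHull (isotropicSet K)) := by
  obtain ⟨b, hb⟩ := (hKc.image continuous_snd).bddAbove
  have hcont : Continuous (matrixCLE ∘ conformal.symm) := matrixCLE.continuous.comp
    (LinearMap.continuous_of_finiteDimensional conformal.symm.toLinearMap)
  refine ((isCompact_closedBall 0 b).image hcont).isBounded.subset fun L hL => ?_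
  refine ⟨conformal (matrixCLE.symm L), ?_, by simp⟩
  have hle := singularValues_snd_le_of_mem_rcHull (forall_mem_image.1 hb) hL
  rw [mem_closedBall_zero_iff, Prod.norm_def]
  exact (max_le (le_add_of_nonneg_right (norm_nonneg _))
    (le_add_of_nonneg_left (norm_nonneg _))).trans hle

lemma eventually_mapsTo_smul_thickening {X : Type*} [NormedAddCommGroup X] [NormedSpace ℝ X]
    {E : Set X} (hE : IsBounded E) {ε : ℝ} (hε : 0 < ε) :
    ∀ᶠ s in 𝓝 (1 : ℝ), MapsTo (s • ·) E (thickening ε E) := by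
  obtain ⟨M, hM⟩ := hE.exists_norm_le
  have hcont : Continuous fun s : ℝ => ‖s - 1‖ * M := by fun_prop
  filter_upwards [hcont.continuousAt.eventually (gt_mem_nhds (by simpa using hε))] with s hs L hL
  refine mem_thickening_iff.2 ⟨L, hL, ?_⟩
  calc dist (s • L) L = ‖s - 1‖ * ‖L‖ := by rw [dist_eq_norm, ← norm_smul, sub_smul, one_smul]
    _ ≤ ‖s - 1‖ * M := by gcongr; exact hM L hL
    _ < ε := hs

theorem hasApproximationProperty_rcHull (hKc : IsCompact K)
    (hK : K ⊆ {p | 0 < p.1 ∧ p.1 ≤ p.2}) :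
    HasApproximationProperty (matrixCLE.symm ⁻¹' interior (rcHull (isotropicSet K)))
      (matrixCLE.symm ⁻¹' isotropicSet K) where
  isOpen := isOpen_interior.preimage matrixCLE.symm.continuous
  isBounded := (isBounded_preimage_rcHull hKc).subset (preimage_mono interior_subset)
  laminationConvex := laminationConvex_rcHull.interior.preimage matrixCLE.symm.toLinearMap
    fun _ => matrixCLE_symm_mem_rankOneMatrices
  laminationHull ε hε L hL := by
    have hbdd := (isBounded_preimage_rcHull hKc).subset (preimage_mono subset_rcHull)
    obtain ⟨s, ⟨hhull, hthick, hs₀⟩, hs₁⟩ :=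
      ((((eventually_laminationHull_image_smul hKc hK hL).and
        ((eventually_mapsTo_smul_thickening hbdd hε).and
          (lt_mem_nhds one_pos))).filter_mono nhdsWithin_le_nhds).and self_mem_nhdsWithin :
        ∀ᶠ s in 𝓝[<] (1 : ℝ), _).exists
    have := hhull.map matrixCLE.toLinearMap (fun _ => matrixCLE_mem_rankOneDirections)
      (S' := matrixCLE.symm ⁻¹' interior (rcHull (isotropicSet K)) ∩
        thickening ε (matrixCLE.symm ⁻¹' isotropicSet K)) ?_
    · simpa using this
    · rintro _ ⟨η, hη, rfl⟩
      refine ⟨?_, ?_⟩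
      · simpa using smul_mem_interior_rcHull hK hη hs₀.le hs₁
      · simpa using hthick (x := matrixCLE η) (by simpa using hη)

end Gradients

end DifferentialInclusion

open DifferentialInclusion

theorem existence_isotropic_differential_inclusion_general
    (Ω : Set (Fin 2 → ℝ)) (hΩo : IsOpen Ω) (hΩb : Bornology.IsBounded Ω)
    (K : Set (ℝ × ℝ)) (hKc : IsCompact K)
    (hKsub : K ⊆ {p : ℝ × ℝ | 0 < p.1 ∧ p.1 ≤ p.2})
    (E : Set (Matrix (Fin 2) (Fin 2) ℝ))
    (hE : E = {ξ | (lam1 ξ, lam2 ξ) ∈ K})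
    (φ : (Fin 2 → ℝ) → (Fin 2 → ℝ))
    (hφlip : ∃ C : NNReal, LipschitzOnWith C φ (closure Ω))
    (hφ₁ : ∀ᵐ x ∂MeasureTheory.volume, x ∈ Ω → gradMatrix φ x ∉ E → ContDiffAt ℝ 1 φ x)
    (hDφ : ∀ᵐ x ∂MeasureTheory.volume, x ∈ Ω →
      DifferentiableAt ℝ φ x ∧ gradMatrix φ x ∈ E ∪ interior (rcHull E)) :
    ∃ u : (Fin 2 → ℝ) → (Fin 2 → ℝ),
      (∃ C : NNReal, LipschitzOnWith C u (closure Ω)) ∧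
      (∀ x ∈ frontier Ω, u x = φ x) ∧
      (∀ᵐ x ∂MeasureTheory.volume, x ∈ Ω →
        DifferentiableAt ℝ u x ∧ gradMatrix u x ∈ E) := by
  subst hE
  obtain ⟨C, hC⟩ := hφlip
  obtain ⟨u, M, hu, huφ, huE⟩ := exists_lipschitzWith_eqOn_frontier_fderiv_mem
    (hasApproximationProperty_rcHull hKc hKsub)
    ((isClosed_isotropicSet hKc.isClosed).preimage matrixCLE.symm.continuous) hΩo hΩb hC hφ₁ hDφ
  exact ⟨u, ⟨M, hu.lipschitzOnWith⟩, huφ, huE⟩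

/-- existence of solutions to the differential inclusion `Du ∈ E` with
piecewise C¹ boundary datum `φ` satisfying `Dφ ∈ E ∪ int E^{rc}` a.e. -/
theorem existence_isotropic_differential_inclusion
    (Ω : Set (Fin 2 → ℝ)) (hΩo : IsOpen Ω) (hΩb : Bornology.IsBounded Ω)
    (K : Set (ℝ × ℝ)) (hKc : IsCompact K)
    (hKsub : K ⊆ {p : ℝ × ℝ | 0 < p.1 ∧ p.1 ≤ p.2})
    (E : Set (Matrix (Fin 2) (Fin 2) ℝ))
    (hE : E = {ξ | (lam1 ξ, lam2 ξ) ∈ K})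
    (φ : (Fin 2 → ℝ) → (Fin 2 → ℝ))
    (hφlip : ∃ C : NNReal, LipschitzOnWith C φ (closure Ω))
    (hφpiec : ∃ ω : ℕ → Set (Fin 2 → ℝ),
      (∀ i, IsOpen (ω i) ∧ ω i ⊆ Ω ∧ ContDiffOn ℝ 1 φ (closure (ω i))) ∧
      MeasureTheory.volume (Ω \ ⋃ i, ω i) = 0)
    (hDφ : ∀ᵐ x ∂MeasureTheory.volume, x ∈ Ω →
      DifferentiableAt ℝ φ x ∧ gradMatrix φ x ∈ E ∪ interior (rcHull E)) :
    ∃ u : (Fin 2 → ℝ) → (Fin 2 → ℝ),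
      (∃ C : NNReal, LipschitzOnWith C u (closure Ω)) ∧
      (∀ x ∈ frontier Ω, u x = φ x) ∧
      (∀ᵐ x ∂MeasureTheory.volume, x ∈ Ω →
        DifferentiableAt ℝ u x ∧ gradMatrix u x ∈ E) := by
  obtain ⟨ω, hω, hΩω⟩ := hφpiec
  have hφ₁ := ae_contDiffAt_of_contDiffOn_closure (fun i => (hω i).1) (fun i => (hω i).2.2) hΩω
  exact existence_isotropic_differential_inclusion_general Ω hΩo hΩb K hKc hKsub E hE φ hφlip
    (hφ₁.mono fun x hx hxΩ _ => hx hxΩ) hDφ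
end

section
/- Let K ⊂ {(x,y) ∈ ℝ² : 0 < x ≤ y} be a compact set and let E := {ξ ∈ ℝ^{2×2} : (λ₁(ξ), λ₂(ξ)) ∈ K}. Then E^{rc} = E^{pc} = Pco E. -/
open scoped BigOperators

/-!
Only the inclusions of `pcHull E` in `rcHull E` and in `Pco E` need work. Both hulls are stable
under rank one segments, so it suffices to treat a set `G ⊇ E` with this stability; the set `C` of
pairs `p` such that every matrix with singular values `p` lies in `G` inherits it.

In the coordinates `(y - x, x * y)` on ordered pairs, `C` is convex and downward closed: explicit
rank one segments of matrices move the pair of singular values as required. On the other hand,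
under `ℝ² ≅ ℂ` a matrix acts as `v ↦ z * v + w * conj v`, with determinant `‖z‖² - ‖w‖²` and
singular values `|‖z‖ - ‖w‖|` and `‖z‖ + ‖w‖`. According to the sign of the determinant, the
function `α * (λ₂ - λ₁) + β * λ₁ * λ₂` with `0 ≤ α` therefore agrees with one of the polyconvex
functions `β * det + 2 * α * ‖w‖` and `-β * det + 2 * α * ‖z‖`. Together with the convex function
`λ₂` they separate a pair outside the downward closed convex set generated by `K`.
-/

section ConvexAnalysis

theorem convexHull_eq_iUnion_image_stdSimplex (𝕜 : Type*) {V : Type*} [Field 𝕜] [LinearOrder 𝕜]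
    [IsStrictOrderedRing 𝕜] [AddCommGroup V] [Module 𝕜 V] [FiniteDimensional 𝕜 V] (Q : Set V) :
    convexHull 𝕜 Q = ⋃ n ∈ Finset.range (Module.finrank 𝕜 V + 2),
      (fun p : (Fin n → 𝕜) × (Fin n → V) ↦ ∑ i, p.1 i • p.2 i) ''
        (stdSimplex 𝕜 (Fin n) ×ˢ Set.univ.pi fun _ ↦ Q) := by
  refine Set.Subset.antisymm (fun x hx ↦ ?_) (fun x hx ↦ ?_)
  · obtain ⟨ι, _, v, c, hv, hind, hc, hc1, rfl⟩ := eq_pos_convex_span_of_mem_convexHull hx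
    have hcard : Fintype.card ι < Module.finrank 𝕜 V + 2 :=
      Nat.lt_succ_of_le <| hind.card_le_finrank_succ.trans <|
        Nat.succ_le_succ (Submodule.finrank_le _)
    let e := Fintype.equivFin ι
    refine Set.mem_biUnion (Finset.mem_coe.2 (Finset.mem_range.2 hcard))
      ⟨(c ∘ e.symm, v ∘ e.symm), ⟨⟨fun i ↦ (hc _).le, ?_⟩, fun i _ ↦ hv ⟨_, rfl⟩⟩, ?_⟩
    · exact (Equiv.sum_comp e.symm c).trans hc1
    · exact Equiv.sum_comp e.symm fun i ↦ c i • v i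
  · simp only [Set.mem_iUnion] at hx
    obtain ⟨n, -, ⟨c, v⟩, ⟨hc, hv⟩, rfl⟩ := hx
    exact (convex_convexHull 𝕜 Q).sum_mem (fun i _ ↦ hc.1 i) hc.2
      fun i _ ↦ subset_convexHull 𝕜 Q (hv i (Set.mem_univ i))

variable {V : Type*} [AddCommGroup V] [Module ℝ V] [FiniteDimensional ℝ V] [TopologicalSpace V]
  [IsTopologicalAddGroup V] [ContinuousSMul ℝ V] {Q : Set V}

theorem isCompact_convexHull_of_isCompact (hQ : IsCompact Q) : IsCompact (convexHull ℝ Q) := by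
  rw [convexHull_eq_iUnion_image_stdSimplex]
  exact Finset.isCompact_biUnion _ fun n _ ↦
    ((isCompact_stdSimplex ℝ (Fin n)).prod (isCompact_univ_pi fun _ ↦ hQ)).image (by fun_prop)

theorem exists_mem_convexHull_ge [LocallyConvexSpace ℝ V] [PartialOrder V] [IsOrderedAddMonoid V]
    [PosSMulMono ℝ V] [ClosedIciTopology V] (hQ : IsCompact Q) {p : V}
    (h : ∀ f : StrongDual ℝ V, (∀ x, 0 ≤ x → 0 ≤ f x) → ∃ q ∈ Q, f p ≤ f q) :
    ∃ q ∈ convexHull ℝ Q, p ≤ q := by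
  by_contra! hne
  obtain ⟨f, u, v, hfQ, huv, hfp⟩ := geometric_hahn_banach_compact_closed
    (convex_convexHull ℝ Q) (isCompact_convexHull_of_isCompact hQ) (convex_Ici p) isClosed_Ici
    (Set.disjoint_left.2 hne)
  have f_nonneg : ∀ x, 0 ≤ x → 0 ≤ f x := by
    intro x hx
    by_contra! hneg
    obtain ⟨n, hn⟩ := Archimedean.arch (f p - v) (neg_pos.2 hneg)
    have := hfp (p + n • x) (le_add_of_nonneg_right (nsmul_nonneg hx n))
    rw [map_add, map_nsmul] at this
    rw [smul_neg] at hn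
    linarith
  obtain ⟨q, hq, hpq⟩ := h f f_nonneg
  linarith [hfQ q (subset_convexHull ℝ Q hq), hfp p Set.self_mem_Ici]

end ConvexAnalysis

section RankAndDet

theorem rank_eq_zero_iff_eq_zero {m n R : Type*} [Fintype n] [Field R]
    {A : Matrix m n R} : A.rank = 0 ↔ A = 0 := by
  classical
  rw [Matrix.rank, Submodule.finrank_eq_zero, LinearMap.range_eq_bot,
    ← Matrix.toLin'_apply', LinearEquiv.map_eq_zero_iff]

theorem rank_lt_card_iff_det_eq_zero {n R : Type*} [Fintype n] [DecidableEq n] [Field R]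
    {A : Matrix n n R} : A.rank < Fintype.card n ↔ A.det = 0 := by
  refine ⟨fun h ↦ by_contra fun hA ↦ h.ne (Matrix.rank_of_det_ne_zero hA), fun h ↦ ?_⟩
  refine A.rank_le_card_width.lt_of_ne fun hrank ↦ ?_
  have htop : LinearMap.range A.mulVecLin = ⊤ :=
    Submodule.eq_top_of_finrank_eq (hrank.trans (Module.finrank_fintype_fun_eq_card R).symm)
  have hunit : IsUnit A := Matrix.mulVec_surjective_iff_isUnit.1 (LinearMap.range_eq_top.1 htop)
  exact ((Matrix.isUnit_iff_isUnit_det A).1 hunit).ne_zero h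

theorem rank_eq_one_iff_of_fin_two {R : Type*} [Field R] {A : Matrix (Fin 2) (Fin 2) R} :
    A.rank = 1 ↔ A.det = 0 ∧ A ≠ 0 := by
  rw [← rank_lt_card_iff_det_eq_zero, Ne, ← rank_eq_zero_iff_eq_zero, Fintype.card_fin]
  omega

theorem det_smul_add_smul_of_fin_two {R : Type*} [CommRing R] (A B : Matrix (Fin 2) (Fin 2) R)
    {a b : R} (hab : a + b = 1) :
    (a • A + b • B).det = a * A.det + b * B.det - a * b * (A - B).det := by
  obtain rfl := eq_sub_of_add_eq' hab
  simp only [Matrix.det_fin_two, Matrix.add_apply, Matrix.sub_apply, Matrix.smul_apply,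
    smul_eq_mul]
  ring

end RankAndDet

section Hulls

variable {E G : Set (Matrix (Fin 2) (Fin 2) ℝ)}

/-- Lamination convexity: stability under rank one segments, where the condition
`rank (ξ - η) ≤ 1` is expressed by a vanishing determinant. -/
def LaminationConvex (G : Set (Matrix (Fin 2) (Fin 2) ℝ)) : Prop :=
  ∀ ⦃ξ⦄, ξ ∈ G → ∀ ⦃η⦄, η ∈ G → (ξ - η).det = 0 → segment ℝ ξ η ⊆ G

theorem laminationConvex_rcHull (E : Set (Matrix (Fin 2) (Fin 2) ℝ)) :
    LaminationConvex (rcHull E) := by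
  rintro ξ hξ η hη hdet _ ⟨a, b, ha, hb, hab, rfl⟩ f hf hfE
  have hfξ := hξ f hf hfE
  have hfη := hη f hf hfE
  obtain rfl := eq_sub_of_add_eq' hab
  rcases eq_or_ne ξ η with rfl | hne
  · rwa [← add_smul, hab, one_smul]
  · calc f (a • ξ + (1 - a) • η)
        ≤ a * f ξ + (1 - a) * f η :=
          hf ξ η a ⟨ha, sub_nonneg.1 hb⟩ (rank_eq_one_iff_of_fin_two.2 ⟨hdet, sub_ne_zero.2 hne⟩)
      _ ≤ 0 := add_nonpos (mul_nonpos_of_nonneg_of_nonpos ha hfξ)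
          (mul_nonpos_of_nonneg_of_nonpos hb hfη)

theorem PolyconvexSet.laminationConvex (hG : PolyconvexSet G) : LaminationConvex G := by
  rintro ξ hξ η hη hdet _ ⟨a, b, ha, hb, hab, rfl⟩
  have hdet_combo := det_smul_add_smul_of_fin_two ξ η hab
  rw [hdet, mul_zero, sub_zero] at hdet_combo
  simpa [Fin.sum_univ_five] using
    hG ![ξ, η, η, η, η] ![a, b, 0, 0, 0] (by simp [Fin.forall_fin_succ, hξ, hη])
      (by simp [Fin.forall_fin_succ, ha, hb]) (by simpa [Fin.sum_univ_five] using hab)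
      (by simp [Fin.sum_univ_five, hdet_combo])

theorem laminationConvex_Pco (E : Set (Matrix (Fin 2) (Fin 2) ℝ)) : LaminationConvex (Pco E) :=
  fun _ hξ _ hη hdet _ hζ A hA ↦ hA.1.laminationConvex (hξ A hA) (hη A hA) hdet hζ

theorem PolyconvexFun.rankOneConvex {f : Matrix (Fin 2) (Fin 2) ℝ → ℝ} (hf : PolyconvexFun f) :
    RankOneConvex f := by
  obtain ⟨g, hg, hfg⟩ := hf
  intro ξ η t ht hrank
  have hdet := det_smul_add_smul_of_fin_two ξ η (add_sub_cancel t 1)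
  rw [(rank_eq_one_iff_of_fin_two.1 hrank).1, mul_zero, sub_zero] at hdet
  simpa [hfg, hdet] using hg.2 (Set.mem_univ (ξ, ξ.det)) (Set.mem_univ (η, η.det)) ht.1
    (sub_nonneg.2 ht.2) (add_sub_cancel t 1)

theorem polyconvexSet_pcHull (E : Set (Matrix (Fin 2) (Fin 2) ℝ)) :
    PolyconvexSet (pcHull E) := by
  intro ξ t hξ ht ht1 hdet f hf hfE
  have hfξ : ∀ i, f (ξ i) ≤ 0 := fun i ↦ hξ i f hf hfE
  obtain ⟨g, hg, hfg⟩ := hf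
  have hsum : ∑ i, t i • (ξ i, (ξ i).det) = (∑ i, t i • ξ i, (∑ i, t i • ξ i).det) := by
    rw [← hdet]
    ext1 <;> simp [Prod.fst_sum, Prod.snd_sum]
  calc f (∑ i, t i • ξ i)
      = g (∑ i, t i • (ξ i, (ξ i).det)) := by rw [hfg, hsum]
    _ ≤ ∑ i, t i • g (ξ i, (ξ i).det) :=
        hg.map_sum_le (fun i _ ↦ ht i) ht1 fun i _ ↦ Set.mem_univ _
    _ ≤ 0 := Finset.sum_nonpos fun i _ ↦
        mul_nonpos_of_nonneg_of_nonpos (ht i) (hfg (ξ i) ▸ hfξ i)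

theorem subset_rcHull (E : Set (Matrix (Fin 2) (Fin 2) ℝ)) : E ⊆ rcHull E :=
  fun ξ hξ _ _ hfE ↦ hfE ξ hξ

theorem subset_pcHull (E : Set (Matrix (Fin 2) (Fin 2) ℝ)) : E ⊆ pcHull E :=
  fun ξ hξ _ _ hfE ↦ hfE ξ hξ

theorem subset_Pco (E : Set (Matrix (Fin 2) (Fin 2) ℝ)) : E ⊆ Pco E :=
  Set.subset_sInter fun _ hA ↦ hA.2

theorem rcHull_subset_pcHull (E : Set (Matrix (Fin 2) (Fin 2) ℝ)) : rcHull E ⊆ pcHull E :=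
  fun _ hξ f hf ↦ hξ f hf.rankOneConvex

theorem Pco_subset_pcHull (E : Set (Matrix (Fin 2) (Fin 2) ℝ)) : Pco E ⊆ pcHull E :=
  Set.sInter_subset_of_mem ⟨polyconvexSet_pcHull E, subset_pcHull E⟩

theorem mul_det_add_le_of_mem_pcHull {ξ : Matrix (Fin 2) (Fin 2) ℝ}
    {h : Matrix (Fin 2) (Fin 2) ℝ → ℝ} {c M : ℝ} (hξ : ξ ∈ pcHull E)
    (hh : ConvexOn ℝ Set.univ h) (hE : ∀ η ∈ E, c * η.det + h η ≤ M) :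
    c * ξ.det + h ξ ≤ M := by
  have hsnd : ConvexOn ℝ Set.univ fun p : Matrix (Fin 2) (Fin 2) ℝ × ℝ ↦ c * p.2 :=
    (c • LinearMap.snd ℝ (Matrix (Fin 2) (Fin 2) ℝ) ℝ).convexOn convex_univ
  have hfst : ConvexOn ℝ Set.univ fun p : Matrix (Fin 2) (Fin 2) ℝ × ℝ ↦ h p.1 :=
    hh.comp_linearMap (LinearMap.fst ℝ (Matrix (Fin 2) (Fin 2) ℝ) ℝ)
  have := hξ (fun η ↦ c * η.det + h η + -M)
    ⟨_, (hsnd.add hfst).add_const (-M), fun _ ↦ rfl⟩ fun η hη ↦ by linarith [hE η hη]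
  linarith

theorem pcHull_empty : pcHull ∅ = ∅ := by
  refine Set.eq_empty_of_forall_notMem fun ξ hξ ↦ ?_
  have : 0 * ξ.det + 0 ≤ -1 :=
    mul_det_add_le_of_mem_pcHull hξ (convexOn_const 0 convex_univ) (by simp)
  norm_num at this

end Hulls

section SingularValues

variable {ξ η : Matrix (Fin 2) (Fin 2) ℝ} {x y : ℝ}

/-- The pair `(λ₁(ξ), λ₂(ξ))` of singular values, in increasing order. -/
noncomputable def singularPair (ξ : Matrix (Fin 2) (Fin 2) ℝ) : ℝ × ℝ := (lam1 ξ, lam2 ξ)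

/-- The possible pairs of singular values of a matrix. -/
def orderedPairs : Set (ℝ × ℝ) := {p | 0 ≤ p.1 ∧ p.1 ≤ p.2}

theorem singularPair_eq (hx : 0 ≤ x) (hxy : x ≤ y) (hfrob : frobSq ξ = x ^ 2 + y ^ 2)
    (hdet : |ξ.det| = x * y) : singularPair ξ = (x, y) := by
  have hadd : √(frobSq ξ + 2 * |ξ.det|) = y + x := by
    rw [hfrob, hdet, ← Real.sqrt_sq (add_nonneg (hx.trans hxy) hx)]
    ring_nf
  have hsub : √(frobSq ξ - 2 * |ξ.det|) = y - x := by
    rw [hfrob, hdet, ← Real.sqrt_sq (sub_nonneg.2 hxy)]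
    ring_nf
  rw [singularPair, lam1, lam2, hadd, hsub]
  ring_nf

/-- Conformal coordinates: under `ℝ² ≅ ℂ`, the matrix with coordinates `(z, w)` acts as
`v ↦ z * v + w * conj v`. -/
noncomputable def conformalEquiv : Matrix (Fin 2) (Fin 2) ℝ ≃ₗ[ℝ] ℂ × ℂ where
  toFun ξ := (⟨(ξ 0 0 + ξ 1 1) / 2, (ξ 1 0 - ξ 0 1) / 2⟩,
    ⟨(ξ 0 0 - ξ 1 1) / 2, (ξ 1 0 + ξ 0 1) / 2⟩)
  invFun p := !![p.1.re + p.2.re, p.2.im - p.1.im; p.1.im + p.2.im, p.1.re - p.2.re]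
  map_add' ξ η := by apply Prod.ext <;> apply Complex.ext <;> simp <;> ring
  map_smul' c ξ := by apply Prod.ext <;> apply Complex.ext <;> simp <;> ring
  left_inv ξ := by ext i j; fin_cases i <;> fin_cases j <;> simp <;> ring
  right_inv p := by apply Prod.ext <;> apply Complex.ext <;> simp <;> ring

theorem det_eq_norm_sq_sub_norm_sq (ξ : Matrix (Fin 2) (Fin 2) ℝ) :
    ξ.det = ‖(conformalEquiv ξ).1‖ ^ 2 - ‖(conformalEquiv ξ).2‖ ^ 2 := by
  simp only [Complex.sq_norm, Complex.normSq_apply, conformalEquiv, LinearEquiv.coe_mk,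
    LinearMap.coe_mk, AddHom.coe_mk, Matrix.det_fin_two]
  ring

theorem frobSq_eq_norm_sq_add_norm_sq (ξ : Matrix (Fin 2) (Fin 2) ℝ) :
    frobSq ξ = 2 * (‖(conformalEquiv ξ).1‖ ^ 2 + ‖(conformalEquiv ξ).2‖ ^ 2) := by
  simp only [Complex.sq_norm, Complex.normSq_apply, conformalEquiv, LinearEquiv.coe_mk,
    LinearMap.coe_mk, AddHom.coe_mk, frobSq, Fin.sum_univ_two]
  ring

theorem abs_det_eq_mul_norm (ξ : Matrix (Fin 2) (Fin 2) ℝ) :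
    |ξ.det| = |‖(conformalEquiv ξ).1‖ - ‖(conformalEquiv ξ).2‖| *
      (‖(conformalEquiv ξ).1‖ + ‖(conformalEquiv ξ).2‖) := by
  rw [det_eq_norm_sq_sub_norm_sq, sq_sub_sq, mul_comm, abs_mul,
    abs_of_nonneg (add_nonneg (norm_nonneg _) (norm_nonneg _))]

theorem singularPair_eq_norm (ξ : Matrix (Fin 2) (Fin 2) ℝ) :
    singularPair ξ = (|‖(conformalEquiv ξ).1‖ - ‖(conformalEquiv ξ).2‖|,
      ‖(conformalEquiv ξ).1‖ + ‖(conformalEquiv ξ).2‖) := by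
  refine singularPair_eq (abs_nonneg _)
    ((abs_norm_sub_norm_le _ _).trans (norm_sub_le _ _)) ?_ (abs_det_eq_mul_norm ξ)
  rw [frobSq_eq_norm_sq_add_norm_sq, sq_abs]
  ring

theorem lam1_eq (ξ : Matrix (Fin 2) (Fin 2) ℝ) :
    lam1 ξ = |‖(conformalEquiv ξ).1‖ - ‖(conformalEquiv ξ).2‖| :=
  congrArg Prod.fst (singularPair_eq_norm ξ)

theorem lam2_eq (ξ : Matrix (Fin 2) (Fin 2) ℝ) :
    lam2 ξ = ‖(conformalEquiv ξ).1‖ + ‖(conformalEquiv ξ).2‖ :=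
  congrArg Prod.snd (singularPair_eq_norm ξ)

theorem singularPair_mem_orderedPairs (ξ : Matrix (Fin 2) (Fin 2) ℝ) :
    singularPair ξ ∈ orderedPairs := by
  rw [singularPair_eq_norm]
  exact ⟨abs_nonneg _, (abs_norm_sub_norm_le _ _).trans (norm_sub_le _ _)⟩

theorem lam1_mul_lam2 (ξ : Matrix (Fin 2) (Fin 2) ℝ) : lam1 ξ * lam2 ξ = |ξ.det| := by
  rw [lam1_eq, lam2_eq, abs_det_eq_mul_norm]

theorem norms_eq_or_norms_eq (ξ : Matrix (Fin 2) (Fin 2) ℝ) :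
    (2 * ‖(conformalEquiv ξ).1‖ = lam2 ξ + lam1 ξ ∧ 2 * ‖(conformalEquiv ξ).2‖ = lam2 ξ - lam1 ξ ∧
      ξ.det = lam1 ξ * lam2 ξ) ∨
    (2 * ‖(conformalEquiv ξ).1‖ = lam2 ξ - lam1 ξ ∧ 2 * ‖(conformalEquiv ξ).2‖ = lam2 ξ + lam1 ξ ∧
      ξ.det = -(lam1 ξ * lam2 ξ)) := by
  rw [lam1_eq, lam2_eq, det_eq_norm_sq_sub_norm_sq]
  rcases abs_cases (‖(conformalEquiv ξ).1‖ - ‖(conformalEquiv ξ).2‖) with ⟨h, -⟩ | ⟨h, -⟩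
  · left
    rw [h]
    exact ⟨by ring, by ring, by ring⟩
  · right
    rw [h]
    exact ⟨by ring, by ring, by ring⟩

theorem exists_norm_eq_one_mul_eq {𝕜 : Type*} [NormedDivisionRing 𝕜] {z w : 𝕜} (h : ‖z‖ = ‖w‖) :
    ∃ u : 𝕜, ‖u‖ = 1 ∧ u * w = z := by
  rcases eq_or_ne w 0 with rfl | hw
  · exact ⟨1, norm_one, by simpa [eq_comm] using h⟩
  · exact ⟨z / w, by rw [norm_div, h, div_self (norm_ne_zero_iff.2 hw)], div_mul_cancel₀ z hw⟩

theorem exists_linearMap_of_singularPair_eq (h : singularPair ξ = singularPair η) :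
    ∃ T : Matrix (Fin 2) (Fin 2) ℝ →ₗ[ℝ] Matrix (Fin 2) (Fin 2) ℝ,
      T η = ξ ∧ ∀ ζ, singularPair (T ζ) = singularPair ζ := by
  simp only [singularPair_eq_norm, Prod.mk.injEq, abs_eq_abs] at h ⊢
  obtain ⟨hsub | hsub, hadd⟩ := h
  · obtain ⟨u, hu, hz⟩ : ∃ u : ℂ, ‖u‖ = 1 ∧ u * (conformalEquiv η).1 = (conformalEquiv ξ).1 :=
      exists_norm_eq_one_mul_eq (by linarith)
    obtain ⟨v, hv, hw⟩ : ∃ v : ℂ, ‖v‖ = 1 ∧ v * (conformalEquiv η).2 = (conformalEquiv ξ).2 :=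
      exists_norm_eq_one_mul_eq (by linarith)
    refine ⟨conformalEquiv.symm.toLinearMap ∘ₗ
      (LinearMap.mulLeft ℝ u).prodMap (LinearMap.mulLeft ℝ v) ∘ₗ
        conformalEquiv.toLinearMap, ?_, fun ζ ↦ ?_⟩
    · simp [hz, hw]
    · simp [hu, hv]
  · obtain ⟨u, hu, hz⟩ : ∃ u : ℂ, ‖u‖ = 1 ∧ u * (conformalEquiv η).2 = (conformalEquiv ξ).1 :=
      exists_norm_eq_one_mul_eq (by linarith)
    obtain ⟨v, hv, hw⟩ : ∃ v : ℂ, ‖v‖ = 1 ∧ v * (conformalEquiv η).1 = (conformalEquiv ξ).2 :=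
      exists_norm_eq_one_mul_eq (by linarith)
    refine ⟨conformalEquiv.symm.toLinearMap ∘ₗ
      (LinearMap.mulLeft ℝ u).prodMap (LinearMap.mulLeft ℝ v) ∘ₗ
        (LinearEquiv.prodComm ℝ ℂ ℂ).toLinearMap ∘ₗ conformalEquiv.toLinearMap, ?_, fun ζ ↦ ?_⟩
    · simp [hz, hw]
    · simp [hu, hv, add_comm]

theorem det_eq_zero_of_singularPair_eq (h : singularPair ξ = singularPair η) (hη : η.det = 0) :
    ξ.det = 0 := by
  have hmul : lam1 ξ * lam2 ξ = lam1 η * lam2 η := congrArg (fun p : ℝ × ℝ ↦ p.1 * p.2) h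
  rwa [lam1_mul_lam2, lam1_mul_lam2, hη, abs_zero, abs_eq_zero] at hmul

end SingularValues

section LaminationCore

variable {G : Set (Matrix (Fin 2) (Fin 2) ℝ)} {C : Set (ℝ × ℝ)}

theorem LaminationConvex.preimage_kernImage_singularPair (hG : LaminationConvex G) :
    LaminationConvex (singularPair ⁻¹' Set.kernImage singularPair G) := by
  rintro ξ hξ η hη hdet ζ ⟨a, b, ha, hb, hab, rfl⟩ ζ' hζ'
  obtain ⟨T, rfl, hT⟩ := exists_linearMap_of_singularPair_eq hζ'
  rw [map_add, map_smul, map_smul]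
  refine hG (hξ (hT ξ)) (hη (hT η)) ?_ ⟨a, b, ha, hb, hab, rfl⟩
  rw [← map_sub]
  exact det_eq_zero_of_singularPair_eq (hT _) hdet

theorem LaminationConvex.mem_of_mem_segment_apply_zero_zero (hG : LaminationConvex G)
    {m₁ m₂ m p q n : ℝ} (h₁ : !![m₁, p; q, n] ∈ G) (h₂ : !![m₂, p; q, n] ∈ G)
    (hm : m ∈ segment ℝ m₁ m₂) : !![m, p; q, n] ∈ G := by
  obtain ⟨a, b, ha, hb, hab, rfl⟩ := hm
  refine hG h₁ h₂ (by simp [Matrix.det_fin_two]) ⟨a, b, ha, hb, hab, ?_⟩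
  ext i j
  fin_cases i <;> fin_cases j <;> simp [← add_mul, hab]

theorem singularPair_fin_two_of {a b c d x y : ℝ} (hx : 0 ≤ x) (hxy : x ≤ y)
    (hfrob : a ^ 2 + b ^ 2 + c ^ 2 + d ^ 2 = x ^ 2 + y ^ 2) (hdet : |a * d - b * c| = x * y) :
    singularPair !![a, b; c, d] = (x, y) :=
  singularPair_eq hx hxy (by simpa [frobSq, Fin.sum_univ_two, add_assoc] using hfrob)
    (by rwa [Matrix.det_fin_two_of])

theorem LaminationConvex.mem_of_fst_le (hC : LaminationConvex (singularPair ⁻¹' C))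
    {x x₀ y : ℝ} (hx : 0 ≤ x) (hxx₀ : x ≤ x₀) (hx₀y : x₀ ≤ y) (h : (x₀, y) ∈ C) :
    (x, y) ∈ C := by
  have hx₀ : 0 ≤ x₀ := hx.trans hxx₀
  have hdiag : ∀ s, |s| ≤ y → singularPair !![s, 0; 0, y] = (|s|, y) := fun s hs ↦
    singularPair_fin_two_of (abs_nonneg s) hs (by rw [sq_abs]; ring)
      (by rw [zero_mul, sub_zero, abs_mul, abs_of_nonneg (hx₀.trans hx₀y)])
  have hpos : singularPair !![x₀, 0; 0, y] ∈ C := by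
    rwa [hdiag _ (by rwa [abs_of_nonneg hx₀]), abs_of_nonneg hx₀]
  have hneg : singularPair !![-x₀, 0; 0, y] ∈ C := by
    rwa [hdiag _ (by rwa [abs_neg, abs_of_nonneg hx₀]), abs_neg, abs_of_nonneg hx₀]
  have hmem : x ∈ segment ℝ (-x₀) x₀ := by
    rw [segment_eq_Icc (neg_le_self hx₀)]
    exact ⟨by linarith, hxx₀⟩
  have hxC : singularPair !![x, 0; 0, y] ∈ C :=
    hC.mem_of_mem_segment_apply_zero_zero hneg hpos hmem
  rwa [hdiag _ (by rw [abs_of_nonneg hx]; exact hxx₀.trans hx₀y), abs_of_nonneg hx] at hxC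

theorem LaminationConvex.mem_of_mul_eq (hC : LaminationConvex (singularPair ⁻¹' C))
    {x y x₁ y₁ : ℝ} (hx : 0 ≤ x) (hxy : x ≤ y) (hx₁ : 0 ≤ x₁) (hxy₁ : x₁ ≤ y₁)
    (hmul : x * y = x₁ * y₁) (hsq : x ^ 2 + y ^ 2 ≤ x₁ ^ 2 + y₁ ^ 2) (h : (x₁, y₁) ∈ C) :
    (x, y) ∈ C := by
  set τ := √(x₁ ^ 2 + y₁ ^ 2 - (x ^ 2 + y ^ 2))
  have hτ : τ ^ 2 = x₁ ^ 2 + y₁ ^ 2 - (x ^ 2 + y ^ 2) := Real.sq_sqrt (sub_nonneg.2 hsq)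
  have hdet : |x * y| = x * y := abs_of_nonneg (mul_nonneg hx (hx.trans hxy))
  have hpos : singularPair !![τ, x; y, 0] = (x₁, y₁) :=
    singularPair_fin_two_of hx₁ hxy₁ (by rw [hτ]; ring)
      (by rw [mul_zero, zero_sub, abs_neg, hdet, hmul])
  have hneg : singularPair !![-τ, x; y, 0] = (x₁, y₁) :=
    singularPair_fin_two_of hx₁ hxy₁ (by rw [neg_sq, hτ]; ring)
      (by rw [mul_zero, zero_sub, abs_neg, hdet, hmul])
  have hzero : singularPair !![0, x; y, 0] = (x, y) :=
    singularPair_fin_two_of hx hxy (by ring) (by rw [mul_zero, zero_sub, abs_neg, hdet])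
  have hmem : (0 : ℝ) ∈ segment ℝ (-τ) τ := by
    rw [segment_eq_Icc (neg_le_self (Real.sqrt_nonneg _))]
    exact ⟨neg_nonpos.2 (Real.sqrt_nonneg _), Real.sqrt_nonneg _⟩
  have := hC.mem_of_mem_segment_apply_zero_zero (show singularPair _ ∈ C from hneg ▸ h)
    (show singularPair _ ∈ C from hpos ▸ h) hmem
  rwa [Set.mem_preimage, hzero] at this

theorem LaminationConvex.mem_of_snd_le_of_mul_le (hC : LaminationConvex (singularPair ⁻¹' C))
    {x y x₀ y₀ : ℝ} (hx : 0 ≤ x) (hxy : x ≤ y) (hx₀ : 0 ≤ x₀) (hxy₀ : x₀ ≤ y₀) (hy : y ≤ y₀)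
    (hmul : x * y ≤ x₀ * y₀) (h : (x₀, y₀) ∈ C) : (x, y) ∈ C := by
  rcases (hx.trans (hxy.trans hy)).eq_or_lt with rfl | hy₀
  · obtain rfl := hxy₀.antisymm hx₀
    obtain rfl := hy.antisymm (hx.trans hxy)
    obtain rfl := hxy.antisymm hx
    exact h
  · set x₁ := x * y / y₀
    have hx₁ : 0 ≤ x₁ := div_nonneg (mul_nonneg hx (hx.trans hxy)) hy₀.le
    have hx₁y₀ : x₁ * y₀ = x * y := div_mul_cancel₀ _ hy₀.ne'
    have hx₁x₀ : x₁ ≤ x₀ := (div_le_iff₀ hy₀).2 hmul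
    have hsum : x + y ≤ x₁ + y₀ := by
      refine le_of_mul_le_mul_right ?_ hy₀
      nlinarith [mul_nonneg (sub_nonneg.2 hy) (sub_nonneg.2 (hxy.trans hy))]
    have hsq : x ^ 2 + y ^ 2 ≤ x₁ ^ 2 + y₀ ^ 2 := by
      nlinarith [pow_le_pow_left₀ (add_nonneg hx (hx.trans hxy)) hsum 2]
    exact hC.mem_of_mul_eq hx hxy hx₁ (hx₁x₀.trans hxy₀) hx₁y₀.symm hsq
      (hC.mem_of_fst_le hx₁ hx₁x₀ hxy₀ h)

/-- The coordinates `(y - x, x * y)` on ordered pairs, in which each function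
`f_θ(x, y) = x * y + θ * (y - x)` is linear. -/
def gapDet (p : ℝ × ℝ) : ℝ × ℝ := (p.2 - p.1, p.1 * p.2)

theorem gapDet_nonneg {p : ℝ × ℝ} (hp : p ∈ orderedPairs) : 0 ≤ gapDet p :=
  ⟨sub_nonneg.2 hp.2, mul_nonneg hp.1 (hp.1.trans hp.2)⟩

theorem exists_gapDet_eq {s : ℝ × ℝ} (hs : 0 ≤ s) : ∃ p ∈ orderedPairs, gapDet p = s := by
  have hgap : 0 ≤ s.1 := hs.1
  have hdet : 0 ≤ s.2 := hs.2
  have hsq : √(s.1 ^ 2 + 4 * s.2) ^ 2 = s.1 ^ 2 + 4 * s.2 := Real.sq_sqrt (by positivity)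
  have hle : s.1 ≤ √(s.1 ^ 2 + 4 * s.2) := Real.le_sqrt_of_sq_le (by linarith)
  refine ⟨((√(s.1 ^ 2 + 4 * s.2) - s.1) / 2, (√(s.1 ^ 2 + 4 * s.2) + s.1) / 2),
    ⟨?_, ?_⟩, Prod.ext ?_ ?_⟩ <;> dsimp only [gapDet]
  · linarith
  · linarith
  · ring
  · linear_combination hsq / 4

-- For fixed `n` and `q`, both `hq` and the upper left entry are affine in `gapDet p`, so these
-- matrices lie on a rank one line that corresponds to a line in the coordinates `gapDet p`.
theorem singularPair_of_sq_eq {p : ℝ × ℝ} {n q : ℝ} (hp : p ∈ orderedPairs)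
    (hq : q ^ 2 = (p.1 - n) * (p.2 + n)) :
    singularPair !![n + (p.2 - p.1), -q; q, n] = p := by
  refine singularPair_fin_two_of hp.1 hp.2 (by linear_combination 2 * hq) ?_
  rw [show (n + (p.2 - p.1)) * n - -q * q = p.1 * p.2 by linear_combination hq]
  exact abs_of_nonneg (mul_nonneg hp.1 (hp.1.trans hp.2))

theorem exists_sq_eq_and_sq_eq {x₁ y₁ x₂ y₂ : ℝ} (hx₂ : 0 ≤ x₂) (hx : x₂ ≤ x₁) (hxy₁ : x₁ ≤ y₁)
    (hy : y₁ ≤ y₂) :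
    ∃ n q : ℝ, q ^ 2 = (x₁ - n) * (y₁ + n) ∧ q ^ 2 = (x₂ - n) * (y₂ + n) := by
  obtain ⟨n, hn_lower, hn_upper, hn⟩ : ∃ n, -y₁ ≤ n ∧ n ≤ x₂ ∧
      (x₁ - n) * (y₁ + n) = (x₂ - n) * (y₂ + n) := by
    rcases (add_nonneg (sub_nonneg.2 hx) (sub_nonneg.2 hy)).eq_or_lt with hzero | hpos
    · obtain rfl : x₁ = x₂ := by linarith
      obtain rfl : y₁ = y₂ := by linarith
      exact ⟨x₁, by linarith, le_rfl, rfl⟩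
    · refine ⟨(x₂ * y₂ - x₁ * y₁) / (x₁ - x₂ + (y₂ - y₁)), ?_, ?_, ?_⟩
      · rw [le_div_iff₀ hpos]
        nlinarith [mul_nonneg (sub_nonneg.2 hy) (add_nonneg hx₂ (hx₂.trans (hx.trans hxy₁)))]
      · rw [div_le_iff₀ hpos]
        nlinarith [mul_nonneg (sub_nonneg.2 hx) (add_nonneg hx₂ (hx₂.trans (hx.trans hxy₁)))]
      · field_simp
        ring
  have hnonneg : 0 ≤ (x₁ - n) * (y₁ + n) :=
    mul_nonneg (sub_nonneg.2 (hn_upper.trans hx)) (by linarith)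
  exact ⟨n, √((x₁ - n) * (y₁ + n)), Real.sq_sqrt hnonneg, hn ▸ Real.sq_sqrt hnonneg⟩

theorem LaminationConvex.mem_of_gapDet_mem_segment (hC : LaminationConvex (singularPair ⁻¹' C))
    {p p₁ p₂ : ℝ × ℝ} (hp : p ∈ orderedPairs) (hp₁ : p₁ ∈ orderedPairs) (hp₂ : p₂ ∈ orderedPairs)
    (h₁ : p₁ ∈ C) (h₂ : p₂ ∈ C) (hx : p₂.1 ≤ p₁.1) (hy : p₁.2 ≤ p₂.2)
    (h : gapDet p ∈ segment ℝ (gapDet p₁) (gapDet p₂)) : p ∈ C := by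
  obtain ⟨n, q, hq₁, hq₂⟩ := exists_sq_eq_and_sq_eq hp₂.1 hx hp₁.2 hy
  obtain ⟨a, b, ha, hb, hab, hp_eq⟩ := h
  have hgap : a * (p₁.2 - p₁.1) + b * (p₂.2 - p₂.1) = p.2 - p.1 := congrArg Prod.fst hp_eq
  have hdet : a * (p₁.1 * p₁.2) + b * (p₂.1 * p₂.2) = p.1 * p.2 := congrArg Prod.snd hp_eq
  have hq : q ^ 2 = (p.1 - n) * (p.2 + n) := by
    linear_combination a * hq₁ + b * hq₂ + hdet - n * hgap - (q ^ 2 + n ^ 2) * hab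
  have hmem : n + (p.2 - p.1) ∈ segment ℝ (n + (p₁.2 - p₁.1)) (n + (p₂.2 - p₂.1)) :=
    (mem_segment_translate ℝ n).2 ⟨a, b, ha, hb, hab, hgap⟩
  have := hC.mem_of_mem_segment_apply_zero_zero
    (show singularPair _ ∈ C from (singularPair_of_sq_eq hp₁ hq₁).symm ▸ h₁)
    (show singularPair _ ∈ C from (singularPair_of_sq_eq hp₂ hq₂).symm ▸ h₂) hmem
  rwa [Set.mem_preimage, singularPair_of_sq_eq hp hq] at this

theorem snd_le_and_mul_le_of_gapDet_mem_segment {p p₁ p₂ : ℝ × ℝ}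
    (hp₁ : p₁ ∈ orderedPairs) (hp₂ : p₂ ∈ orderedPairs) (hle : p₁ ≤ p₂)
    (h : gapDet p ∈ segment ℝ (gapDet p₁) (gapDet p₂)) :
    p.2 ≤ p₂.2 ∧ p.1 * p.2 ≤ p₂.1 * p₂.2 := by
  obtain ⟨hx₁, hxy₁⟩ := hp₁
  obtain ⟨hx₂, hxy₂⟩ := hp₂
  obtain ⟨hx, hy⟩ := hle
  obtain ⟨a, b, ha, hb, hab, hp_eq⟩ := h
  have hgap : a * (p₁.2 - p₁.1) + b * (p₂.2 - p₂.1) = p.2 - p.1 := congrArg Prod.fst hp_eq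
  have hdet : a * (p₁.1 * p₁.2) + b * (p₂.1 * p₂.2) = p.1 * p.2 := congrArg Prod.snd hp_eq
  have hy₁ : 0 ≤ p₁.2 := hx₁.trans hxy₁
  have hy₂ : 0 ≤ p₂.2 := hx₂.trans hxy₂
  obtain rfl := eq_sub_of_add_eq' hab
  refine ⟨le_of_not_gt fun hlt ↦ ?_, ?_⟩
  · have hgap_le : p.2 - p.1 ≤ p₂.2 := by nlinarith
    have hbound : p.1 * p.2 ≤ (p₂.2 - (p.2 - p.1)) * p₂.2 := by
      rw [← hdet, ← hgap]
      nlinarith [mul_nonneg ha (mul_nonneg hy₂ (sub_nonneg.2 hy)),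
        mul_nonneg ha (mul_nonneg hx₁ (sub_nonneg.2 hy))]
    exact hbound.not_gt (mul_lt_mul'' (by linarith) hlt (by linarith) hy₂)
  · rw [← hdet]
    nlinarith [mul_nonneg ha (sub_nonneg.2 (mul_le_mul hx hy hy₁ hx₂))]

theorem LaminationConvex.convex_image_gapDet (hC : LaminationConvex (singularPair ⁻¹' C)) :
    Convex ℝ (gapDet '' (C ∩ orderedPairs)) := by
  rw [convex_iff_segment_subset]
  rintro _ ⟨p₁, ⟨h₁, hp₁⟩, rfl⟩ _ ⟨p₂, ⟨h₂, hp₂⟩, rfl⟩ s hs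
  obtain ⟨p, hp, rfl⟩ := exists_gapDet_eq <|
    (convex_Ici (0 : ℝ × ℝ)).segment_subset (gapDet_nonneg hp₁) (gapDet_nonneg hp₂) hs
  refine ⟨p, ⟨?_, hp⟩, rfl⟩
  wlog hy : p₁.2 ≤ p₂.2 generalizing p₁ p₂
  · exact this p₂ h₂ hp₂ p₁ h₁ hp₁ (segment_symm ℝ (gapDet p₁) (gapDet p₂) ▸ hs) (le_of_not_ge hy)
  rcases le_total p₂.1 p₁.1 with hx | hx
  · exact hC.mem_of_gapDet_mem_segment hp hp₁ hp₂ h₁ h₂ hx hy hs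
  · obtain ⟨hsnd, hmul⟩ := snd_le_and_mul_le_of_gapDet_mem_segment hp₁ hp₂ ⟨hx, hy⟩ hs
    exact hC.mem_of_snd_le_of_mul_le hp.1 hp.2 hp₂.1 hp₂.2 hsnd hmul h₂

theorem LaminationConvex.mem_of_gapDet_le (hC : LaminationConvex (singularPair ⁻¹' C))
    {p q : ℝ × ℝ} (hp : p ∈ orderedPairs) (hq : q ∈ orderedPairs) (hle : gapDet p ≤ gapDet q)
    (h : q ∈ C) : p ∈ C := by
  obtain ⟨hgap, hdet⟩ : p.2 - p.1 ≤ q.2 - q.1 ∧ p.1 * p.2 ≤ q.1 * q.2 := hle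
  have hsnd : p.2 ≤ q.2 := le_of_not_gt fun hlt ↦
    hdet.not_gt (mul_lt_mul'' (by linarith) hlt hq.1 (hq.1.trans hq.2))
  exact hC.mem_of_snd_le_of_mul_le hp.1 hp.2 hq.1 hq.2 hsnd hdet h

end LaminationCore

section PolyconvexBounds

variable {E : Set (Matrix (Fin 2) (Fin 2) ℝ)} {ξ : Matrix (Fin 2) (Fin 2) ℝ} {α β B M : ℝ}

theorem lam2_le_of_mem_pcHull (hξ : ξ ∈ pcHull E) (hE : ∀ η ∈ E, lam2 η ≤ B) : lam2 ξ ≤ B := by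
  have hconv : ConvexOn ℝ Set.univ lam2 := by
    rw [funext lam2_eq]
    exact (convexOn_univ_norm.comp_linearMap
      (LinearMap.fst ℝ ℂ ℂ ∘ₗ conformalEquiv.toLinearMap)).add <|
        convexOn_univ_norm.comp_linearMap (LinearMap.snd ℝ ℂ ℂ ∘ₗ conformalEquiv.toLinearMap)
  simpa using mul_det_add_le_of_mem_pcHull (c := 0) hξ hconv (by simpa using hE)

theorem mul_gap_add_mul_le_of_mem_pcHull (hα : 0 ≤ α) (hξ : ξ ∈ pcHull E)
    (hpos : ∀ η ∈ E, α * (lam2 η - lam1 η) + β * (lam1 η * lam2 η) ≤ M)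
    (hneg : ∀ η ∈ E, α * (lam2 η + lam1 η) - β * (lam1 η * lam2 η) ≤ M) :
    α * (lam2 ξ - lam1 ξ) + β * (lam1 ξ * lam2 ξ) ≤ M := by
  have hconv : ∀ T : Matrix (Fin 2) (Fin 2) ℝ →ₗ[ℝ] ℂ,
      ConvexOn ℝ Set.univ fun η ↦ α * (2 * ‖T η‖) := fun T ↦
    ((convexOn_univ_norm.comp_linearMap T).smul zero_le_two).smul hα
  have hE : ∀ η ∈ E, -β * η.det + α * (2 * ‖(conformalEquiv η).1‖) ≤ M ∧
      β * η.det + α * (2 * ‖(conformalEquiv η).2‖) ≤ M := by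
    intro η hη
    rcases norms_eq_or_norms_eq η with ⟨hz, hw, hdet⟩ | ⟨hz, hw, hdet⟩ <;> rw [hz, hw, hdet] <;>
      constructor <;> linarith [hpos η hη, hneg η hη]
  rcases norms_eq_or_norms_eq ξ with ⟨-, hw, hdet⟩ | ⟨hz, -, hdet⟩
  · have hbound : β * ξ.det + α * (2 * ‖(conformalEquiv ξ).2‖) ≤ M :=
      mul_det_add_le_of_mem_pcHull hξ
        (hconv (LinearMap.snd ℝ ℂ ℂ ∘ₗ conformalEquiv.toLinearMap)) fun η hη ↦ (hE η hη).2
    rw [hw, hdet] at hbound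
    linarith
  · have hbound : -β * ξ.det + α * (2 * ‖(conformalEquiv ξ).1‖) ≤ M :=
      mul_det_add_le_of_mem_pcHull hξ
        (hconv (LinearMap.fst ℝ ℂ ℂ ∘ₗ conformalEquiv.toLinearMap)) fun η hη ↦ (hE η hη).1
    rw [hz, hdet] at hbound
    linarith

end PolyconvexBounds

section MainInclusion

variable {K C : Set (ℝ × ℝ)} {α β : ℝ}

theorem mul_add_sub_mul_le {x y a B M : ℝ} (hx : 0 ≤ x) (hxy : x ≤ y) (hyB : y ≤ B) (ha : 0 ≤ a)
    (hαβ : α ≤ β * B) (hxyM : α * (y - x) + β * (x * y) ≤ M)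
    (haBM : α * (B - a) + β * (a * B) ≤ M) : α * (y + x) - β * (x * y) ≤ M := by
  rcases le_total α (β * y) with hαy | hαy
  · nlinarith [mul_nonneg hx (sub_nonneg.2 hαy)]
  · have hy : 0 ≤ y := hx.trans hxy
    calc α * (y + x) - β * (x * y) = α * y + x * (α - β * y) := by ring
      _ ≤ α * y + y * (α - β * y) := by gcongr
      _ ≤ α * B := by
        linarith [mul_nonneg (sub_nonneg.2 hαy) (sub_nonneg.2 hyB),
          mul_nonneg hy (sub_nonneg.2 hαβ)]
      _ ≤ α * (B - a) + β * (a * B) := by linarith [mul_nonneg ha (sub_nonneg.2 hαβ)]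
      _ ≤ M := haBM

theorem mul_sub_add_mul_le {x y a B : ℝ} (hx : 0 ≤ x) (hxy : x ≤ y) (hyB : y ≤ B) (hax : a ≤ x)
    (hβ : 0 ≤ β) (hαβ : β * B ≤ α) :
    α * (y - x) + β * (x * y) ≤ α * (B - a) + β * (a * B) := by
  have hB : 0 ≤ B := hx.trans (hxy.trans hyB)
  nlinarith [mul_nonneg hβ (mul_nonneg (sub_nonneg.2 hyB) (add_nonneg hx hB)),
    mul_nonneg (sub_nonneg.2 hαβ) (add_nonneg (sub_nonneg.2 hyB) (sub_nonneg.2 hax))]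

theorem exists_functional_le_of_mem_pcHull (hK : IsCompact K) (hKo : K ⊆ orderedPairs)
    {q : ℝ × ℝ} (hq : q ∈ K) (hqmax : IsMaxOn Prod.snd K q) {ξ : Matrix (Fin 2) (Fin 2) ℝ}
    (hξ : ξ ∈ pcHull (singularPair ⁻¹' K)) (hfst : q.1 ≤ lam1 ξ) (hα : 0 ≤ α) (hβ : 0 ≤ β) :
    ∃ p ∈ K, α * (lam2 ξ - lam1 ξ) + β * (lam1 ξ * lam2 ξ) ≤
      α * (p.2 - p.1) + β * (p.1 * p.2) := by
  have hsnd : lam2 ξ ≤ q.2 := lam2_le_of_mem_pcHull hξ fun η hη ↦ hqmax hη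
  obtain ⟨hlam1, hlam⟩ := singularPair_mem_orderedPairs ξ
  rcases le_total α (β * q.2) with hαβ | hαβ
  · obtain ⟨p, hp, hpmax⟩ := hK.exists_isMaxOn ⟨q, hq⟩
      (f := fun p : ℝ × ℝ ↦ α * (p.2 - p.1) + β * (p.1 * p.2)) (by fun_prop)
    refine ⟨p, hp, mul_gap_add_mul_le_of_mem_pcHull hα hξ (fun η hη ↦ hpmax hη) fun η hη ↦ ?_⟩
    exact mul_add_sub_mul_le (hKo hη).1 (hKo hη).2 (hqmax hη) (hKo hq).1 hαβ
      (hpmax hη) (hpmax hq)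
  · exact ⟨q, hq, mul_sub_add_mul_le hlam1 hlam hsnd hfst hβ hαβ⟩

theorem exists_gapDet_ge_of_mem_pcHull (hK : IsCompact K) (hKo : K ⊆ orderedPairs)
    {q : ℝ × ℝ} (hq : q ∈ K) (hqmax : IsMaxOn Prod.snd K q) {ξ : Matrix (Fin 2) (Fin 2) ℝ}
    (hξ : ξ ∈ pcHull (singularPair ⁻¹' K)) (hfst : q.1 ≤ lam1 ξ) :
    ∃ s ∈ convexHull ℝ (gapDet '' K), gapDet (singularPair ξ) ≤ s := by
  have hcont : Continuous gapDet := by unfold gapDet; fun_prop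
  refine exists_mem_convexHull_ge (hK.image hcont) fun f hf ↦ ?_
  have hf_apply : ∀ p, f (gapDet p) = f (1, 0) * (p.2 - p.1) + f (0, 1) * (p.1 * p.2) := by
    intro p
    have hsplit : gapDet p = (p.2 - p.1) • (1, 0) + (p.1 * p.2) • (0, 1) := by simp [gapDet]
    rw [hsplit, map_add, map_smul, map_smul, smul_eq_mul, smul_eq_mul, mul_comm,
      mul_comm (f (0, 1))]
  obtain ⟨p, hp, hle⟩ := exists_functional_le_of_mem_pcHull hK hKo hq hqmax hξ hfst
    (hf (1, 0) ⟨zero_le_one, le_rfl⟩) (hf (0, 1) ⟨le_rfl, zero_le_one⟩)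
  exact ⟨_, Set.mem_image_of_mem gapDet hp, by rw [hf_apply, hf_apply]; exact hle⟩

theorem LaminationConvex.pcHull_preimage_subset (hC : LaminationConvex (singularPair ⁻¹' C))
    (hK : IsCompact K) (hKo : K ⊆ orderedPairs) (hKC : K ⊆ C) :
    pcHull (singularPair ⁻¹' K) ⊆ singularPair ⁻¹' C := by
  rcases K.eq_empty_or_nonempty with rfl | hne
  · simp [pcHull_empty]
  intro ξ hξ
  obtain ⟨q, hq, hqmax⟩ := hK.exists_isMaxOn hne continuous_snd.continuousOn
  have hξo := singularPair_mem_orderedPairs ξ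
  rcases le_total (lam1 ξ) q.1 with hfst | hfst
  · have hsnd : lam2 ξ ≤ q.2 := lam2_le_of_mem_pcHull hξ fun η hη ↦ hqmax hη
    exact hC.mem_of_snd_le_of_mul_le hξo.1 hξo.2 (hKo hq).1 (hKo hq).2 hsnd
      (mul_le_mul hfst hsnd (hξo.1.trans hξo.2) (hKo hq).1) (hKC hq)
  · obtain ⟨s, hs, hle⟩ := exists_gapDet_ge_of_mem_pcHull hK hKo hq hqmax hξ hfst
    obtain ⟨p, ⟨hpC, hpo⟩, rfl⟩ := convexHull_min
      (Set.image_mono (Set.subset_inter hKC hKo)) hC.convex_image_gapDet hs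
    exact hC.mem_of_gapDet_le hξo hpo hle hpC

theorem LaminationConvex.pcHull_subset {G : Set (Matrix (Fin 2) (Fin 2) ℝ)}
    (hG : LaminationConvex G) (hK : IsCompact K) (hKG : singularPair ⁻¹' K ⊆ G) :
    pcHull (singularPair ⁻¹' K) ⊆ G := by
  have hclosed : IsClosed orderedPairs :=
    (isClosed_le continuous_const continuous_fst).inter (isClosed_le continuous_fst continuous_snd)
  have hpre : singularPair ⁻¹' K = singularPair ⁻¹' (K ∩ orderedPairs) :=
    Set.ext fun ξ ↦ (and_iff_left (singularPair_mem_orderedPairs ξ)).symm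
  have hcore : K ⊆ Set.kernImage singularPair G := Set.subset_kernImage_iff.2 hKG
  rw [hpre]
  exact (hG.preimage_kernImage_singularPair.pcHull_preimage_subset (hK.inter_right hclosed)
    Set.inter_subset_right (Set.inter_subset_left.trans hcore)).trans fun ξ hξ ↦ hξ rfl

end MainInclusion

theorem rcHull_eq_pcHull_eq_Pco_general {K : Set (ℝ × ℝ)} (hK : IsCompact K) :
    rcHull (singularPair ⁻¹' K) = pcHull (singularPair ⁻¹' K) ∧
      pcHull (singularPair ⁻¹' K) = Pco (singularPair ⁻¹' K) :=
  ⟨(rcHull_subset_pcHull _).antisymm <|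
      (laminationConvex_rcHull _).pcHull_subset hK (subset_rcHull _),
    ((laminationConvex_Pco _).pcHull_subset hK (subset_Pco _)).antisymm (Pco_subset_pcHull _)⟩

/-- for the isotropic compact set `E` defined by `K`, `E^{rc} = E^{pc} = Pco E`. -/
theorem rcHull_eq_pcHull_eq_Pco (K : Set (ℝ × ℝ)) (hKc : IsCompact K)
    (hKsub : K ⊆ {p : ℝ × ℝ | 0 < p.1 ∧ p.1 ≤ p.2})
    (E : Set (Matrix (Fin 2) (Fin 2) ℝ)) (hE : E = {ξ | (lam1 ξ, lam2 ξ) ∈ K}) :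
    rcHull E = pcHull E ∧ pcHull E = Pco E :=
  hE ▸ rcHull_eq_pcHull_eq_Pco_general hKc
end
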